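/- arXiv:math/0112285 — 3 statements merged into one kernel-verified Lean document; each statement's English description precedes it below -/
import Mathlib

section
/- Conversely: if a multiset S of lattice points in the rectangle {(x,y) : 1 ≤ x ≤ d, d+1 ≤ y ≤ i_d} satisfies the chain condition (for every 1 ≤ q ≤ d, every chain contained in R(E_q) consisting of points of S has at most d − κ_q − q elements), then there exists a family (P_1,…,P_d) of non-intersecting north-east lattice paths, with P_ℓ from A_ℓ = (d+1−ℓ, d) to E_{σ(ℓ)}, whose lattice points with y-coordinate > d contain the underlying set of S. -/
def NEStep (p q : ℤ × ℤ) : Prop := q = (p.1 + 1, p.2) ∨ q = (p.1, p.2 + 1)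

def IsNEPathFrom (P : List (ℤ × ℤ)) (A E : ℤ × ℤ) : Prop :=
  P.head? = some A ∧ P.getLast? = some E ∧ List.Chain' NEStep P

def IsPtChain (C : Finset (ℤ × ℤ)) : Prop :=
  ∀ p ∈ C, ∀ r ∈ C, p ≠ r → (p.1 < r.1 ∧ r.2 < p.2) ∨ (r.1 < p.1 ∧ p.2 < r.2)


theorem ne_cons {P : List (ℤ × ℤ)} {A A' E : ℤ × ℤ} (h : IsNEPathFrom P A' E)
    (hs : NEStep A A') : IsNEPathFrom (A :: P) A E := by
  obtain ⟨h1, h2, h3⟩ := h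
  cases P with
  | nil => simp at h1
  | cons c P =>
    simp at h1
    subst h1
    refine ⟨rfl, ?_, ?_⟩
    · simpa using h2
    · exact List.IsChain.cons_cons hs h3

/-- Horizontal segment of `k` steps from `(a, y)` followed by `P`. -/
def extRow (y : ℤ) (P : List (ℤ × ℤ)) : ℕ → ℤ → List (ℤ × ℤ)
  | 0, a => (a, y) :: P
  | k + 1, a => (a, y) :: extRow y P k (a + 1)

theorem mem_extRow (y : ℤ) (P : List (ℤ × ℤ)) (k : ℕ) (a : ℤ) (p : ℤ × ℤ) :
    p ∈ extRow y P k a ↔ (p.2 = y ∧ a ≤ p.1 ∧ p.1 ≤ a + k) ∨ p ∈ P := by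
  induction k generalizing a with
  | zero =>
    obtain ⟨u, v⟩ := p
    simp only [extRow, List.mem_cons, Prod.mk.injEq]
    constructor
    · rintro (h | h)
      · left; push_cast; omega
      · right; exact h
    · rintro (h | h)
      · left; push_cast at h; omega
      · right; exact h
  | succ k ih =>
    obtain ⟨u, v⟩ := p
    simp only [extRow, List.mem_cons, Prod.mk.injEq, ih]
    constructor
    · rintro (h | h | h)
      · left; push_cast; omega
      · left; push_cast; omega
      · right; exact h
    · rintro (h | h)
      · push_cast at h
        by_cases hu : u = a
        · left; omega
        · right; left; omega
      · right; right; exact h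

theorem extRow_path (y : ℤ) (P : List (ℤ × ℤ)) (E : ℤ × ℤ) (k : ℕ) (a : ℤ)
    (h : (P = [] ∧ E = (a + k, y)) ∨ IsNEPathFrom P (a + k, y + 1) E) :
    IsNEPathFrom (extRow y P k a) (a, y) E := by
  induction k generalizing a with
  | zero =>
    rcases h with ⟨rfl, rfl⟩ | h
    · refine ⟨rfl, by simp [extRow], ?_⟩
      exact List.isChain_singleton _
    · refine ne_cons h ?_
      right; simp
  | succ k ih =>
    refine ne_cons (ih (a + 1) ?_) (Or.inl rfl)
    have : a + 1 + (k : ℤ) = a + ((k + 1 : ℕ) : ℤ) := by push_cast; ring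
    rw [this]
    exact h

/-- The invariant when entering row `y` at the columns `T`. -/
def RowInv (d : ℤ) (Q : Finset ℕ) (E : ℕ → ℤ × ℤ) (S : Finset (ℤ × ℤ)) (y : ℤ)
    (T : Finset ℤ) : Prop :=
  (∀ t ∈ T, 1 ≤ t ∧ t ≤ d) ∧
  T.card = (Q.filter (fun q => y ≤ (E q).2)).card ∧
  (∀ x, 1 ≤ x → x ≤ d → (∀ q ∈ Q, (E q).2 < y → (E q).1 < x) → x ∈ T) ∧
  (∀ (X : ℤ) (C : Finset (ℤ × ℤ)) (G : Finset ℕ), C ⊆ S → IsPtChain C →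
    (∀ p ∈ C, p.1 ≤ X ∧ y ≤ p.2) → G ⊆ Q → (∀ q ∈ G, (E q).1 ≤ X ∧ y ≤ (E q).2) →
    (∀ p ∈ C, ∀ q ∈ G, ¬ (p.1 ≤ (E q).1 ∧ p.2 ≤ (E q).2)) →
    C.card + G.card ≤ (T.filter (fun t => t ≤ X)).card)

/-- One row: where the paths leave the row. -/
theorem row_step (T Z : Finset ℤ) : ∃ b : ℤ → ℤ, ∀ t ∈ T,
    t ≤ b t ∧ (b t = t ∨ b t ∈ Z) ∧ (∀ t' ∈ T, t' ≤ b t → t' ≤ t) ∧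
    (∀ p ∈ Z, t ≤ p → (∀ t' ∈ T, t' ≤ p → t' ≤ t) → p ≤ b t) := by
  classical
  let F : ℤ → Finset ℤ := fun t =>
    insert t (Z.filter (fun p => t ≤ p ∧ ∀ t' ∈ T, t' ≤ p → t' ≤ t))
  have hF : ∀ t, (F t).Nonempty := fun t => ⟨t, Finset.mem_insert_self _ _⟩
  refine ⟨fun t => (F t).max' (hF t), fun t ht => ?_⟩
  have hm : (F t).max' (hF t) ∈ F t := Finset.max'_mem _ _
  refine ⟨Finset.le_max' _ _ (Finset.mem_insert_self _ _), ?_, ?_, ?_⟩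
  · rcases Finset.mem_insert.1 hm with h | h
    · exact Or.inl h
    · exact Or.inr (Finset.mem_filter.1 h).1
  · intro t' ht' hle
    rcases Finset.mem_insert.1 hm with h | h
    · exact hle.trans h.le
    · exact (Finset.mem_filter.1 h).2.2 t' ht' hle
  · intro p hp htp hall
    exact Finset.le_max' _ _
      (Finset.mem_insert_of_mem (Finset.mem_filter.2 ⟨hp, htp, hall⟩))

theorem exists_pred (T : Finset ℤ) (X : ℤ) (h : 1 ≤ (T.filter (fun t => t ≤ X)).card) :
    ∃ t ∈ T, t ≤ X ∧ ∀ t' ∈ T, t' ≤ X → t' ≤ t := by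
  have hne : (T.filter (fun t => t ≤ X)).Nonempty := Finset.card_pos.1 h
  have hm := Finset.mem_filter.1 (Finset.max'_mem _ hne)
  exact ⟨_, hm.1, hm.2, fun t' ht' hle => Finset.le_max' _ _ (Finset.mem_filter.2 ⟨ht', hle⟩)⟩

theorem rows_main (d : ℤ) (Q : Finset ℕ) (E : ℕ → ℤ × ℤ) (S : Finset (ℤ × ℤ)) (Y : ℤ)
    (hEx : ∀ q ∈ Q, 1 ≤ (E q).1 ∧ (E q).1 ≤ d)
    (hEy : ∀ q ∈ Q, (E q).2 ≤ Y)
    (hinj : ∀ q ∈ Q, ∀ r ∈ Q, E q = E r → q = r)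
    (hmono : ∀ q ∈ Q, ∀ r ∈ Q, (E q).2 < (E r).2 → (E q).1 ≤ (E r).1)
    (hS : ∀ p ∈ S, p.1 ≤ d ∧ p.2 ≤ Y) :
    ∀ (k : ℕ) (y : ℤ) (T : Finset ℤ), y + k = Y + 1 → RowInv d Q E S y T →
    ∃ (P : ℤ → List (ℤ × ℤ)) (σ : ℤ → ℕ),
      (∀ t ∈ T, σ t ∈ Q ∧ y ≤ (E (σ t)).2) ∧
      (∀ t ∈ T, ∀ u ∈ T, σ t = σ u → t = u) ∧
      (∀ q ∈ Q, y ≤ (E q).2 → ∃ t ∈ T, σ t = q) ∧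
      (∀ t ∈ T, IsNEPathFrom (P t) (t, y) (E (σ t))) ∧
      (∀ t ∈ T, ∀ p ∈ P t, y ≤ p.2) ∧
      (∀ t ∈ T, ∀ u ∈ T, t ≠ u → ∀ p ∈ P t, p ∉ P u) ∧
      (∀ p ∈ S, y ≤ p.2 → ∃ t ∈ T, p ∈ P t) := by
  classical
  intro k
  induction k with
  | zero =>
    intro y T hy hI
    obtain ⟨h1, h2, h3, h4⟩ := hI
    have hempty : Q.filter (fun q => y ≤ (E q).2) = ∅ := by
      apply Finset.filter_eq_empty_iff.2
      intro q hq hle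
      have := hEy q hq
      push_cast at hy
      omega
    rw [hempty, Finset.card_empty, Finset.card_eq_zero] at h2
    subst h2
    refine ⟨fun _ => [], fun _ => 0, by simp, by simp, ?_, by simp, by simp, by simp, ?_⟩
    · intro q hq hle
      have := hEy q hq
      push_cast at hy
      omega
    · intro p hp hle
      have := (hS p hp).2
      push_cast at hy
      omega
  | succ k ih =>
    intro y T hy hI
    obtain ⟨hT, hcard, hfull, hcfg⟩ := hI
    let D : Finset ℕ := Q.filter (fun q => (E q).2 = y)
    let Dc : Finset ℤ := D.image (fun q => (E q).1)
    let Z : Finset ℤ := (S.filter (fun p => p.2 = y)).image Prod.fst ∪ Dc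
    have hD : ∀ q, q ∈ D ↔ q ∈ Q ∧ (E q).2 = y := fun q => by simp [D]
    have hDc : ∀ x, x ∈ Dc ↔ ∃ q ∈ Q, E q = (x, y) := by
      intro x
      simp only [Dc, Finset.mem_image, hD]
      constructor
      · rintro ⟨q, ⟨hq, h⟩, rfl⟩
        exact ⟨q, hq, Prod.ext rfl h⟩
      · rintro ⟨q, hq, h⟩
        exact ⟨q, ⟨hq, by rw [h]⟩, by rw [h]⟩
    have hZ : ∀ x, x ∈ Z ↔ (x, y) ∈ S ∨ x ∈ Dc := by
      intro x
      simp only [Z, Finset.mem_union, Finset.mem_image, Finset.mem_filter]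
      apply or_congr _ Iff.rfl
      constructor
      · rintro ⟨⟨u, v⟩, ⟨hp, h⟩, rfl⟩
        simp only at h
        subst h
        exact hp
      · intro h
        exact ⟨(x, y), ⟨h, rfl⟩, rfl⟩
    have hDinj : ∀ q ∈ D, ∀ r ∈ D, (E q).1 = (E r).1 → q = r := by
      intro q hq r hr h
      rw [hD] at hq hr
      exact hinj q hq.1 r hr.1 (Prod.ext h (hq.2.trans hr.2.symm))
    obtain ⟨b, hb⟩ := row_step T Z
    have hbinj : ∀ t ∈ T, ∀ u ∈ T, b t = b u → t = u := by
      intro t ht u hu h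
      have h1 := (hb t ht).2.2.1 u hu (by rw [h]; exact (hb u hu).1)
      have h2 := (hb u hu).2.2.1 t ht (by rw [← h]; exact (hb t ht).1)
      omega
    have hbd : ∀ t ∈ T, 1 ≤ b t ∧ b t ≤ d := by
      intro t ht
      refine ⟨(hT t ht).1.trans (hb t ht).1, ?_⟩
      rcases (hb t ht).2.1 with h | h
      · rw [h]; exact (hT t ht).2
      · rcases (hZ _).1 h with h | h
        · exact (hS _ h).1
        · obtain ⟨q, hq, hqE⟩ := (hDc _).1 h
          have := (hEx q hq).2
          rwa [hqE] at this
    let B : Finset ℤ := T.image b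
    have hBcard : B.card = T.card := Finset.card_image_of_injOn (fun t ht u hu h => hbinj t ht u hu h)
    have hchain0 : IsPtChain ∅ := by intro p hp; simp at hp
    have hDB : Dc ⊆ B := by
      intro x hx
      obtain ⟨q, hq, hqE⟩ := (hDc x).1 hx
      have h1 := hcfg x ∅ {q} (by simp) hchain0 (by simp) (by simpa using hq)
        (by simp [hqE]) (by simp)
      simp only [Finset.card_empty, Finset.card_singleton, zero_add] at h1
      obtain ⟨t, ht, htx, hmax⟩ := exists_pred T x h1
      have hle : x ≤ b t := (hb t ht).2.2.2 x ((hZ x).2 (Or.inr hx)) htx hmax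
      have hge : b t ≤ x := by
        by_contra hlt
        push Not at hlt
        have hbd := (hbd t ht).2
        have hxq := hEx q hq
        rw [hqE] at hxq
        have hx1 : x + 1 ∈ T := by
          apply hfull
          · simp only at hxq; omega
          · omega
          · intro r hr hry
            have := hmono r hr q hq (by rw [hqE]; exact hry)
            rw [hqE] at this
            simp only at this
            omega
        have := (hb t ht).2.2.1 (x + 1) hx1 (by omega)
        omega
      exact Finset.mem_image.2 ⟨t, ht, le_antisymm hge hle⟩
    have hDccard : Dc.card = D.card :=
      Finset.card_image_of_injOn (fun q hq r hr h => hDinj q hq r hr h)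
    have hQsplit : (Q.filter (fun q => y ≤ (E q).2)).card
        = (Q.filter (fun q => y + 1 ≤ (E q).2)).card + D.card := by
      rw [← Finset.card_union_of_disjoint]
      · congr 1
        ext q
        simp only [D, Finset.mem_union, Finset.mem_filter]
        constructor
        · rintro ⟨h1, h2⟩
          by_cases h : (E q).2 = y
          · exact Or.inr ⟨h1, h⟩
          · exact Or.inl ⟨h1, by omega⟩
        · rintro (⟨h1, h2⟩ | ⟨h1, h2⟩)
          · exact ⟨h1, by omega⟩
          · exact ⟨h1, by omega⟩
      · rw [Finset.disjoint_left]
        intro q h1 h2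
        simp only [D, Finset.mem_filter] at h1 h2
        omega
    have hInv' : RowInv d Q E S (y + 1) (B \ Dc) := by
      refine ⟨?_, ?_, ?_, ?_⟩
      · intro t' ht'
        obtain ⟨t, ht, rfl⟩ := Finset.mem_image.1 (Finset.mem_sdiff.1 ht').1
        exact hbd t ht
      · have := Finset.card_sdiff_add_card_eq_card hDB
        omega
      · intro x hx1 hxd hall
        have hxT : x ∈ T := hfull x hx1 hxd (fun q hq h => hall q hq (by omega))
        have hxD : x ∉ Dc := by
          intro hx
          obtain ⟨q, hq, hqE⟩ := (hDc x).1 hx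
          have := hall q hq (by rw [hqE]; simp)
          rw [hqE] at this
          simp at this
        have hbx : b x = x := by
          have h1 := (hb x hxT).1
          by_contra hne
          have hbd' := (hbd x hxT).2
          have hx1T : x + 1 ∈ T := hfull (x + 1) (by omega) (by omega)
            (fun q hq h => by have := hall q hq (by omega); omega)
          have := (hb x hxT).2.2.1 (x + 1) hx1T (by omega)
          omega
        exact Finset.mem_sdiff.2 ⟨Finset.mem_image.2 ⟨x, hxT, hbx⟩, hxD⟩
      · intro X C G hCS hCc hCX hGQ hGX hCG
        let DX : Finset ℕ := D.filter (fun q => (E q).1 ≤ X)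
        have hDX : ∀ q, q ∈ DX ↔ (q ∈ Q ∧ (E q).2 = y) ∧ (E q).1 ≤ X := fun q => by
          simp only [DX, Finset.mem_filter, hD]
        have hdisj : Disjoint G DX := by
          rw [Finset.disjoint_left]
          intro q h1 h2
          have := (hGX q h1).2
          have := ((hDX q).1 h2).1.2
          omega
        have hGDcard : (G ∪ DX).card = G.card + DX.card := Finset.card_union_of_disjoint hdisj
        have hGDQ : G ∪ DX ⊆ Q := by
          intro q hq
          rcases Finset.mem_union.1 hq with h | h
          · exact hGQ h
          · exact ((hDX q).1 h).1.1
        have hGDX : ∀ q ∈ G ∪ DX, (E q).1 ≤ X ∧ y ≤ (E q).2 := by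
          intro q hq
          rcases Finset.mem_union.1 hq with h | h
          · have := hGX q h
            exact ⟨this.1, by omega⟩
          · have := (hDX q).1 h
            exact ⟨this.2, this.1.2.ge⟩
        have hCGD : ∀ p ∈ C, ∀ q ∈ G ∪ DX, ¬ (p.1 ≤ (E q).1 ∧ p.2 ≤ (E q).2) := by
          intro p hp q hq
          rcases Finset.mem_union.1 hq with h | h
          · exact hCG p hp q h
          · have h1 := ((hDX q).1 h).1.2
            have h2 := (hCX p hp).2
            omega
        -- counting in the new set
        have hcnt : ((B \ Dc).filter (fun t => t ≤ X)).card + DX.card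
            = (T.filter (fun t => b t ≤ X)).card := by
          have e1 : DX.card = (Dc.filter (fun t => t ≤ X)).card := by
            have : Dc.filter (fun t => t ≤ X) = DX.image (fun q => (E q).1) := by
              ext x
              simp only [Dc, DX, Finset.mem_filter, Finset.mem_image]
              constructor
              · rintro ⟨⟨q, hq, rfl⟩, h⟩
                exact ⟨q, ⟨hq, h⟩, rfl⟩
              · rintro ⟨q, ⟨hq, h⟩, rfl⟩
                exact ⟨⟨q, hq, rfl⟩, h⟩
            rw [this, Finset.card_image_of_injOn]
            intro q hq r hr h
            exact hDinj q (Finset.mem_filter.1 hq).1 r (Finset.mem_filter.1 hr).1 h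
          have e2 : (T.filter (fun t => b t ≤ X)).card = (B.filter (fun t => t ≤ X)).card := by
            have : B.filter (fun t => t ≤ X) = (T.filter (fun t => b t ≤ X)).image b := by
              ext x
              simp only [B, Finset.mem_filter, Finset.mem_image]
              constructor
              · rintro ⟨⟨q, hq, rfl⟩, h⟩
                exact ⟨q, ⟨hq, h⟩, rfl⟩
              · rintro ⟨q, ⟨hq, h⟩, rfl⟩
                exact ⟨⟨q, hq, rfl⟩, h⟩
            rw [this, Finset.card_image_of_injOn]
            intro q hq r hr h
            exact hbinj q (Finset.mem_filter.1 hq).1 r (Finset.mem_filter.1 hr).1 h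
          have e3 : (B \ Dc).filter (fun t => t ≤ X)
              = B.filter (fun t => t ≤ X) \ Dc.filter (fun t => t ≤ X) := by
            ext x
            simp only [Finset.mem_filter, Finset.mem_sdiff]
            tauto
          rw [e1, e2, e3]
          exact Finset.card_sdiff_add_card_eq_card (Finset.filter_subset_filter _ hDB)
        by_cases hcase : ∀ t ∈ T, t ≤ X → b t ≤ X
        · have e : T.filter (fun t => b t ≤ X) = T.filter (fun t => t ≤ X) := by
            apply Finset.filter_congr
            intro t ht
            exact ⟨fun h => (hb t ht).1.trans h, hcase t ht⟩
          have := hcfg X C (G ∪ DX) hCS hCc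
            (fun p hp => ⟨(hCX p hp).1, by have := (hCX p hp).2; omega⟩) hGDQ hGDX hCGD
          rw [← e] at this
          omega
        · push Not at hcase
          obtain ⟨t, ht, htX, hXb⟩ := hcase
          have e : T.filter (fun u => b u ≤ X) = (T.filter (fun u => u ≤ b t)).erase t := by
            ext u
            simp only [Finset.mem_filter, Finset.mem_erase]
            constructor
            · rintro ⟨hu, h⟩
              refine ⟨?_, hu, ?_⟩
              · rintro rfl; omega
              · have := (hb u hu).1; omega
            · rintro ⟨hne, hu, h⟩
              refine ⟨hu, ?_⟩
              have h1 := (hb t ht).2.2.1 u hu h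
              by_contra hlt
              have h2 := (hb u hu).2.2.1 t ht (by omega)
              omega
          have htm : t ∈ T.filter (fun u => u ≤ b t) :=
            Finset.mem_filter.2 ⟨ht, (hb t ht).1⟩
          have e' := Finset.card_erase_add_one htm
          rw [← e] at e'
          have hbZ : b t ∈ Z := by
            rcases (hb t ht).2.1 with h | h
            · omega
            · exact h
          rcases (hZ _).1 hbZ with hbS | hbD
          · have hnot : (b t, y) ∉ C := by
              intro h
              have := (hCX _ h).1
              simp only at this
              omega
            have := hcfg (b t) (insert (b t, y) C) (G ∪ DX)
              (Finset.insert_subset hbS hCS) (by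
                intro p hp r hr hne
                rcases Finset.mem_insert.1 hp with hp | hp <;>
                  rcases Finset.mem_insert.1 hr with hr | hr
                · exact absurd (hp.trans hr.symm) hne
                · subst hp
                  right
                  have := hCX r hr
                  constructor <;> simp only <;> omega
                · subst hr
                  left
                  have := hCX p hp
                  constructor <;> simp only <;> omega
                · exact hCc p hp r hr hne) (by
                intro p hp
                rcases Finset.mem_insert.1 hp with hp | hp
                · subst hp; exact ⟨le_rfl, le_rfl⟩
                · have := hCX p hp
                  constructor <;> omega) hGDQ (by
                intro q hq
                have := hGDX q hq
                constructor <;> omega) (by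
                intro p hp q hq
                rcases Finset.mem_insert.1 hp with hp | hp
                · subst hp
                  have := hGDX q hq
                  simp only
                  omega
                · exact hCGD p hp q hq)
            rw [Finset.card_insert_of_notMem hnot] at this
            omega
          · obtain ⟨q, hq, hqE⟩ := (hDc _).1 hbD
            have hnot : q ∉ G ∪ DX := by
              intro h
              have := (hGDX _ h).1
              rw [hqE] at this
              simp only at this
              omega
            have := hcfg (b t) C (insert q (G ∪ DX)) hCS hCc (by
                intro p hp
                have := hCX p hp
                constructor <;> omega) (Finset.insert_subset hq hGDQ) (by
                intro r hr
                rcases Finset.mem_insert.1 hr with hr | hr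
                · subst hr; rw [hqE]; exact ⟨le_rfl, le_rfl⟩
                · have := hGDX r hr
                  constructor <;> omega) (by
                intro p hp r hr
                rcases Finset.mem_insert.1 hr with hr | hr
                · subst hr; rw [hqE]
                  have := hCX p hp
                  simp only
                  omega
                · exact hCGD p hp r hr)
            rw [Finset.card_insert_of_notMem hnot] at this
            omega
    obtain ⟨P', σ', h1, h2, h3, h4, h5, h6, h7⟩ := ih (y + 1) (B \ Dc) (by push_cast at hy; omega) hInv'
    have hDch : ∀ x : ℤ, ∃ q : ℕ, x ∈ Dc → q ∈ Q ∧ E q = (x, y) := by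
      intro x
      by_cases hx : x ∈ Dc
      · obtain ⟨q, hq⟩ := (hDc x).1 hx
        exact ⟨q, fun _ => hq⟩
      · exact ⟨0, fun h => absurd h hx⟩
    choose τ hτ using hDch
    let P : ℤ → List (ℤ × ℤ) := fun t =>
      extRow y (if b t ∈ Dc then [] else P' (b t)) (b t - t).toNat t
    let σ : ℤ → ℕ := fun t => if b t ∈ Dc then τ (b t) else σ' (b t)
    have hσ1 : ∀ t, b t ∈ Dc → σ t = τ (b t) := fun t h => if_pos h
    have hσ2 : ∀ t, b t ∉ Dc → σ t = σ' (b t) := fun t h => if_neg h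
    have hB' : ∀ t ∈ T, b t ∉ Dc → b t ∈ B \ Dc := fun t ht h =>
      Finset.mem_sdiff.2 ⟨Finset.mem_image_of_mem b ht, h⟩
    have hmemP : ∀ t ∈ T, ∀ p, p ∈ P t ↔
        (p.2 = y ∧ t ≤ p.1 ∧ p.1 ≤ b t) ∨ (b t ∉ Dc ∧ p ∈ P' (b t)) := by
      intro t ht p
      simp only [P, mem_extRow]
      have : t + ((b t - t).toNat : ℤ) = b t := by
        have := (hb t ht).1
        omega
      rw [this]
      by_cases h : b t ∈ Dc <;> simp [h]
    refine ⟨P, σ, ?_, ?_, ?_, ?_, ?_, ?_, ?_⟩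
    · intro t ht
      by_cases h : b t ∈ Dc
      · rw [hσ1 t h]
        obtain ⟨ha, hb'⟩ := hτ _ h
        exact ⟨ha, by rw [hb']⟩
      · rw [hσ2 t h]
        have := h1 _ (hB' t ht h)
        exact ⟨this.1, by omega⟩
    · intro t ht u hu htu
      apply hbinj t ht u hu
      by_cases h : b t ∈ Dc <;> by_cases h' : b u ∈ Dc
      · rw [hσ1 t h, hσ1 u h'] at htu
        have ea := (hτ _ h).2
        have eb := (hτ _ h').2
        rw [htu, eb] at ea
        exact (congrArg Prod.fst ea).symm
      · rw [hσ1 t h, hσ2 u h'] at htu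
        have ea := (hτ _ h).2
        have eb := (h1 _ (hB' u hu h')).2
        rw [← htu, ea] at eb
        simp only at eb
        omega
      · rw [hσ2 t h, hσ1 u h'] at htu
        have ea := (hτ _ h').2
        have eb := (h1 _ (hB' t ht h)).2
        rw [htu, ea] at eb
        simp only at eb
        omega
      · rw [hσ2 t h, hσ2 u h'] at htu
        exact h2 _ (hB' t ht h) _ (hB' u hu h') htu
    · intro q hq hqy
      by_cases hqe : (E q).2 = y
      · have hx : (E q).1 ∈ Dc := (hDc _).2 ⟨q, hq, Prod.ext rfl hqe⟩
        obtain ⟨t, ht, hbt⟩ := Finset.mem_image.1 (hDB hx)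
        have hbD : b t ∈ Dc := by rw [hbt]; exact hx
        refine ⟨t, ht, ?_⟩
        rw [hσ1 t hbD]
        obtain ⟨ha, hb'⟩ := hτ _ hbD
        apply hinj _ ha _ hq
        rw [hb', hbt]
        exact Prod.ext rfl hqe.symm
      · obtain ⟨t', ht', hs⟩ := h3 q hq (by omega)
        obtain ⟨hB1, hB2⟩ := Finset.mem_sdiff.1 ht'
        obtain ⟨t, ht, rfl⟩ := Finset.mem_image.1 hB1
        exact ⟨t, ht, by rw [hσ2 t hB2]; exact hs⟩
    · intro t ht
      have hcast : t + ((b t - t).toNat : ℤ) = b t := by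
        have := (hb t ht).1
        omega
      apply extRow_path
      rw [hcast]
      by_cases h : b t ∈ Dc
      · left
        exact ⟨if_pos h, by rw [hσ1 t h]; exact (hτ _ h).2⟩
      · right
        rw [if_neg h, hσ2 t h]
        exact h4 _ (hB' t ht h)
    · intro t ht p hp
      rcases (hmemP t ht p).1 hp with h | h
      · exact h.1.ge
      · have := h5 _ (hB' t ht h.1) p h.2
        omega
    · intro t ht u hu hne p hp hp'
      rcases (hmemP t ht p).1 hp with h | h <;> rcases (hmemP u hu p).1 hp' with h' | h'
      · have e1 := (hb t ht).2.2.1 u hu (by omega)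
        have e2 := (hb u hu).2.2.1 t ht (by omega)
        omega
      · have := h5 _ (hB' u hu h'.1) p h'.2
        omega
      · have := h5 _ (hB' t ht h.1) p h.2
        omega
      · exact h6 _ (hB' t ht h.1) _ (hB' u hu h'.1)
          (fun e => hne (hbinj t ht u hu e)) p h.2 h'.2
    · intro p hp hpy
      by_cases hpe : p.2 = y
      · have hc := hcfg p.1 {p} ∅ (by simpa using hp) (by
            intro a ha c hc hne
            rw [Finset.mem_singleton] at ha hc
            exact absurd (ha.trans hc.symm) hne)
          (by intro a ha; rw [Finset.mem_singleton] at ha; subst ha; exact ⟨le_rfl, hpy⟩)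
          (by simp) (by simp) (by simp)
        simp only [Finset.card_empty, Finset.card_singleton, add_zero] at hc
        obtain ⟨t, ht, htx, hmax⟩ := exists_pred T p.1 hc
        have hpZ : p.1 ∈ Z := (hZ _).2 (Or.inl (by rw [← hpe]; exact hp))
        exact ⟨t, ht, (hmemP t ht p).2 (Or.inl ⟨hpe, htx, (hb t ht).2.2.2 _ hpZ htx hmax⟩)⟩
      · obtain ⟨t', ht', hs⟩ := h7 p hp (by omega)
        obtain ⟨hB1, hB2⟩ := Finset.mem_sdiff.1 ht'
        obtain ⟨t, ht, rfl⟩ := Finset.mem_image.1 hB1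
        exact ⟨t, ht, (hmemP t ht p).2 (Or.inr ⟨hB2, hs⟩)⟩

/-- If a multiset `S` of lattice points in the rectangle `1 ≤ x ≤ d`, `d+1 ≤ y ≤ i_d`
satisfies the chain condition (every chain of points of `S` inside `R(E_q)` has at
most `d - κ_q - q` elements), then there is a family of non-intersecting NE lattice
paths, `P_ℓ` from `A_ℓ = (d+1-ℓ,d)` to `E_{σ(ℓ)}`, whose lattice points with
y-coordinate `> d` contain the underlying set of `S`. -/
theorem chain_condition_implies_on_paths (n d : ℕ) (hd : 1 ≤ d) (hdn : d ≤ n)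
    (i j : ℕ → ℕ)
    (hi : StrictMonoOn i (Set.Icc 1 d)) (hj : StrictMonoOn j (Set.Icc 1 d))
    (hiN : ∀ ℓ ∈ Set.Icc 1 d, i ℓ ∈ Set.Icc 1 n)
    (hjN : ∀ ℓ ∈ Set.Icc 1 d, j ℓ ∈ Set.Icc 1 n)
    (hji : ∀ ℓ ∈ Set.Icc 1 d, j ℓ ≤ i ℓ)
    (κ : ℕ → ℕ)
    (hκ : ∀ q, κ q = ((Finset.Icc 1 d).filter (fun ℓ => i q < j ℓ)).card)
    (A E : ℕ → ℤ × ℤ)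
    (hA : ∀ ℓ, A ℓ = ((d : ℤ) + 1 - ℓ, (d : ℤ)))
    (hE : ∀ q, E q = ((d : ℤ) - κ q, (κ q : ℤ) + i q))
    (S : Multiset (ℤ × ℤ))
    (hSrect : ∀ p ∈ S, 1 ≤ p.1 ∧ p.1 ≤ (d : ℤ) ∧ (d : ℤ) + 1 ≤ p.2 ∧ p.2 ≤ (i d : ℤ))
    (hchain : ∀ q ∈ Set.Icc 1 d, ∀ C : Finset (ℤ × ℤ),
      (∀ p ∈ C, p ∈ S) → IsPtChain C →
      (∀ p ∈ C, p.1 ≤ (E q).1 ∧ (E q).2 < p.2) →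
      (C.card : ℤ) ≤ (d : ℤ) - κ q - q) :
    ∃ (P : ℕ → List (ℤ × ℤ)) (σ : ℕ → ℕ),
      Set.BijOn σ (Set.Icc 1 d) (Set.Icc 1 d) ∧
      (∀ ℓ ∈ Set.Icc 1 d, IsNEPathFrom (P ℓ) (A ℓ) (E (σ ℓ))) ∧
      (∀ k ∈ Set.Icc 1 d, ∀ l ∈ Set.Icc 1 d, k ≠ l → ∀ p ∈ P k, p ∉ P l) ∧
      ∀ p ∈ S, ∃ ℓ ∈ Set.Icc 1 d, p ∈ P ℓ := by
  classical
  have hIcc : ∀ q, q ∈ Finset.Icc 1 d ↔ 1 ≤ q ∧ q ≤ d := fun q => Finset.mem_Icc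
  have him : ∀ q r, 1 ≤ q → q ≤ r → r ≤ d → i q ≤ i r := fun q r h1 h2 h3 =>
    hi.monotoneOn ⟨h1, h2.trans h3⟩ ⟨h1.trans h2, h3⟩ h2
  have hjm : ∀ q r, 1 ≤ q → q ≤ r → r ≤ d → j q ≤ j r := fun q r h1 h2 h3 =>
    hj.monotoneOn ⟨h1, h2.trans h3⟩ ⟨h1.trans h2, h3⟩ h2
  -- counting the values of j at most i q
  have hsplit : ∀ q, ((Finset.Icc 1 d).filter (fun ℓ => j ℓ ≤ i q)).card + κ q = d := by
    intro q
    have := Finset.card_filter_add_card_filter_not (s := Finset.Icc 1 d) (fun ℓ => j ℓ ≤ i q)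
    simp only [not_le, Nat.card_Icc] at this
    rw [hκ]
    omega
  have hκq : ∀ q, 1 ≤ q → q ≤ d → κ q + q ≤ d := by
    intro q h1 h2
    have hsub : Finset.Icc 1 q ⊆ (Finset.Icc 1 d).filter (fun ℓ => j ℓ ≤ i q) := by
      intro ℓ hℓ
      rw [Finset.mem_Icc] at hℓ
      rw [Finset.mem_filter, Finset.mem_Icc]
      exact ⟨⟨hℓ.1, hℓ.2.trans h2⟩, (hjm ℓ q hℓ.1 hℓ.2 h2).trans (hji q ⟨h1, h2⟩)⟩
    have := Finset.card_le_card hsub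
    have h' := hsplit q
    simp only [Nat.card_Icc] at this
    omega
  have hlow : ∀ q, d ≤ κ q + i q := by
    intro q
    have hle : ((Finset.Icc 1 d).filter (fun ℓ => j ℓ ≤ i q)).card ≤ (Finset.Icc 1 (i q)).card := by
      apply Finset.card_le_card_of_injOn j
      · intro ℓ hℓ
        rw [Finset.mem_coe, Finset.mem_filter, Finset.mem_Icc] at hℓ
        rw [Finset.mem_coe, Finset.mem_Icc]
        exact ⟨(hjN ℓ hℓ.1).1, hℓ.2⟩
      · intro ℓ hℓ m hm h
        rw [Finset.mem_coe, Finset.mem_filter, Finset.mem_Icc] at hℓ hm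
        exact hj.injOn hℓ.1 hm.1 h
    have := hsplit q
    simp only [Nat.card_Icc] at hle
    omega
  have hκm : ∀ q r, 1 ≤ q → q ≤ r → r ≤ d → κ r ≤ κ q := by
    intro q r h1 h2 h3
    rw [hκ, hκ]
    apply Finset.card_le_card
    intro ℓ hℓ
    rw [Finset.mem_filter] at hℓ ⊢
    exact ⟨hℓ.1, lt_of_le_of_lt (him q r h1 h2 h3) hℓ.2⟩
  have hym : ∀ q r, 1 ≤ q → q ≤ r → r ≤ d → κ q + i q ≤ κ r + i r := by
    intro q r h1 h2 h3
    have hsub : (Finset.Icc 1 d).filter (fun ℓ => i q < j ℓ) ⊆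
        (Finset.Icc 1 d).filter (fun ℓ => i r < j ℓ) ∪
        (Finset.Icc 1 d).filter (fun ℓ => i q < j ℓ ∧ j ℓ ≤ i r) := by
      intro ℓ hℓ
      rw [Finset.mem_filter] at hℓ
      rw [Finset.mem_union, Finset.mem_filter, Finset.mem_filter]
      by_cases h : i r < j ℓ
      · exact Or.inl ⟨hℓ.1, h⟩
      · exact Or.inr ⟨hℓ.1, hℓ.2, by omega⟩
    have hle : ((Finset.Icc 1 d).filter (fun ℓ => i q < j ℓ ∧ j ℓ ≤ i r)).card
        ≤ (Finset.Ioc (i q) (i r)).card := by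
      apply Finset.card_le_card_of_injOn j
      · intro ℓ hℓ
        rw [Finset.mem_coe, Finset.mem_filter] at hℓ
        rw [Finset.mem_coe, Finset.mem_Ioc]
        exact hℓ.2
      · intro ℓ hℓ m hm h
        rw [Finset.mem_coe, Finset.mem_filter, Finset.mem_Icc] at hℓ hm
        exact hj.injOn hℓ.1 hm.1 h
    have h4 := (Finset.card_le_card hsub).trans (Finset.card_union_le _ _)
    rw [← hκ, ← hκ] at h4
    rw [Nat.card_Ioc] at hle
    have := him q r h1 h2 h3
    omega
  have hE1 : ∀ q, (E q).1 = (d : ℤ) - κ q := fun q => by rw [hE]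
  have hE2 : ∀ q, (E q).2 = (κ q : ℤ) + i q := fun q => by rw [hE]
  have hκd : κ d = 0 := by have := hκq d hd le_rfl; omega
  have hInv : RowInv d (Finset.Icc 1 d) E S.toFinset d (Finset.Icc 1 (d : ℤ)) := by
    refine ⟨fun t ht => Finset.mem_Icc.1 ht, ?_, fun x h1 h2 _ => Finset.mem_Icc.2 ⟨h1, h2⟩, ?_⟩
    · have : (Finset.Icc 1 d).filter (fun q => (d : ℤ) ≤ (E q).2) = Finset.Icc 1 d := by
        apply Finset.filter_true_of_mem
        intro q _
        rw [hE2]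
        have := hlow q
        omega
      rw [this]
      simp
    · intro X C G hCS hCc hCX hGQ hGX hCG
      have hCrect : ∀ p ∈ C, 1 ≤ p.1 ∧ p.1 ≤ (d : ℤ) := fun p hp => by
        have := hSrect p (Multiset.mem_toFinset.1 (hCS hp))
        exact ⟨this.1, this.2.1⟩
      have hCinj : ∀ p ∈ C, ∀ r ∈ C, p.1 = r.1 → p = r := by
        intro p hp r hr h
        by_contra hne
        rcases hCc p hp r hr hne with h' | h' <;> omega
      have hf : (Finset.Icc 1 (d : ℤ)).filter (fun t => t ≤ X) = Finset.Icc 1 (min (d : ℤ) X) := by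
        ext t
        simp only [Finset.mem_filter, Finset.mem_Icc, le_min_iff]
        tauto
      rw [hf]
      rcases G.eq_empty_or_nonempty with rfl | hGne
      · rw [Finset.card_empty, add_zero]
        apply Finset.card_le_card_of_injOn Prod.fst
        · intro p hp
          have h1 := hCrect p hp
          have h2 := hCX p hp
          rw [Finset.mem_coe, Finset.mem_Icc, le_min_iff]
          exact ⟨h1.1, h1.2, h2.1⟩
        · intro p hp r hr h
          exact hCinj p hp r hr h
      · set c := G.max' hGne with hc
        have hcG : c ∈ G := Finset.max'_mem _ _
        have hcQ := (hIcc c).1 (hGQ hcG)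
        have hGcard : G.card ≤ c := by
          have : G ⊆ Finset.Icc 1 c := by
            intro q hq
            exact Finset.mem_Icc.2 ⟨((hIcc q).1 (hGQ hq)).1, Finset.le_max' _ _ hq⟩
          have := Finset.card_le_card this
          simpa using this
        have hC1 := hchain c hcQ (C.filter (fun p => p.1 ≤ (E c).1))
          (fun p hp => Multiset.mem_toFinset.1 (hCS (Finset.mem_filter.1 hp).1))
          (fun p hp r hr hne => hCc p (Finset.mem_filter.1 hp).1 r (Finset.mem_filter.1 hr).1 hne)
          (by
            intro p hp
            obtain ⟨hp1, hp2⟩ := Finset.mem_filter.1 hp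
            refine ⟨hp2, ?_⟩
            have := hCG p hp1 c hcG
            by_contra h
            exact this ⟨hp2, by omega⟩)
        have hC2 : (C.filter (fun p => ¬ p.1 ≤ (E c).1)).card
            ≤ (Finset.Ioc (E c).1 (min (d : ℤ) X)).card := by
          apply Finset.card_le_card_of_injOn Prod.fst
          · intro p hp
            obtain ⟨hp1, hp2⟩ := Finset.mem_filter.1 hp
            have h1 := hCrect p hp1
            have h2 := hCX p hp1
            rw [Finset.mem_coe, Finset.mem_Ioc, le_min_iff]
            exact ⟨by omega, h1.2, h2.1⟩
          · intro p hp r hr h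
            exact hCinj p (Finset.mem_filter.1 hp).1 r (Finset.mem_filter.1 hr).1 h
        have hC3 := Finset.card_filter_add_card_filter_not (s := C) (fun p => p.1 ≤ (E c).1)
        have hcX := (hGX c hcG).1
        rw [hE1] at *
        simp only [Int.card_Ioc, Int.card_Icc] at hC2 ⊢
        have := hκq c hcQ.1 hcQ.2
        omega
  obtain ⟨P, σ, h1, h2, h3, h4, h5, h6, h7⟩ := rows_main d (Finset.Icc 1 d) E S.toFinset (i d)
    (by
      intro q hq
      have hq := (hIcc q).1 hq
      have := hκq q hq.1 hq.2
      rw [hE1]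
      omega)
    (by
      intro q hq
      have hq := (hIcc q).1 hq
      have := hym q d hq.1 hq.2 le_rfl
      rw [hE2]
      omega)
    (by
      intro q hq r hr h
      have hq := (hIcc q).1 hq
      have hr := (hIcc r).1 hr
      have e1 := congrArg Prod.fst h
      have e2 := congrArg Prod.snd h
      rw [hE1, hE1] at e1
      rw [hE2, hE2] at e2
      exact hi.injOn hq hr (by omega))
    (by
      intro q hq r hr h
      have hq := (hIcc q).1 hq
      have hr := (hIcc r).1 hr
      rw [hE2, hE2] at h
      rw [hE1, hE1]
      rcases le_total q r with hqr | hqr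
      · have := hκm q r hq.1 hqr hr.2
        omega
      · have := hym r q hr.1 hqr hq.2
        omega)
    (by
      intro p hp
      have := hSrect p (Multiset.mem_toFinset.1 hp)
      exact ⟨this.2.1, this.2.2.2⟩)
    (i d + 1 - d) d (Finset.Icc 1 (d : ℤ))
    (by have := hlow d; omega) hInv
  have hmem : ∀ ℓ ∈ Set.Icc 1 d, (d : ℤ) + 1 - (ℓ : ℤ) ∈ Finset.Icc 1 (d : ℤ) := by
    intro ℓ hℓ
    have := hℓ.1
    have := hℓ.2
    rw [Finset.mem_Icc]
    omega
  have hback : ∀ t ∈ Finset.Icc 1 (d : ℤ), ∃ ℓ ∈ Set.Icc 1 d, (d : ℤ) + 1 - (ℓ : ℤ) = t := by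
    intro t ht
    rw [Finset.mem_Icc] at ht
    exact ⟨((d : ℤ) + 1 - t).toNat, ⟨by omega, by omega⟩, by omega⟩
  refine ⟨fun ℓ => P ((d : ℤ) + 1 - ℓ), fun ℓ => σ ((d : ℤ) + 1 - ℓ), ⟨?_, ?_, ?_⟩, ?_, ?_, ?_⟩
  · intro ℓ hℓ
    exact (hIcc _).1 (h1 _ (hmem ℓ hℓ)).1
  · intro ℓ hℓ m hm h
    have := h2 _ (hmem ℓ hℓ) _ (hmem m hm) h
    omega
  · intro q hq
    obtain ⟨t, ht, hs⟩ := h3 q ((hIcc q).2 hq) (by rw [hE2]; have := hlow q; omega)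
    obtain ⟨ℓ, hℓ, rfl⟩ := hback t ht
    exact ⟨ℓ, hℓ, hs⟩
  · intro ℓ hℓ
    rw [hA]
    exact h4 _ (hmem ℓ hℓ)
  · intro k hk l hl hne
    exact h6 _ (hmem k hk) _ (hmem l hl) (by omega)
  · intro p hp
    obtain ⟨t, ht, hs⟩ := h7 p (Multiset.mem_toFinset.2 hp) (by
      have := (hSrect p hp).2.2.1
      omega)
    obtain ⟨ℓ, hℓ, rfl⟩ := hback t ht
    exact ⟨ℓ, hℓ, hs⟩
end

section
/- Let w ≥ τ in S_n/(S_d × S_{n-d}) (minimal representatives). A set S of reflections (x,y), 1 ≤ x ≤ d < y ≤ n, satisfies (S1) and is maximal with respect to (S1) if and only if S is exactly the set of all lattice points with y-coordinate > d lying on the paths of some family of non-intersecting north-east lattice paths (P_1,…,P_d) with P_ℓ from A_ℓ = (d+1−ℓ, d) to E_{σ(ℓ)} = (d−κ_{σ(ℓ)}, κ_{σ(ℓ)}+i_{σ(ℓ)}). -/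
def applySwaps (L : List (ℕ × ℕ)) (x : ℕ) : ℕ :=
  L.foldr (fun s y => if y = s.1 then s.2 else if y = s.2 then s.1 else y) x

def sortedFirstVals (d : ℕ) (f : ℕ → ℕ) : List ℕ :=
  ((Finset.Icc 1 d).image f).sort (· ≤ ·)

def DominatedByW (d : ℕ) (f i : ℕ → ℕ) : Prop :=
  ∀ k, k < d → (sortedFirstVals d f).getD k 0 ≤ i (k + 1)

/-- Property (S1): every chain of pairwise commuting reflections from `S` keeps
`τ` below `w ↔ i` after multiplication. -/
def S1Prop (d : ℕ) (τ i : ℕ → ℕ) (S : Multiset (ℕ × ℕ)) : Prop :=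
  ∀ L : List (ℕ × ℕ), (∀ s ∈ L, s ∈ S) →
    L.Pairwise (fun a b => a.1 < b.1 ∧ b.2 < a.2) →
    DominatedByW d (fun x => τ (applySwaps L x)) i

def NStep (p q : ℕ × ℕ) : Prop := q = (p.1 + 1, p.2) ∨ q = (p.1, p.2 + 1)

def NPath (P : List (ℕ × ℕ)) (A E : ℕ × ℕ) : Prop :=
  P.head? = some A ∧ P.getLast? = some E ∧ List.IsChain NStep P

lemma NPath.snoc {P : List (ℕ × ℕ)} {A E F : ℕ × ℕ} (h : NPath P A E) (hs : NStep E F) :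
    NPath (P ++ [F]) A F := by
  obtain ⟨h1, h2, h3⟩ := h
  refine ⟨?_, by simp, ?_⟩
  · rw [List.head?_append, h1]; rfl
  · rw [List.isChain_append]
    refine ⟨h3, by simp, ?_⟩
    intro x hx y hy
    rw [h2] at hx
    simp at hx hy
    subst hx; subst hy; exact hs

lemma NPath.up {P : List (ℕ × ℕ)} {A : ℕ × ℕ} {x y : ℕ} (h : NPath P A (x, y)) (k : ℕ) :
    ∃ P', NPath P' A (x, y + k) ∧ ∀ p, p ∈ P' ↔ p ∈ P ∨ (p.1 = x ∧ y < p.2 ∧ p.2 ≤ y + k) := by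
  induction k with
  | zero => exact ⟨P, h, fun p => by constructor <;> grind⟩
  | succ k ih =>
    obtain ⟨P', h1, h2⟩ := ih
    refine ⟨P' ++ [(x, y + (k + 1))], h1.snoc (Or.inr (by simp; omega)), ?_⟩
    rintro ⟨u, v⟩
    simp [h2]
    constructor
    · rintro ((h | h) | h)
      · exact Or.inl h
      · right; omega
      · right; omega
    · rintro (h | h)
      · exact Or.inl (Or.inl h)
      · by_cases hv : v = y + (k + 1)
        · right; omega
        · left; right; omega

lemma boundary_path (g : ℕ → ℕ) (q : ℕ) (hg : ∀ x, x < q + 1 → g x ≤ g (x + 1)) :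
    ∃ P, NPath P (1, g 0) (q + 1, g (q + 1)) ∧
      ∀ p : ℕ × ℕ, p ∈ P ↔ 1 ≤ p.1 ∧ p.1 ≤ q + 1 ∧ g (p.1 - 1) ≤ p.2 ∧ p.2 ≤ g p.1 := by
  induction q with
  | zero =>
    have h0 : NPath [(1, g 0)] (1, g 0) (1, g 0) := ⟨rfl, rfl, by simp⟩
    obtain ⟨P, h1, h2⟩ := h0.up (g 1 - g 0)
    have h01 := hg 0 (by omega)
    simp only [zero_add] at h01
    rw [Nat.add_sub_cancel' h01] at h1
    refine ⟨P, h1, ?_⟩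
    rintro ⟨u, v⟩
    rw [h2]
    simp
    constructor
    · rintro (⟨rfl, rfl⟩ | ⟨rfl, h⟩)
      · simp [h01]
      · simp; omega
    · rintro ⟨h, h', h3, h4⟩
      obtain rfl : u = 1 := by omega
      simp at h3
      omega
  | succ q ih =>
    obtain ⟨P0, h1, h2⟩ := ih (fun x hx => hg x (by omega))
    have h0 : NPath (P0 ++ [(q + 2, g (q + 1))]) (1, g 0) (q + 2, g (q + 1)) :=
      h1.snoc (Or.inl rfl)
    obtain ⟨P, h3, h4⟩ := h0.up (g (q + 2) - g (q + 1))
    have h01 := hg (q + 1) (by omega)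
    rw [Nat.add_sub_cancel' h01] at h3
    refine ⟨P, h3, ?_⟩
    rintro ⟨u, v⟩
    rw [h4]
    simp [h2]
    constructor
    · rintro ((h | ⟨rfl, rfl⟩) | ⟨rfl, h⟩)
      · omega
      · simp; exact h01
      · simp; omega
    · rintro ⟨h, h', h3, h4⟩
      by_cases hu : u = q + 2
      · subst hu
        simp at h3
        omega
      · left; left; omega

lemma NPath.map_nat {P : List (ℕ × ℕ)} {A E : ℕ × ℕ} (h : NPath P A E) :
    NPath (P.map fun p => (p.1 + 1, p.2)) (A.1 + 1, A.2) (E.1 + 1, E.2) := by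
  obtain ⟨h1, h2, h3⟩ := h
  refine ⟨by simp [h1], by simp [h2], ?_⟩
  rw [List.isChain_map]
  refine h3.imp ?_
  rintro ⟨a, b⟩ ⟨c, e⟩ h
  simp [NStep] at h ⊢
  omega

lemma NPath.map_int {P : List (ℕ × ℕ)} {A E : ℕ × ℕ} (h : NPath P A E) (d : ℕ) :
    IsNEPathFrom (P.map fun p => ((p.1 : ℤ), (d : ℤ) + p.2))
      ((A.1 : ℤ), (d : ℤ) + A.2) ((E.1 : ℤ), (d : ℤ) + E.2) := by
  obtain ⟨h1, h2, h3⟩ := h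
  refine ⟨by simp [h1], by simp [h2], ?_⟩
  unfold List.Chain'
  rw [List.isChain_map]
  refine h3.imp ?_
  rintro ⟨a, b⟩ ⟨c, e⟩ h
  simp [NStep, NEStep] at h ⊢
  omega

/-- chains have bounded length -/
lemma chain_len_col : ∀ (L : List (ℕ × ℕ)) (x0 x1 : ℕ),
    L.Pairwise (fun a b => a.1 < b.1 ∧ b.2 < a.2) → (∀ s ∈ L, x0 ≤ s.1 ∧ s.1 < x1) →
    x0 ≤ x1 → L.length + x0 ≤ x1 := by
  intro L
  induction L with
  | nil => intro x0 x1 _ _ h; simpa using h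
  | cons s L ih =>
    intro x0 x1 hp hs _
    rw [List.pairwise_cons] at hp
    have hs0 := hs s (by simp)
    have := ih (s.1 + 1) x1 hp.2 (fun t ht => ⟨(hp.1 t ht).1, (hs t (by simp [ht])).2⟩) (by omega)
    simp; omega

lemma chain_len_row : ∀ (L : List (ℕ × ℕ)) (y0 y1 : ℕ),
    L.Pairwise (fun a b => a.1 < b.1 ∧ b.2 < a.2) → (∀ s ∈ L, y0 < s.2 ∧ s.2 ≤ y1) →
    y0 ≤ y1 → L.length + y0 ≤ y1 := by
  intro L
  induction L with
  | nil => intro x0 x1 _ _ h; simpa using h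
  | cons s L ih =>
    intro y0 y1 hp hs _
    rw [List.pairwise_cons] at hp
    have hs0 := hs s (by simp)
    have := ih y0 (s.2 - 1) hp.2 (fun t ht => ⟨(hs t (by simp [ht])).1, by
      have := (hp.1 t ht).2; omega⟩) (by omega)
    simp; omega

/-- The outer boundary function. -/
def bdry (a b : ℕ → ℕ) (S : Finset (ℕ × ℕ)) (x : ℕ) : ℕ :=
  if x = 0 then 0 else max (a x + b x - x) ((S.filter (fun s => s.1 ≤ x)).sup Prod.snd)

lemma bdry_zero (a b : ℕ → ℕ) (S : Finset (ℕ × ℕ)) : bdry a b S 0 = 0 := by simp [bdry]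

lemma bdry_c (a b : ℕ → ℕ) (S : Finset (ℕ × ℕ)) {x : ℕ} (hx : 1 ≤ x) :
    a x + b x - x ≤ bdry a b S x := by
  have : x ≠ 0 := by omega
  simp [bdry, this]

lemma bdry_S (a b : ℕ → ℕ) (S : Finset (ℕ × ℕ)) {x : ℕ} {s : ℕ × ℕ} (hs : s ∈ S) (h1 : 1 ≤ s.1)
    (hx : s.1 ≤ x) : s.2 ≤ bdry a b S x := by
  have : x ≠ 0 := by omega
  simp only [bdry, this, if_false]
  refine le_max_of_le_right ?_
  exact Finset.le_sup (f := Prod.snd) (by simp [hs, hx])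

lemma bdry_lt (a b : ℕ → ℕ) (S : Finset (ℕ × ℕ)) {x y : ℕ} (h : y < bdry a b S x) :
    1 ≤ x ∧ (y < a x + b x - x ∨ ∃ s ∈ S, s.1 ≤ x ∧ y < s.2) := by
  by_cases hx : x = 0
  · subst hx; simp [bdry] at h
  · simp only [bdry, hx, if_false, lt_max_iff, Finset.lt_sup_iff, Finset.mem_filter] at h
    refine ⟨by omega, ?_⟩
    rcases h with h | ⟨s, h, h'⟩
    · exact Or.inl h
    · exact Or.inr ⟨s, h.1, h.2, h'⟩

lemma bdry_le (a b : ℕ → ℕ) (S : Finset (ℕ × ℕ)) {x y : ℕ} (h1 : a x + b x - x ≤ y)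
    (h2 : ∀ s ∈ S, s.1 ≤ x → s.2 ≤ y) : bdry a b S x ≤ y := by
  by_contra h
  push Not at h
  obtain ⟨_, h | ⟨s, hs, h3, h4⟩⟩ := bdry_lt a b S h
  · omega
  · have := h2 s hs h3; omega

theorem core (N : ℕ) : ∀ (a b : ℕ → ℕ) (S : Finset (ℕ × ℕ))
    (_ : ∀ j k, 1 ≤ j → j ≤ k → k ≤ N → a j ≤ a k)
    (_ : ∀ j k, 1 ≤ j → j ≤ k → k ≤ N → b j ≤ b k)
    (_ : ∀ j k, 1 ≤ j → j < k → k ≤ N → a j + b j < a k + b k)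
    (_ : ∀ j, 1 ≤ j → j ≤ N → j ≤ a j ∧ a j ≤ N)
    (_ : ∀ s ∈ S, 1 ≤ s.1 ∧ s.1 ≤ N)
    (_ : ∀ q, 1 ≤ q → q ≤ N → ∀ L : List (ℕ × ℕ), (∀ s ∈ L, s ∈ S ∧ s.1 ≤ a q ∧ b q < s.2) →
      L.Pairwise (fun a b => a.1 < b.1 ∧ b.2 < a.2) → L.length + q ≤ a q),
    ∃ (P : ℕ → List (ℕ × ℕ)) (σ : ℕ → ℕ),
      Set.BijOn σ (Set.Icc 1 N) (Set.Icc 1 N) ∧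
      (∀ x ∈ Set.Icc 1 N, NPath (P x) (x, 0) (a (σ x), b (σ x))) ∧
      (∀ k ∈ Set.Icc 1 N, ∀ l ∈ Set.Icc 1 N, k ≠ l → ∀ p ∈ P k, p ∉ P l) ∧
      (∀ s ∈ S, ∃ x ∈ Set.Icc 1 N, s ∈ P x) ∧
      ∀ x ∈ Set.Icc 1 N, ∀ p ∈ P x, 1 ≤ p.1 ∧ p.1 ≤ N ∧ p.2 ≤ bdry a b S p.1 := by
  induction N with
  | zero =>
    intro a b S _ _ _ _ hS _
    refine ⟨fun _ => [], id, Set.bijOn_id _, ?_, ?_, ?_, ?_⟩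
    · intro x hx; simp at hx
    · intro x hx; simp at hx
    · intro s hs; have := hS s hs; omega
    · intro x hx; simp at hx
  | succ N ih =>
    intro a b S ha hb hab haj hS hch
    have hex : ∃ q, 1 ≤ q ∧ a q = q := ⟨N + 1, by omega, by
      have := haj (N + 1) (by omega) le_rfl; omega⟩
    classical
    obtain ⟨q, hq1, haq, hqN, hmin⟩ : ∃ q, 1 ≤ q ∧ a q = q ∧ q ≤ N + 1 ∧
        ∀ j, 1 ≤ j → j < q → j < a j := by
      refine ⟨Nat.find hex, (Nat.find_spec hex).1, (Nat.find_spec hex).2, ?_, ?_⟩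
      · apply Nat.find_min' hex
        refine ⟨by omega, ?_⟩
        have := haj (N + 1) (by omega) le_rfl; omega
      · intro j hj hjq
        have h1 := Nat.find_min hex hjq
        have h2 := haj j hj (by
          have : Nat.find hex ≤ N + 1 := by
            apply Nat.find_min' hex
            refine ⟨by omega, ?_⟩
            have := haj (N + 1) (by omega) le_rfl; omega
          omega)
        push Not at h1
        have := h1 hj
        omega
    clear hex
    set g := bdry a b S with hgdef
    -- c is monotone
    have hc : ∀ k j, 1 ≤ j → j + k ≤ N + 1 → a j + b j - j ≤ a (j + k) + b (j + k) - (j + k) := by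
      intro k
      induction k with
      | zero => intro j _ _; simp
      | succ k ihk =>
        intro j h1 h2
        have e1 := ihk j h1 (by omega)
        have e2 := hab (j + k) (j + (k + 1)) (by omega) (by omega) h2
        omega
    have hc' : ∀ j k, 1 ≤ j → j ≤ k → k ≤ N + 1 → a j + b j - j ≤ a k + b k - k := by
      intro j k h1 h2 h3
      obtain ⟨t, rfl⟩ := Nat.exists_eq_add_of_le h2
      exact hc t j h1 h3
    have hgm1 : ∀ x, x < N + 1 → g x ≤ g (x + 1) := by
      intro x hx
      rcases Nat.eq_zero_or_pos x with rfl | hx0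
      · rw [hgdef, bdry_zero]; exact Nat.zero_le _
      · apply bdry_le
        · exact (hc' x (x + 1) hx0 (by omega) (by omega)).trans (bdry_c a b S (by omega))
        · intro s hs hsx
          exact bdry_S a b S hs (hS s hs).1 (by omega)
    have hgm : ∀ x y, x ≤ y → y ≤ N + 1 → g x ≤ g y := by
      intro x y hxy
      induction hxy with
      | refl => intro _; exact le_rfl
      | @step y _ ihy => intro h; exact (ihy (by omega)).trans (hgm1 y (by omega))
    have hgq : g q = b q := by
      apply le_antisymm
      · apply bdry_le
        · omega
        · intro s hs hsq
          by_contra h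
          have := hch q hq1 hqN [s] (by simp; exact ⟨hs, by omega, by omega⟩) (by simp)
          simp at this; omega
      · have := bdry_c a b S hq1
        rw [haq] at this
        rw [hgdef]; omega
    obtain ⟨P0, hP0, hP0m⟩ := boundary_path g (q - 1) (fun x hx => hgm1 x (by omega))
    have hqq : q - 1 + 1 = q := by omega
    rw [hqq] at hP0 hP0m
    rw [hgq] at hP0
    have hg0 : g 0 = 0 := bdry_zero a b S
    rw [hg0] at hP0
    -- inner system
    let a' : ℕ → ℕ := fun j => if j < q then a j - 1 else a (j + 1) - 1
    let b' : ℕ → ℕ := fun j => if j < q then b j else b (j + 1)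
    let δ : ℕ → ℕ := fun j => if j < q then j else j + 1
    have ha' : ∀ j, a' j = a (δ j) - 1 := by intro j; simp only [a', δ]; split_ifs <;> rfl
    have hb' : ∀ j, b' j = b (δ j) := by intro j; simp only [b', δ]; split_ifs <;> rfl
    have hδ : ∀ j, (j < q ∧ δ j = j) ∨ (q ≤ j ∧ δ j = j + 1) := by
      intro j; simp only [δ]; split_ifs <;> omega
    let S0 := S.filter (fun s => ¬ (s.1 ≤ q ∧ g (s.1 - 1) ≤ s.2))
    let S' : Finset (ℕ × ℕ) := S0.image (fun s => (s.1 - 1, s.2))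
    have hS0 : ∀ s, s ∈ S0 ↔ s ∈ S ∧ (s.1 ≤ q → s.2 < g (s.1 - 1)) := by
      intro s; simp [S0]
    have hS0x : ∀ s ∈ S0, 2 ≤ s.1 := by
      intro s hs
      rw [hS0] at hs
      have := hS s hs.1
      by_contra h
      have h1 : s.1 = 1 := by omega
      have := hs.2 (by omega)
      rw [h1] at this
      simp [hg0] at this
    have hS' : ∀ s, s ∈ S' ↔ 1 ≤ s.1 ∧ (s.1 + 1, s.2) ∈ S0 := by
      rintro ⟨x, y⟩
      simp only [S', Finset.mem_image, Prod.mk.injEq]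
      constructor
      · rintro ⟨s, hs, rfl, rfl⟩
        have := hS0x s hs
        refine ⟨by omega, ?_⟩
        rwa [show s.1 - 1 + 1 = s.1 by omega]
      · rintro ⟨h1, h2⟩
        exact ⟨_, h2, by simp, rfl⟩
    have hδpos : ∀ j, 1 ≤ j → j ≤ N → 1 ≤ δ j ∧ δ j ≤ N + 1 ∧ 2 ≤ a (δ j) := by
      intro j h1 h2
      rcases hδ j with ⟨h, e⟩ | ⟨h, e⟩ <;> rw [e]
      · have := hmin j h1 h
        omega
      · have := haj (j + 1) (by omega) (by omega)
        omega
    have hδlt : ∀ j k, j < k → δ j < δ k := by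
      intro j k hjk
      rcases hδ j with ⟨h, e⟩ | ⟨h, e⟩ <;> rcases hδ k with ⟨h', e'⟩ | ⟨h', e'⟩ <;> omega
    have hδle : ∀ j k, j ≤ k → δ j ≤ δ k := by
      intro j k hjk
      rcases hδ j with ⟨h, e⟩ | ⟨h, e⟩ <;> rcases hδ k with ⟨h', e'⟩ | ⟨h', e'⟩ <;> omega
    have X1 : ∀ j k, 1 ≤ j → j ≤ k → k ≤ N → a' j ≤ a' k := by
      intro j k h1 h2 h3
      rw [ha', ha']
      have := ha (δ j) (δ k) (hδpos j h1 (by omega)).1 (hδle j k h2) (hδpos k (by omega) h3).2.1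
      omega
    have X2 : ∀ j k, 1 ≤ j → j ≤ k → k ≤ N → b' j ≤ b' k := by
      intro j k h1 h2 h3
      rw [hb', hb']
      exact hb (δ j) (δ k) (hδpos j h1 (by omega)).1 (hδle j k h2) (hδpos k (by omega) h3).2.1
    have X3 : ∀ j k, 1 ≤ j → j < k → k ≤ N → a' j + b' j < a' k + b' k := by
      intro j k h1 h2 h3
      rw [ha', ha', hb', hb']
      have e1 := hδpos j h1 (by omega)
      have e2 := hδpos k (by omega) h3
      have := hab (δ j) (δ k) e1.1 (hδlt j k h2) e2.2.1
      omega
    have X4 : ∀ j, 1 ≤ j → j ≤ N → j ≤ a' j ∧ a' j ≤ N := by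
      intro j h1 h2
      rw [ha']
      have e1 := hδpos j h1 h2
      have e2 := haj (δ j) e1.1 e1.2.1
      rcases hδ j with ⟨h, e⟩ | ⟨h, e⟩
      · have := hmin j h1 h
        rw [e] at e2 ⊢; omega
      · rw [e] at e2 ⊢; omega
    have X5 : ∀ s ∈ S', 1 ≤ s.1 ∧ s.1 ≤ N := by
      intro s hs
      rw [hS', hS0] at hs
      have := hS _ hs.2.1
      simp at this
      exact ⟨hs.1, this⟩
    have X6 : ∀ q, 1 ≤ q → q ≤ N → ∀ L : List (ℕ × ℕ),
        (∀ s ∈ L, s ∈ S' ∧ s.1 ≤ a' q ∧ b' q < s.2) →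
        L.Pairwise (fun a b => a.1 < b.1 ∧ b.2 < a.2) → L.length + q ≤ a' q := by
      intro q' h1 h2 L hL hLp
      have e1 := hδpos q' h1 h2
      rw [ha']
      have hmem : ∀ s ∈ L.map (fun p : ℕ × ℕ => (p.1 + 1, p.2)),
          s ∈ S0 ∧ s.1 ≤ a (δ q') ∧ b (δ q') < s.2 := by
        intro s hs
        rw [List.mem_map] at hs
        obtain ⟨r, hr, rfl⟩ := hs
        have h3 := hL r hr
        rw [hS', ha', hb'] at h3
        refine ⟨h3.1.2, ?_, h3.2.2⟩
        simp; omega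
      have hpw : (L.map (fun p : ℕ × ℕ => (p.1 + 1, p.2))).Pairwise
          (fun a b => a.1 < b.1 ∧ b.2 < a.2) := by
        rw [List.pairwise_map]
        exact hLp.imp (by intro u v h; simpa using h)
      have hlen : (L.map (fun p : ℕ × ℕ => (p.1 + 1, p.2))).length = L.length := by simp
      generalize L.map (fun p : ℕ × ℕ => (p.1 + 1, p.2)) = M at hmem hpw hlen
      rw [← hlen]
      have hbase := hch (δ q') e1.1 e1.2.1 M
        (fun s hs => ⟨((hS0 s).1 (hmem s hs).1).1, (hmem s hs).2⟩) hpw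
      rcases hδ q' with ⟨hlt, e⟩ | ⟨hge, e⟩
      · rw [e] at hbase hmem ⊢
        have hm := hmin q' h1 hlt
        cases M with
        | nil => simp; omega
        | cons c M =>
          have hc0 := hmem c (by simp)
          have hcS := (hS0 c).1 hc0.1
          have hc2 := hS0x c hc0.1
          have haq' := ha q' q h1 hlt.le hqN
          have hlt2 := hcS.2 (by omega)
          have hpw' := hpw
          rw [List.pairwise_cons] at hpw'
          obtain ⟨hu, hcase⟩ := bdry_lt a b S hlt2
          rcases hcase with hcase | ⟨s, hs, hs1, hs2⟩
          · rcases Nat.lt_or_ge q' (c.1 - 1) with hqc | hqc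
            · have := chain_len_col (c :: M) c.1 (a q' + 1) hpw (by
                intro s hs
                refine ⟨?_, by have := (hmem s hs).2.1; omega⟩
                rcases List.mem_cons.1 hs with rfl | hs
                · exact le_rfl
                · exact (hpw'.1 s hs).1.le) (by omega)
              omega
            · have h5 := hc' (c.1 - 1) q' hu hqc (by omega)
              have := chain_len_row (c :: M) (b q') c.2 hpw (by
                intro s hs
                refine ⟨(hmem s hs).2.2, ?_⟩
                rcases List.mem_cons.1 hs with rfl | hs
                · exact le_rfl
                · exact (hpw'.1 s hs).2.le) (by omega)
              omega
          · have := hch q' h1 (by omega) (s :: c :: M) (by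
              intro t ht
              rcases List.mem_cons.1 ht with rfl | ht
              · exact ⟨hs, by omega, by omega⟩
              · exact ⟨((hS0 t).1 (hmem t ht).1).1, (hmem t ht).2⟩) (by
              rw [List.pairwise_cons]
              refine ⟨?_, hpw⟩
              intro t ht
              rcases List.mem_cons.1 ht with rfl | ht
              · exact ⟨by omega, by omega⟩
              · have := hpw'.1 t ht
                exact ⟨by omega, by omega⟩)
            simp only [List.length_cons] at this ⊢
            omega
      · rw [e] at hbase ⊢
        omega
    obtain ⟨P', σ', hσ', hpath', hdis', hcov', hbd'⟩ := ih a' b' S' X1 X2 X3 X4 X5 X6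
    · -- inner boundary below
      have hin1 : ∀ u, 1 ≤ u → u < q → bdry a' b' S' u < g u := by
        intro u hu huq
        have hcu := bdry_c a b S hu
        rw [← hgdef] at hcu
        have hm := hmin u hu huq
        have : bdry a' b' S' u ≤ g u - 1 := by
          apply bdry_le
          · rw [ha', hb']
            rcases hδ u with ⟨_, e⟩ | ⟨h, _⟩
            · rw [e]; omega
            · omega
          · intro s hs hsu
            rw [hS', hS0] at hs
            have h1 := hs.2.2 (by simp; omega)
            simp at h1
            have h2 := hgm s.1 u hsu (by omega)
            omega
        omega
      have hin2 : ∀ u, q ≤ u → u ≤ N → bdry a' b' S' u ≤ g (u + 1) := by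
        intro u hqu hu
        apply bdry_le
        · rw [ha', hb']
          rcases hδ u with ⟨h, _⟩ | ⟨_, e⟩
          · omega
          · rw [e]
            have := bdry_c a b S (show 1 ≤ u + 1 by omega)
            rw [← hgdef] at this
            have h4 := haj (u + 1) (by omega) (by omega)
            omega
        · intro s hs hsu
          rw [hS', hS0] at hs
          exact bdry_S a b S (s := (s.1 + 1, s.2)) hs.2.1 (by simp) (by simp; omega)
      have hsep : ∀ x ∈ Set.Icc 1 N, ∀ p ∈ P' x, (p.1 + 1, p.2) ∉ P0 := by
        intro x hx p hp hp0
        rw [hP0m] at hp0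
        simp at hp0
        have h1 := hbd' x hx p hp
        have h2 := hin1 p.1 h1.1 (by omega)
        omega
      refine ⟨fun x => if x = 1 then P0 else (P' (x - 1)).map (fun p => (p.1 + 1, p.2)),
        fun x => if x = 1 then q else δ (σ' (x - 1)), ?_, ?_, ?_, ?_, ?_⟩
      · refine ⟨?_, ?_, ?_⟩
        · intro x hx
          simp only [Set.mem_Icc] at hx ⊢
          by_cases hx1 : x = 1
          · simp only [hx1, if_true]; omega
          · simp only [hx1, if_false]
            have h2 := hσ'.mapsTo (show x - 1 ∈ Set.Icc 1 N by simp; omega)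
            simp only [Set.mem_Icc] at h2
            have h3 := hδpos _ h2.1 h2.2
            omega
        · intro x hx y hy hxy
          simp only [Set.mem_Icc] at hx hy
          by_cases hx1 : x = 1 <;> by_cases hy1 : y = 1 <;> simp only [hx1, hy1, if_true, if_false] at hxy
          · omega
          · rcases hδ (σ' (y - 1)) with h | h <;> omega
          · rcases hδ (σ' (x - 1)) with h | h <;> omega
          · have h3 : σ' (x - 1) = σ' (y - 1) := by
              rcases hδ (σ' (y - 1)) with h | h <;> rcases hδ (σ' (x - 1)) with h' | h' <;> omega
            have h4 := hσ'.injOn (show x - 1 ∈ Set.Icc 1 N by simp; omega)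
              (show y - 1 ∈ Set.Icc 1 N by simp; omega) h3
            omega
        · intro j hj
          simp only [Set.mem_Icc] at hj
          by_cases hjq : j = q
          · exact ⟨1, by simp, by simp [hjq]⟩
          · obtain ⟨t, ht, htj⟩ : ∃ t, t ∈ Set.Icc 1 N ∧ δ t = j := by
              by_cases hlt : j < q
              · refine ⟨j, by simp; omega, ?_⟩
                rcases hδ j with h | h <;> omega
              · refine ⟨j - 1, by simp; omega, ?_⟩
                rcases hδ (j - 1) with h | h <;> omega
            obtain ⟨x, hx, rfl⟩ := hσ'.surjOn ht
            simp only [Set.mem_Icc] at hx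
            refine ⟨x + 1, by simp; omega, ?_⟩
            beta_reduce
            rw [if_neg (by omega)]
            simpa using htj
      · intro x hx
        simp only [Set.mem_Icc] at hx
        by_cases hx1 : x = 1
        · subst hx1
          simpa [haq] using hP0
        · simp only [hx1, if_false]
          have hx' : x - 1 ∈ Set.Icc 1 N := by simp; omega
          have h1 := (hpath' (x - 1) hx').map_nat
          have h2 := hσ'.mapsTo hx'
          simp only [Set.mem_Icc] at h2
          have h3 := hδpos _ h2.1 h2.2
          simp only [ha', hb'] at h1
          rwa [show x - 1 + 1 = x by omega, show a (δ (σ' (x - 1))) - 1 + 1 = a (δ (σ' (x - 1))) by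
            omega] at h1
      · intro k hk l hl hkl p hpk hpl
        simp only [Set.mem_Icc] at hk hl
        by_cases hk1 : k = 1 <;> by_cases hl1 : l = 1
        · omega
        · simp only [hk1, hl1, if_true, if_false, List.mem_map] at hpk hpl
          obtain ⟨r, hr, rfl⟩ := hpl
          exact hsep _ (by simp; omega) r hr hpk
        · simp only [hk1, hl1, if_true, if_false, List.mem_map] at hpk hpl
          obtain ⟨r, hr, rfl⟩ := hpk
          exact hsep _ (by simp; omega) r hr hpl
        · simp only [hk1, hl1, if_false, List.mem_map] at hpk hpl
          obtain ⟨r, hr, rfl⟩ := hpk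
          obtain ⟨r', hr', e⟩ := hpl
          have : r' = r := by
            ext
            · simpa using congrArg Prod.fst e
            · simpa using congrArg Prod.snd e
          subst this
          exact hdis' (k - 1) (by simp; omega) (l - 1) (by simp; omega) (by omega) _ hr hr'
      · intro s hs
        have hs1 := hS s hs
        by_cases hsP : s ∈ S0
        · have h2 := hS0x s hsP
          obtain ⟨x, hx, hx'⟩ := hcov' (s.1 - 1, s.2) (by
            rw [hS']
            refine ⟨by simp; omega, ?_⟩
            simp only
            rwa [show s.1 - 1 + 1 = s.1 by omega])
          simp only [Set.mem_Icc] at hx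
          refine ⟨x + 1, by simp; omega, ?_⟩
          beta_reduce
          rw [if_neg (by omega), List.mem_map]
          refine ⟨_, hx', ?_⟩
          ext <;> simp
          omega
        · refine ⟨1, by simp, ?_⟩
          beta_reduce
          rw [if_pos rfl, hP0m]
          rw [hS0] at hsP
          push Not at hsP
          have := hsP hs
          exact ⟨hs1.1, this.1, this.2, bdry_S a b S hs hs1.1 le_rfl⟩
      · intro x hx p hp
        simp only [Set.mem_Icc] at hx
        by_cases hx1 : x = 1
        · simp only [hx1, if_true] at hp
          rw [hP0m] at hp
          exact ⟨hp.1, by omega, hp.2.2.2⟩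
        · simp only [hx1, if_false, List.mem_map] at hp
          obtain ⟨r, hr, rfl⟩ := hp
          have hx' : x - 1 ∈ Set.Icc 1 N := by simp; omega
          have h1 := hbd' _ hx' r hr
          have h2 := h1.2.1
          refine ⟨by simp, by simp; omega, ?_⟩
          simp only
          rcases Nat.lt_or_ge r.1 q with h | h
          · have h3 := hin1 r.1 h1.1 h
            have h4 := hgm1 r.1 (by omega)
            omega
          · have h3 := hin2 r.1 h h2
            omega
lemma path_facts (P : List (ℤ × ℤ)) : ∀ (A E : ℤ × ℤ), IsNEPathFrom P A E →
    P.Pairwise (fun p r => p.1 ≤ r.1 ∧ p.2 ≤ r.2 ∧ p.1 + p.2 < r.1 + r.2) ∧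
    (∀ p ∈ P, A.1 ≤ p.1 ∧ A.2 ≤ p.2 ∧ p.1 ≤ E.1 ∧ p.2 ≤ E.2) ∧
    (P.length : ℤ) = E.1 + E.2 - A.1 - A.2 + 1 := by
  induction P with
  | nil => intro A E h; simp [IsNEPathFrom] at h
  | cons B t ih =>
    intro A E h
    obtain ⟨h1, h2, h3⟩ := h
    simp at h1
    subst h1
    cases t with
    | nil =>
      simp at h2
      subst h2
      simp
    | cons C t =>
      unfold List.Chain' at h3
      rw [List.isChain_cons_cons] at h3
      have hp : IsNEPathFrom (C :: t) C E := ⟨rfl, by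
        rw [← h2, List.getLast?_cons_cons], h3.2⟩
      obtain ⟨i1, i2, i3⟩ := ih C E hp
      have hC := i2 C (by simp)
      have hst : B.1 ≤ C.1 ∧ B.2 ≤ C.2 ∧ B.1 + B.2 + 1 = C.1 + C.2 := by
        rcases h3.1 with h | h <;> rw [h] <;>
          (refine ⟨?_, ?_, ?_⟩ <;> simp only <;> omega)
      refine ⟨?_, ?_, ?_⟩
      · rw [List.pairwise_cons]
        refine ⟨?_, i1⟩
        intro p hp
        have := i2 p hp
        omega
      · intro p hp
        rcases List.mem_cons.1 hp with rfl | hp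
        · omega
        · have := i2 p hp
          omega
      · rw [List.length_cons]
        push_cast
        omega

lemma path_comp {P : List (ℤ × ℤ)} {A E : ℤ × ℤ} (h : IsNEPathFrom P A E) {p r : ℤ × ℤ}
    (hp : p ∈ P) (hr : r ∈ P) : (p.1 ≤ r.1 ∧ p.2 ≤ r.2) ∨ (r.1 ≤ p.1 ∧ r.2 ≤ p.2) := by
  by_cases hpr : p = r
  · subst hpr; left; simp
  · have h1 := (path_facts P A E h).1
    have h2 : P.Pairwise (fun p r => (p.1 ≤ r.1 ∧ p.2 ≤ r.2) ∨ (r.1 ≤ p.1 ∧ r.2 ≤ p.2)) :=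
      h1.imp (by intro a b h; left; omega)
    have : Std.Symm (fun p r : ℤ × ℤ =>
        (p.1 ≤ r.1 ∧ p.2 ≤ r.2) ∨ (r.1 ≤ p.1 ∧ r.2 ≤ p.2)) := ⟨by intro a b h; tauto⟩
    exact h2.forall hp hr hpr

lemma path_card {P : List (ℤ × ℤ)} {A E : ℤ × ℤ} (h : IsNEPathFrom P A E) :
    (P.toFinset.card : ℤ) = E.1 + E.2 - A.1 - A.2 + 1 := by
  have h1 := path_facts P A E h
  rw [List.toFinset_card_of_nodup, h1.2.2]
  exact h1.1.imp (by rintro a b h rfl; omega)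

def Fam (d : ℕ) (a b : ℕ → ℕ) (S : Finset (ℕ × ℕ)) : Prop :=
  ∃ (P : ℕ → List (ℤ × ℤ)) (σ : ℕ → ℕ),
    Set.BijOn σ (Set.Icc 1 d) (Set.Icc 1 d) ∧
    (∀ ℓ ∈ Set.Icc 1 d, IsNEPathFrom (P ℓ) ((d : ℤ) + 1 - ℓ, (d : ℤ))
      ((a (σ ℓ) : ℤ), (b (σ ℓ) : ℤ))) ∧
    (∀ k ∈ Set.Icc 1 d, ∀ l ∈ Set.Icc 1 d, k ≠ l → ∀ p ∈ P k, p ∉ P l) ∧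
    ∀ p : ℤ × ℤ,
      ((d : ℤ) < p.2 ∧ ∃ ℓ ∈ Set.Icc 1 d, p ∈ P ℓ) ↔
      ∃ s ∈ S, p = ((s.1 : ℤ), (s.2 : ℤ))

def CB (d : ℕ) (a b : ℕ → ℕ) (S : Finset (ℕ × ℕ)) : Prop :=
  ∀ q, 1 ≤ q → q ≤ d → ∀ L : List (ℕ × ℕ), (∀ s ∈ L, s ∈ S ∧ s.1 ≤ a q ∧ b q < s.2) →
      L.Pairwise (fun a b => a.1 < b.1 ∧ b.2 < a.2) → L.length + q ≤ a q

structure Dat (n d : ℕ) (a b : ℕ → ℕ) : Prop where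
  ha : ∀ j k, 1 ≤ j → j ≤ k → k ≤ d → a j ≤ a k
  hb : ∀ j k, 1 ≤ j → j ≤ k → k ≤ d → b j ≤ b k
  hab : ∀ j k, 1 ≤ j → j < k → k ≤ d → a j + b j < a k + b k
  haj : ∀ j, 1 ≤ j → j ≤ d → j ≤ a j ∧ a j ≤ d
  hbj : ∀ j, 1 ≤ j → j ≤ d → d ≤ b j ∧ b j ≤ n

lemma fam_CB {n d : ℕ} {a b : ℕ → ℕ} (hD : Dat n d a b) {S : Finset (ℕ × ℕ)}
    (h : Fam d a b S) : CB d a b S := by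
  classical
  obtain ⟨P, σ, hσ, hP, hdis, hS⟩ := h
  intro q hq1 hqd L hL hpw
  -- choose a path for each element
  have hc : ∀ s ∈ L, ∃ ℓ, ℓ ∈ Set.Icc 1 d ∧ ((s.1 : ℤ), (s.2 : ℤ)) ∈ P ℓ := by
    intro s hs
    obtain ⟨_, ℓ, h1, h2⟩ := (hS ((s.1 : ℤ), (s.2 : ℤ))).2 ⟨s, (hL s hs).1, rfl⟩
    exact ⟨ℓ, h1, h2⟩
  let c : ℕ × ℕ → ℕ := fun s => if h : ∃ ℓ, ℓ ∈ Set.Icc 1 d ∧ ((s.1 : ℤ), (s.2 : ℤ)) ∈ P ℓ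
    then h.choose else 0
  have hc' : ∀ s ∈ L, c s ∈ Set.Icc 1 d ∧ ((s.1 : ℤ), (s.2 : ℤ)) ∈ P (c s) := by
    intro s hs
    have h := hc s hs
    simp only [c, h, dif_pos]
    exact h.choose_spec
  have hnd : (L.map c).Nodup := by
    rw [List.Nodup, List.pairwise_map]
    refine hpw.imp_of_mem ?_
    intro s t hs ht hst he
    have h1 := (hc' s hs)
    have h2 := (hc' t ht).2
    rw [← he] at h2
    have h3 := path_comp (hP _ h1.1) h1.2 h2
    simp at h3
    omega
  have hcard : (L.map c).toFinset.card = L.length := by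
    rw [List.toFinset_card_of_nodup hnd, List.length_map]
  let U := (Finset.Icc 1 d).filter (fun ℓ => d + 1 ≤ a q + ℓ)
  let V := (Finset.Icc 1 d).filter (fun ℓ => σ ℓ ≤ q)
  have haq := hD.haj q hq1 hqd
  have hU : U.card = a q := by
    have : U = Finset.Icc (d + 1 - a q) d := by
      ext x; simp [U]; omega
    rw [this, Nat.card_Icc]; omega
  have hV : V.card = q := by
    have h1 : V.image σ = Finset.Icc 1 q := by
      ext x
      simp only [V, Finset.mem_image, Finset.mem_filter, Finset.mem_Icc]
      constructor
      · rintro ⟨ℓ, ⟨h1, h2⟩, rfl⟩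
        have := hσ.mapsTo (show ℓ ∈ Set.Icc 1 d from h1)
        exact ⟨this.1, h2⟩
      · rintro ⟨h1, h2⟩
        obtain ⟨ℓ, h3, rfl⟩ := hσ.surjOn (show x ∈ Set.Icc 1 d from ⟨h1, by omega⟩)
        exact ⟨ℓ, ⟨h3, h2⟩, rfl⟩
    have h2 : (V.image σ).card = V.card := by
      apply Finset.card_image_of_injOn
      intro x hx y hy hxy
      simp only [V, Finset.coe_filter, Finset.mem_Icc, Set.mem_ofPred_eq] at hx hy
      exact hσ.injOn hx.1 hy.1 hxy
    rw [← h2, h1]; simp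
  have hdisj : Disjoint (L.map c).toFinset V := by
    rw [Finset.disjoint_left]
    intro ℓ h1 h2
    simp only [List.mem_toFinset, List.mem_map] at h1
    obtain ⟨s, hs, rfl⟩ := h1
    simp only [V, Finset.mem_filter, Finset.mem_Icc] at h2
    have h3 := hc' s hs
    have h4 := ((path_facts _ _ _ (hP _ h3.1)).2.1 _ h3.2).2.2.2
    have h5 := (hL s hs).2.2
    have h6 := hσ.mapsTo h3.1
    have h7 := hD.hb _ q h6.1 h2.2 hqd
    simp at h4
    omega
  have hsub : (L.map c).toFinset ∪ V ⊆ U := by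
    intro ℓ h
    rw [Finset.mem_union] at h
    simp only [U, Finset.mem_filter, Finset.mem_Icc]
    rcases h with h1 | h2
    · simp only [List.mem_toFinset, List.mem_map] at h1
      obtain ⟨s, hs, rfl⟩ := h1
      have h3 := hc' s hs
      have h4 := ((path_facts _ _ _ (hP _ h3.1)).2.1 _ h3.2).1
      have h5 := (hL s hs).2.1
      refine ⟨h3.1, ?_⟩
      simp at h4
      omega
    · simp only [V, Finset.mem_filter, Finset.mem_Icc] at h2
      refine ⟨h2.1, ?_⟩
      have hp := hP ℓ h2.1
      have h3 : ((d : ℤ) + 1 - ℓ, (d : ℤ)) ∈ P ℓ := List.mem_of_mem_head? (by rw [hp.1]; rfl)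
      have h4 := ((path_facts _ _ _ hp).2.1 _ h3).2.2.1
      have h6 := hσ.mapsTo (show ℓ ∈ Set.Icc 1 d from h2.1)
      have h7 := hD.ha _ q h6.1 h2.2 hqd
      simp at h4
      omega
  have := Finset.card_le_card hsub
  rw [Finset.card_union_of_disjoint hdisj, hcard, hU, hV] at this
  exact this

lemma fam_card {n d : ℕ} {a b : ℕ → ℕ} (hD : Dat n d a b) {S : Finset (ℕ × ℕ)}
    (h : Fam d a b S) : (S.card : ℤ) + d = ∑ q ∈ Finset.Icc 1 d, ((a q : ℤ) + b q)
      - ∑ ℓ ∈ Finset.Icc 1 d, ((d : ℤ) + 1 - ℓ + d) + d := by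
  classical
  obtain ⟨P, σ, hσ, hP, hdis, hS⟩ := h
  let T : Finset (ℤ × ℤ) := (Finset.Icc 1 d).biUnion (fun ℓ => (P ℓ).toFinset)
  have hT : (T.card : ℤ) = ∑ q ∈ Finset.Icc 1 d, ((a q : ℤ) + b q)
      - ∑ ℓ ∈ Finset.Icc 1 d, ((d : ℤ) + 1 - ℓ + d) + d := by
    rw [Finset.card_biUnion]
    · push_cast
      have h1 : ∑ q ∈ Finset.Icc 1 d, ((a q : ℤ) + b q) =
          ∑ ℓ ∈ Finset.Icc 1 d, ((a (σ ℓ) : ℤ) + b (σ ℓ)) := by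
        symm
        apply Finset.sum_bij (fun ℓ _ => σ ℓ)
        · intro ℓ hℓ
          have := hσ.mapsTo (by simpa using hℓ : ℓ ∈ Set.Icc 1 d)
          simpa using this
        · intro x hx y hy hxy
          exact hσ.injOn (by simpa using hx) (by simpa using hy) hxy
        · intro x hx
          obtain ⟨ℓ, h3, rfl⟩ := hσ.surjOn (by simpa using hx : x ∈ Set.Icc 1 d)
          exact ⟨ℓ, by simpa using h3, rfl⟩
        · intros; rfl
      have h2 : ∀ ℓ ∈ Finset.Icc 1 d, ((P ℓ).toFinset.card : ℤ) =
          ((a (σ ℓ) : ℤ) + b (σ ℓ)) - ((d : ℤ) + 1 - ℓ + d) + 1 := by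
        intro ℓ hℓ
        rw [path_card (hP ℓ (by simpa using hℓ))]
        simp only; ring
      rw [h1, Finset.sum_congr rfl h2, Finset.sum_add_distrib, Finset.sum_sub_distrib]
      simp
    · intro x hx y hy hxy
      rw [Function.onFun, Finset.disjoint_left]
      intro p hp hp'
      exact hdis x (by simpa using hx) y (by simpa using hy) hxy p (by simpa using hp)
        (by simpa using hp')
  rw [← hT]
  let S1 : Finset (ℤ × ℤ) := S.image (fun s => ((s.1 : ℤ), (s.2 : ℤ)))
  let A1 : Finset (ℤ × ℤ) := (Finset.Icc 1 d).image (fun ℓ : ℕ => ((d : ℤ) + 1 - ℓ, (d : ℤ)))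
  have hS1 : S1.card = S.card := by
    apply Finset.card_image_of_injective
    rintro ⟨x, y⟩ ⟨z, w⟩ h
    simpa using h
  have hA1 : A1.card = d := by
    rw [Finset.card_image_of_injective]
    · simp
    · intro x y h
      simpa using h
  have hTe : T = S1 ∪ A1 := by
    ext p
    simp only [T, S1, A1, Finset.mem_union, Finset.mem_biUnion, Finset.mem_image,
      List.mem_toFinset, Finset.mem_Icc]
    constructor
    · rintro ⟨ℓ, h1, h2⟩
      have h3 := (path_facts _ _ _ (hP ℓ h1)).2.1 p h2
      have h6 := hσ.mapsTo (show ℓ ∈ Set.Icc 1 d from h1)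
      have h7 := hD.haj _ h6.1 h6.2
      simp only at h3
      by_cases hp : (d : ℤ) < p.2
      · left
        obtain ⟨s, hs, e⟩ := (hS p).1 ⟨hp, ℓ, h1, h2⟩
        exact ⟨s, hs, e.symm⟩
      · right
        refine ⟨(d + 1 - p.1).toNat, ?_, ?_⟩
        · omega
        · ext
          · simp only
            omega
          · simp only; omega
    · rintro (⟨s, hs, rfl⟩ | ⟨ℓ, h1, rfl⟩)
      · exact ((hS _).2 ⟨s, hs, rfl⟩).2
      · exact ⟨ℓ, h1, List.mem_of_mem_head? (by rw [(hP ℓ h1).1]; rfl)⟩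
  have hdj : Disjoint S1 A1 := by
    rw [Finset.disjoint_left]
    intro p h1 h2
    simp only [S1, A1, Finset.mem_image] at h1 h2
    obtain ⟨s, hs, e⟩ := h1
    obtain ⟨ℓ, _, rfl⟩ := h2
    have := ((hS _).2 ⟨s, hs, e.symm⟩).1
    simp at this
  rw [hTe, Finset.card_union_of_disjoint hdj, hS1, hA1]
  push_cast; rfl

lemma fam_refl {n d : ℕ} {a b : ℕ → ℕ} (hD : Dat n d a b) {P : ℕ → List (ℤ × ℤ)} {σ : ℕ → ℕ}
    (hσ : Set.BijOn σ (Set.Icc 1 d) (Set.Icc 1 d))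
    (hP : ∀ ℓ ∈ Set.Icc 1 d, IsNEPathFrom (P ℓ) ((d : ℤ) + 1 - ℓ, (d : ℤ))
      ((a (σ ℓ) : ℤ), (b (σ ℓ) : ℤ))) {p : ℤ × ℤ} {ℓ : ℕ} (hℓ : ℓ ∈ Set.Icc 1 d) (hp : p ∈ P ℓ) :
    1 ≤ p.1 ∧ p.1 ≤ d ∧ d ≤ p.2 ∧ p.2 ≤ n := by
  have h3 := (path_facts _ _ _ (hP ℓ hℓ)).2.1 p hp
  have h6 := hσ.mapsTo hℓ
  have h7 := hD.haj _ h6.1 h6.2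
  have h8 := hD.hbj _ h6.1 h6.2
  simp only [Set.mem_Icc] at h3 hℓ
  omega
lemma cover {n d : ℕ} {a b : ℕ → ℕ} (hD : Dat n d a b) {S : Finset (ℕ × ℕ)}
    (hS : ∀ s ∈ S, 1 ≤ s.1 ∧ s.1 ≤ d ∧ d + 1 ≤ s.2 ∧ s.2 ≤ n) (hCB : CB d a b S) :
    ∃ S' : Finset (ℕ × ℕ), S ⊆ S' ∧
      (∀ s ∈ S', 1 ≤ s.1 ∧ s.1 ≤ d ∧ d + 1 ≤ s.2 ∧ s.2 ≤ n) ∧ Fam d a b S' := by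
  classical
  let S0 : Finset (ℕ × ℕ) := S.image (fun s => (s.1, s.2 - d))
  have hS0 : ∀ s, s ∈ S0 ↔ 1 ≤ s.2 ∧ (s.1, s.2 + d) ∈ S := by
    rintro ⟨x, y⟩
    simp only [S0, Finset.mem_image, Prod.mk.injEq]
    constructor
    · rintro ⟨s, hs, rfl, rfl⟩
      have := hS s hs
      refine ⟨by omega, ?_⟩
      rwa [show s.2 - d + d = s.2 by omega]
    · rintro ⟨h1, h2⟩
      exact ⟨_, h2, rfl, by simp⟩
  obtain ⟨P, σ, hσ, hP, hdis, hcov, -⟩ := core d a (fun j => b j - d) S0 hD.ha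
    (by
      intro j k h1 h2 h3
      have := hD.hb j k h1 h2 h3
      omega)
    (by
      intro j k h1 h2 h3
      have := hD.hab j k h1 h2 h3
      have := hD.hbj j h1 (by omega)
      have := hD.hbj k (by omega) h3
      omega)
    hD.haj
    (by
      intro s hs
      rw [hS0] at hs
      have := hS _ hs.2
      simp only at this; omega)
    (by
      intro q h1 h2 L hL hpw
      have := hCB q h1 h2 (L.map (fun s => (s.1, s.2 + d))) (by
        intro s hs
        rw [List.mem_map] at hs
        obtain ⟨r, hr, rfl⟩ := hs
        have h3 := hL r hr
        rw [hS0] at h3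
        refine ⟨h3.1.2, h3.2.1, ?_⟩
        simp only at h3 ⊢
        omega) (by
        rw [List.pairwise_map]
        exact hpw.imp (by intro u v h; simpa using h))
      simpa using this)
  have hrev : ∀ ℓ ∈ Set.Icc 1 d, d + 1 - ℓ ∈ Set.Icc 1 d := by
    intro ℓ hℓ
    simp only [Set.mem_Icc] at hℓ ⊢; omega
  let PZ : ℕ → List (ℤ × ℤ) := fun ℓ => (P (d + 1 - ℓ)).map fun p => ((p.1 : ℤ), (d : ℤ) + p.2)
  have hσZ : Set.BijOn (fun ℓ => σ (d + 1 - ℓ)) (Set.Icc 1 d) (Set.Icc 1 d) := by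
    refine ⟨fun ℓ hℓ => hσ.mapsTo (hrev ℓ hℓ), ?_, ?_⟩
    · intro x hx y hy hxy
      have := hσ.injOn (hrev x hx) (hrev y hy) hxy
      simp only [Set.mem_Icc] at hx hy
      omega
    · intro y hy
      obtain ⟨x, hx, rfl⟩ := hσ.surjOn hy
      refine ⟨d + 1 - x, hrev x hx, ?_⟩
      simp only [Set.mem_Icc] at hx
      simp only
      congr 1; omega
  have hPZ : ∀ ℓ ∈ Set.Icc 1 d, IsNEPathFrom (PZ ℓ) ((d : ℤ) + 1 - ℓ, (d : ℤ))
      ((a (σ (d + 1 - ℓ)) : ℤ), (b (σ (d + 1 - ℓ)) : ℤ)) := by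
    intro ℓ hℓ
    have h1 := (hP _ (hrev ℓ hℓ)).map_int d
    have h2 := hσ.mapsTo (hrev ℓ hℓ)
    have h3 := hD.hbj _ h2.1 h2.2
    simp only [Set.mem_Icc] at hℓ
    convert h1 using 2
    · simp only; omega
    · simp
    · simp only; omega
  refine ⟨((Finset.Icc 1 d) ×ˢ (Finset.Icc (d + 1) n)).filter
    (fun s => ∃ ℓ ∈ Set.Icc 1 d, ((s.1 : ℤ), (s.2 : ℤ)) ∈ PZ ℓ), ?_, ?_, ?_⟩
  · intro s hs
    have h1 := hS s hs
    simp only [Finset.mem_filter, Finset.mem_product, Finset.mem_Icc]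
    refine ⟨by omega, ?_⟩
    obtain ⟨x, hx, hx'⟩ := hcov (s.1, s.2 - d) (by
      rw [hS0]
      simp only
      rw [show s.2 - d + d = s.2 by omega]
      exact ⟨by omega, hs⟩)
    refine ⟨d + 1 - x, hrev x hx, ?_⟩
    simp only [PZ, List.mem_map]
    simp only [Set.mem_Icc] at hx
    rw [show d + 1 - (d + 1 - x) = x by omega]
    refine ⟨_, hx', ?_⟩
    ext
    · rfl
    · simp only; omega
  · intro s hs
    simp only [Finset.mem_filter, Finset.mem_product, Finset.mem_Icc] at hs
    omega
  · refine ⟨PZ, fun ℓ => σ (d + 1 - ℓ), hσZ, hPZ, ?_, ?_⟩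
    · intro k hk l hl hkl p hpk hpl
      simp only [PZ, List.mem_map] at hpk hpl
      obtain ⟨r, hr, rfl⟩ := hpk
      obtain ⟨r', hr', e⟩ := hpl
      have : r' = r := by
        ext
        · simpa using congrArg Prod.fst e
        · simpa using congrArg Prod.snd e
      subst this
      refine hdis _ (hrev k hk) _ (hrev l hl) ?_ _ hr hr'
      simp only [Set.mem_Icc] at hk hl
      omega
    · intro p
      constructor
      · rintro ⟨h1, ℓ, hℓ, hp⟩
        have h2 := fam_refl hD hσZ hPZ hℓ hp
        refine ⟨(p.1.toNat, p.2.toNat), ?_, ?_⟩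
        · simp only [Finset.mem_filter, Finset.mem_product, Finset.mem_Icc]
          refine ⟨by omega, ℓ, hℓ, ?_⟩
          rw [Int.toNat_of_nonneg (by omega), Int.toNat_of_nonneg (by omega)]
          exact hp
        · ext <;> simp only <;> omega
      · rintro ⟨s, hs, rfl⟩
        simp only [Finset.mem_filter, Finset.mem_product, Finset.mem_Icc] at hs
        exact ⟨by simp only; omega, hs.2⟩

theorem combin {n d : ℕ} {a b : ℕ → ℕ} (hD : Dat n d a b) {S : Finset (ℕ × ℕ)}
    (hS : ∀ s ∈ S, 1 ≤ s.1 ∧ s.1 ≤ d ∧ d + 1 ≤ s.2 ∧ s.2 ≤ n) :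
    (CB d a b S ∧ ∀ s : ℕ × ℕ, s ∉ S → (1 ≤ s.1 ∧ s.1 ≤ d ∧ d + 1 ≤ s.2 ∧ s.2 ≤ n) →
      ¬ CB d a b (insert s S)) ↔ Fam d a b S := by
  constructor
  · rintro ⟨h1, h2⟩
    obtain ⟨S', hsub, hS', hF⟩ := cover hD hS h1
    have : S' ⊆ S := by
      intro s hs
      by_contra hns
      refine h2 s hns (hS' s hs) ?_
      intro q hq1 hq2 L hL hpw
      refine fam_CB hD hF q hq1 hq2 L (fun t ht => ⟨?_, (hL t ht).2⟩) hpw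
      rcases Finset.mem_insert.1 (hL t ht).1 with rfl | h
      · exact hs
      · exact hsub h
    rwa [Finset.Subset.antisymm hsub this]
  · intro hF
    refine ⟨fam_CB hD hF, ?_⟩
    intro s hns hs hCB
    obtain ⟨S', hsub, hS', hF'⟩ := cover hD (S := insert s S) (by
      intro t ht
      rcases Finset.mem_insert.1 ht with rfl | h
      · exact hs
      · exact hS t h) hCB
    have h1 := fam_card hD hF
    have h2 := fam_card hD hF'
    have h3 := Finset.card_le_card hsub
    rw [Finset.card_insert_of_notMem hns] at h3
    omega
lemma upper_set {m N : ℕ} (U : Finset ℕ) (hU : ∀ x ∈ U, m < x ∧ x ≤ N)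
    (hup : ∀ x ∈ U, ∀ y, x ≤ y → y ≤ N → y ∈ U) {x : ℕ} (hx : m < x) (hxN : x ≤ N) :
    x ∈ U ↔ N < x + U.card := by
  constructor
  · intro h
    have : Finset.Icc x N ⊆ U := by
      intro y hy
      rw [Finset.mem_Icc] at hy
      exact hup x h y hy.1 hy.2
    have := Finset.card_le_card this
    rw [Nat.card_Icc] at this
    omega
  · intro h
    by_contra hn
    have : U ⊆ Finset.Ioc x N := by
      intro y hy
      rw [Finset.mem_Ioc]
      refine ⟨?_, (hU y hy).2⟩
      by_contra hle
      exact hn (hup y hy x (by omega) hxN)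
    have := Finset.card_le_card this
    rw [Nat.card_Ioc] at this
    omega

lemma sort_lemma (F : Finset ℕ) (d : ℕ) (hF : F.card = d) (k v : ℕ) (hk : k < d) :
    (F.sort (· ≤ ·)).getD k 0 ≤ v ↔ (F.filter (fun f => v < f)).card + (k + 1) ≤ d := by
  have he : (F.sort (· ≤ ·)).getD k 0 = F.orderEmbOfFin hF ⟨k, hk⟩ := by
    rw [Finset.orderEmbOfFin_apply, List.getD_eq_getElem]
    rfl
  rw [he]
  set e := F.orderEmbOfFin hF with hedef
  constructor
  · intro h
    have hsub : F.filter (fun f => v < f) ⊆ (Finset.Ioi (⟨k, hk⟩ : Fin d)).image e := by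
      intro f hf
      rw [Finset.mem_filter] at hf
      have : f ∈ Set.range e := by
        rw [hedef, Finset.range_orderEmbOfFin]; exact hf.1
      obtain ⟨j, rfl⟩ := this
      rw [Finset.mem_image]
      refine ⟨j, ?_, rfl⟩
      rw [Finset.mem_Ioi]
      by_contra hj
      have := e.monotone (not_lt.1 hj)
      omega
    have h1 := Finset.card_le_card hsub
    have h2 := Finset.card_image_le (s := Finset.Ioi (⟨k, hk⟩ : Fin d)) (f := e)
    rw [Fin.card_Ioi] at h2
    simp only at h2
    omega
  · intro h
    by_contra hlt
    push Not at hlt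
    have hsub : (Finset.Ici (⟨k, hk⟩ : Fin d)).image e ⊆ F.filter (fun f => v < f) := by
      intro f hf
      rw [Finset.mem_image] at hf
      obtain ⟨j, hj, rfl⟩ := hf
      rw [Finset.mem_Ici] at hj
      rw [Finset.mem_filter]
      refine ⟨Finset.orderEmbOfFin_mem F hF j, ?_⟩
      have := e.monotone hj
      omega
    have h1 := Finset.card_le_card hsub
    rw [Finset.card_image_of_injective _ e.injective, Fin.card_Ici] at h1
    simp only at h1
    omega

lemma applySwaps_spec (d : ℕ) (L : List (ℕ × ℕ)) (hR : ∀ s ∈ L, s.1 ≤ d ∧ d + 1 ≤ s.2)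
    (hpw : L.Pairwise (fun a b => a.1 < b.1 ∧ b.2 < a.2)) (x : ℕ) (hx : x ≤ d) :
    (∃ s ∈ L, s.1 = x ∧ applySwaps L x = s.2) ∨ ((∀ s ∈ L, s.1 ≠ x) ∧ applySwaps L x = x) := by
  induction L with
  | nil => right; simp [applySwaps]
  | cons s L ih =>
    rw [List.pairwise_cons] at hpw
    have hs := hR s (by simp)
    have hstep : applySwaps (s :: L) x = if applySwaps L x = s.1 then s.2 else
        if applySwaps L x = s.2 then s.1 else applySwaps L x := rfl
    rcases ih (fun t ht => hR t (by simp [ht])) hpw.2 with ⟨t, ht, h1, h2⟩ | ⟨h1, h2⟩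
    · left
      refine ⟨t, by simp [ht], h1, ?_⟩
      have h3 := hpw.1 t ht
      have h4 := hR t (by simp [ht])
      rw [hstep, h2, if_neg (by omega), if_neg (by omega)]
    · by_cases hxs : x = s.1
      · left
        refine ⟨s, by simp, hxs.symm, ?_⟩
        rw [hstep, h2, if_pos hxs]
      · right
        refine ⟨?_, ?_⟩
        · intro t ht
          rcases List.mem_cons.1 ht with rfl | ht
          · exact fun h => hxs h.symm
          · exact h1 t ht
        · rw [hstep, h2, if_neg hxs, if_neg (by omega)]

lemma chain_inj {L : List (ℕ × ℕ)} (hpw : L.Pairwise (fun a b => a.1 < b.1 ∧ b.2 < a.2))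
    {s t : ℕ × ℕ} (hs : s ∈ L) (ht : t ∈ L) : s = t ∨ (s.1 ≠ t.1 ∧ s.2 ≠ t.2) := by
  by_cases h : s = t
  · exact Or.inl h
  · right
    have h2 : L.Pairwise (fun s t => s.1 ≠ t.1 ∧ s.2 ≠ t.2) :=
      hpw.imp (by intro a b h; omega)
    have : Std.Symm (fun s t : ℕ × ℕ => s.1 ≠ t.1 ∧ s.2 ≠ t.2) :=
      ⟨by intro a b h; exact ⟨h.1.symm, h.2.symm⟩⟩
    exact h2.forall hs ht h

lemma applySwaps_inj (d : ℕ) (L : List (ℕ × ℕ)) (hR : ∀ s ∈ L, s.1 ≤ d ∧ d + 1 ≤ s.2)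
    (hpw : L.Pairwise (fun a b => a.1 < b.1 ∧ b.2 < a.2)) {x y : ℕ} (hx : x ≤ d) (hy : y ≤ d)
    (h : applySwaps L x = applySwaps L y) : x = y := by
  rcases applySwaps_spec d L hR hpw x hx with ⟨s, h1, h2, h3⟩ | ⟨h1, h3⟩ <;>
  rcases applySwaps_spec d L hR hpw y hy with ⟨t, g1, g2, g3⟩ | ⟨g1, g3⟩
  · rcases chain_inj hpw h1 g1 with rfl | hh
    · omega
    · omega
  · have := hR s h1; omega
  · have := hR t g1; omega
  · omega

/-- counting after the swaps -/
lemma swap_count (n d : ℕ) (τ : ℕ → ℕ) (v a b : ℕ) (ha : a ≤ d)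
    (h1 : ∀ x, 1 ≤ x → x ≤ d → (v < τ x ↔ a < x))
    (h2 : ∀ y, d + 1 ≤ y → y ≤ n → (v < τ y ↔ b < y))
    (L : List (ℕ × ℕ)) (hR : ∀ s ∈ L, 1 ≤ s.1 ∧ s.1 ≤ d ∧ d + 1 ≤ s.2 ∧ s.2 ≤ n)
    (hpw : L.Pairwise (fun a b => a.1 < b.1 ∧ b.2 < a.2)) :
    ((Finset.Icc 1 d).filter (fun x => v < τ (applySwaps L x))).card +
      (L.toFinset.filter (fun s => a < s.1)).card =
    (d - a) + (L.toFinset.filter (fun s => b < s.2)).card := by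
  classical
  have hR' : ∀ s ∈ L, s.1 ≤ d ∧ d + 1 ≤ s.2 := fun s hs => ⟨(hR s hs).2.1, (hR s hs).2.2.1⟩
  have hinj : Set.InjOn Prod.fst (L.toFinset : Set (ℕ × ℕ)) := by
    intro s hs t ht he
    rcases chain_inj hpw (by simpa using hs) (by simpa using ht) with h | h
    · exact h
    · exact absurd he h.1
  have hci : ∀ (p : ℕ × ℕ → Prop) [DecidablePred p],
      ((L.toFinset.filter p).image Prod.fst).card = (L.toFinset.filter p).card := by
    intro p _
    apply Finset.card_image_of_injOn
    exact hinj.mono (by intro s hs; simp at hs ⊢; exact hs.1)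
  have hT : (Finset.Icc 1 d).filter (fun x => v < τ (applySwaps L x)) =
      (Finset.Ioc a d \ (L.toFinset.filter (fun s => a < s.1)).image Prod.fst) ∪
        (L.toFinset.filter (fun s => b < s.2)).image Prod.fst := by
    ext x
    simp only [Finset.mem_filter, Finset.mem_Icc, Finset.mem_union, Finset.mem_sdiff,
      Finset.mem_Ioc, Finset.mem_image, List.mem_toFinset]
    by_cases hx : 1 ≤ x ∧ x ≤ d
    · rcases applySwaps_spec d L hR' hpw x hx.2 with ⟨s, g1, g2, g3⟩ | ⟨g1, g3⟩
      · rw [g3, h2 s.2 (hR s g1).2.2.1 (hR s g1).2.2.2]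
        constructor
        · rintro ⟨_, h⟩
          exact Or.inr ⟨s, ⟨g1, h⟩, g2⟩
        · rintro (⟨h, h'⟩ | ⟨t, ⟨ht, hb⟩, e⟩)
          · exact absurd ⟨s, ⟨g1, by omega⟩, g2⟩ h'
          · refine ⟨hx, ?_⟩
            rcases chain_inj hpw g1 ht with rfl | hh
            · exact hb
            · omega
      · rw [g3, h1 x hx.1 hx.2]
        constructor
        · rintro ⟨_, h⟩
          refine Or.inl ⟨⟨h, hx.2⟩, ?_⟩
          rintro ⟨s, ⟨hs, _⟩, e⟩
          exact g1 s hs e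
        · rintro (⟨h, h'⟩ | ⟨t, ⟨ht, hb⟩, e⟩)
          · exact ⟨hx, h.1⟩
          · exact absurd e (g1 t ht)
    · constructor
      · rintro ⟨h, _⟩; exact absurd h hx
      · rintro (⟨h, h'⟩ | ⟨t, ⟨ht, hb⟩, e⟩)
        · omega
        · have := hR t ht; omega
  have hdj : Disjoint (Finset.Ioc a d \ (L.toFinset.filter (fun s => a < s.1)).image Prod.fst)
        ((L.toFinset.filter (fun s => b < s.2)).image Prod.fst) := by
    rw [Finset.disjoint_left]
    intro x hx hx'
    simp only [Finset.mem_filter, Finset.mem_sdiff,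
      Finset.mem_Ioc, Finset.mem_image, List.mem_toFinset] at hx hx'
    obtain ⟨t, ⟨ht, hb⟩, e⟩ := hx'
    exact hx.2 ⟨t, ⟨ht, by omega⟩, e⟩
  have hsub : (L.toFinset.filter (fun s => a < s.1)).image Prod.fst ⊆ Finset.Ioc a d := by
    intro x hx
    simp only [Finset.mem_filter, Finset.mem_Ioc, Finset.mem_image, List.mem_toFinset] at hx ⊢
    obtain ⟨t, ⟨ht, hb⟩, e⟩ := hx
    have := hR t ht; omega
  have hsd := Finset.card_sdiff_add_card_eq_card hsub
  rw [hT, Finset.card_union_of_disjoint hdj, hci (fun s => b < s.2)]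
  rw [hci (fun s => a < s.1), Nat.card_Ioc] at hsd
  omega

lemma S1_iff_CB (n d : ℕ) (hdn : d ≤ n) (τ i : ℕ → ℕ)
    (hbij : Set.BijOn τ (Set.Icc 1 n) (Set.Icc 1 n)) (a b : ℕ → ℕ)
    (hD : Dat n d a b)
    (h1 : ∀ q, 1 ≤ q → q ≤ d → ∀ x, 1 ≤ x → x ≤ d → (i q < τ x ↔ a q < x))
    (h2 : ∀ q, 1 ≤ q → q ≤ d → ∀ y, d + 1 ≤ y → y ≤ n → (i q < τ y ↔ b q < y))
    (S : Finset (ℕ × ℕ))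
    (hS : ∀ s ∈ S, 1 ≤ s.1 ∧ s.1 ≤ d ∧ d + 1 ≤ s.2 ∧ s.2 ≤ n) :
    S1Prop d τ i S.val ↔ CB d a b S := by
  classical
  have key : ∀ L : List (ℕ × ℕ), (∀ s ∈ L, s ∈ S) →
      L.Pairwise (fun a b => a.1 < b.1 ∧ b.2 < a.2) →
      (DominatedByW d (fun x => τ (applySwaps L x)) i ↔ ∀ q, 1 ≤ q → q ≤ d →
        (L.toFinset.filter (fun s => b q < s.2)).card + q ≤
          a q + (L.toFinset.filter (fun s => a q < s.1)).card) := by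
    intro L hL hpw
    have hR : ∀ s ∈ L, 1 ≤ s.1 ∧ s.1 ≤ d ∧ d + 1 ≤ s.2 ∧ s.2 ≤ n := fun s hs => hS s (hL s hs)
    have hR' : ∀ s ∈ L, s.1 ≤ d ∧ d + 1 ≤ s.2 := fun s hs => ⟨(hR s hs).2.1, (hR s hs).2.2.1⟩
    have hmap : ∀ x, 1 ≤ x → x ≤ d → applySwaps L x ∈ Set.Icc 1 n := by
      intro x hx1 hx2
      rw [Set.mem_Icc]
      rcases applySwaps_spec d L hR' hpw x hx2 with ⟨s, g1, g2, g3⟩ | ⟨g1, g3⟩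
      · have := hR s g1; omega
      · omega
    have hinj : Set.InjOn (fun x => τ (applySwaps L x)) (Finset.Icc 1 d : Set ℕ) := by
      intro x hx y hy hxy
      simp only [Finset.coe_Icc, Set.mem_Icc] at hx hy
      have := hbij.injOn (hmap x hx.1 hx.2) (hmap y hy.1 hy.2) hxy
      exact applySwaps_inj d L hR' hpw hx.2 hy.2 this
    have hcard : ((Finset.Icc 1 d).image (fun x => τ (applySwaps L x))).card = d := by
      rw [Finset.card_image_of_injOn hinj]; simp
    have hq : ∀ q, 1 ≤ q → q ≤ d →
        ((sortedFirstVals d (fun x => τ (applySwaps L x))).getD (q - 1) 0 ≤ i q ↔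
        (L.toFinset.filter (fun s => b q < s.2)).card + q ≤
          a q + (L.toFinset.filter (fun s => a q < s.1)).card) := by
      intro q hq1 hqd
      have ha := hD.haj q hq1 hqd
      have hc := swap_count n d τ (i q) (a q) (b q) ha.2 (h1 q hq1 hqd) (h2 q hq1 hqd) L hR hpw
      unfold sortedFirstVals
      rw [sort_lemma _ d hcard _ _ (by omega), Finset.filter_image,
        Finset.card_image_of_injOn (hinj.mono (by intro x hx; simp at hx ⊢; exact hx.1))]
      omega
    constructor
    · intro h q hq1 hqd
      rw [← hq q hq1 hqd]
      have := h (q - 1) (by omega)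
      rwa [show q - 1 + 1 = q by omega] at this
    · intro h k hk
      have := (hq (k + 1) (by omega) (by omega)).2 (h (k + 1) (by omega) (by omega))
      simpa using this
  have hnd : ∀ L : List (ℕ × ℕ), L.Pairwise (fun a b => a.1 < b.1 ∧ b.2 < a.2) → L.Nodup := by
    intro L hpw
    exact hpw.imp (by rintro a b h rfl; omega)
  constructor
  · intro h q hq1 hqd L hL hpw
    have h3 := (key L (fun s hs => (hL s hs).1) hpw).1 (h L (fun s hs => (hL s hs).1) hpw) q hq1 hqd
    rw [Finset.filter_true_of_mem, Finset.filter_false_of_mem,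
      List.toFinset_card_of_nodup (hnd L hpw)] at h3
    · simpa using h3
    · intro s hs
      have := hL s (by simpa using hs)
      omega
    · intro s hs
      have := hL s (by simpa using hs)
      omega
  · intro h L hL hpw
    have hL' : ∀ s ∈ L, s ∈ S := hL
    rw [key L hL' hpw]
    intro q hq1 hqd
    have hpw' : (L.filter (fun s => s.1 ≤ a q ∧ b q < s.2)).Pairwise
        (fun a b => a.1 < b.1 ∧ b.2 < a.2) := hpw.filter _
    have h3 := h q hq1 hqd (L.filter (fun s => s.1 ≤ a q ∧ b q < s.2)) (by
      intro s hs
      rw [List.mem_filter] at hs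
      exact ⟨hL' s hs.1, by simpa using hs.2⟩) hpw'
    rw [← List.toFinset_card_of_nodup (hnd _ hpw')] at h3
    have h4 : L.toFinset.filter (fun s => b q < s.2) ⊆
        (L.filter (fun s => s.1 ≤ a q ∧ b q < s.2)).toFinset ∪
          L.toFinset.filter (fun s => a q < s.1) := by
      intro s hs
      simp only [Finset.mem_filter, List.mem_toFinset, Finset.mem_union, List.mem_filter,
        decide_eq_true_eq] at hs ⊢
      by_cases hc : s.1 ≤ a q
      · exact Or.inl ⟨hs.1, hc, hs.2⟩
      · exact Or.inr ⟨hs.1, by omega⟩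
    have h5 := Finset.card_le_card h4
    have h6 := Finset.card_union_le (L.filter (fun s => s.1 ≤ a q ∧ b q < s.2)).toFinset
          (L.toFinset.filter (fun s => a q < s.1))
    omega
/-- A set `S` of reflections `(x,y)`, `1 ≤ x ≤ d < y ≤ n`, satisfies (S1) and is
maximal with respect to (S1) if and only if `S` is exactly the set of lattice points
with y-coordinate `> d` on the paths of some family of non-intersecting NE lattice
paths `P_ℓ` from `A_ℓ = (d+1-ℓ,d)` to `E_{σ(ℓ)} = (d-κ_{σ(ℓ)}, κ_{σ(ℓ)}+i_{σ(ℓ)})`. -/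
theorem maximal_S1_iff_path_family (n d : ℕ) (hd : 1 ≤ d) (hdn : d ≤ n)
    (τ i : ℕ → ℕ)
    (hbij : Set.BijOn τ (Set.Icc 1 n) (Set.Icc 1 n))
    (hmono1 : StrictMonoOn τ (Set.Icc 1 d))
    (hmono2 : StrictMonoOn τ (Set.Icc (d + 1) n))
    (hi : StrictMonoOn i (Set.Icc 1 d))
    (hiN : ∀ ℓ ∈ Set.Icc 1 d, i ℓ ∈ Set.Icc 1 n)
    (hle : ∀ ℓ ∈ Set.Icc 1 d, τ ℓ ≤ i ℓ)
    (κ : ℕ → ℕ)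
    (hκ : ∀ q, κ q = ((Finset.Icc 1 d).filter (fun ℓ => i q < τ ℓ)).card)
    (A E : ℕ → ℤ × ℤ)
    (hA : ∀ ℓ, A ℓ = ((d : ℤ) + 1 - ℓ, (d : ℤ)))
    (hE : ∀ q, E q = ((d : ℤ) - κ q, (κ q : ℤ) + i q))
    (S : Finset (ℕ × ℕ))
    (hSrefl : ∀ s ∈ S, 1 ≤ s.1 ∧ s.1 ≤ d ∧ d + 1 ≤ s.2 ∧ s.2 ≤ n) :
    (S1Prop d τ i S.val ∧
      ∀ s : ℕ × ℕ, s ∉ S → (1 ≤ s.1 ∧ s.1 ≤ d ∧ d + 1 ≤ s.2 ∧ s.2 ≤ n) →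
        ¬ S1Prop d τ i (insert s S).val)
    ↔ ∃ (P : ℕ → List (ℤ × ℤ)) (σ : ℕ → ℕ),
        Set.BijOn σ (Set.Icc 1 d) (Set.Icc 1 d) ∧
        (∀ ℓ ∈ Set.Icc 1 d, IsNEPathFrom (P ℓ) (A ℓ) (E (σ ℓ))) ∧
        (∀ k ∈ Set.Icc 1 d, ∀ l ∈ Set.Icc 1 d, k ≠ l → ∀ p ∈ P k, p ∉ P l) ∧
        ∀ p : ℤ × ℤ,
          ((d : ℤ) < p.2 ∧ ∃ ℓ ∈ Set.Icc 1 d, p ∈ P ℓ) ↔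
          ∃ s ∈ S, p = ((s.1 : ℤ), (s.2 : ℤ)) := by
  classical
  -- the two counting functions
  let U : ℕ → Finset ℕ := fun q => (Finset.Icc 1 d).filter (fun ℓ => i q < τ ℓ)
  let V : ℕ → Finset ℕ := fun q => (Finset.Icc (d + 1) n).filter (fun ℓ => i q < τ ℓ)
  have hUκ : ∀ q, (U q).card = κ q := fun q => (hκ q).symm
  have hUV : ∀ q ∈ Set.Icc 1 d, (U q).card + (V q).card + i q = n := by
    intro q hq
    have h1 : (U q ∪ V q).image τ = Finset.Ioc (i q) n := by
      ext v
      simp only [U, V, Finset.mem_image, Finset.mem_union, Finset.mem_filter, Finset.mem_Icc,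
        Finset.mem_Ioc]
      constructor
      · rintro ⟨x, hx, rfl⟩
        have := hbij.mapsTo (show x ∈ Set.Icc 1 n by rw [Set.mem_Icc]; omega)
        rw [Set.mem_Icc] at this
        omega
      · rintro ⟨h1, h2⟩
        obtain ⟨x, hx, rfl⟩ := hbij.surjOn (show v ∈ Set.Icc 1 n by rw [Set.mem_Icc]; omega)
        rw [Set.mem_Icc] at hx
        exact ⟨x, by omega, rfl⟩
    have h2 : ((U q ∪ V q).image τ).card = (U q ∪ V q).card := by
      apply Finset.card_image_of_injOn
      refine hbij.injOn.mono ?_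
      intro x hx
      simp only [U, V, Finset.coe_union, Finset.coe_filter, Set.mem_union, Set.mem_ofPred_eq,
        Finset.mem_Icc] at hx
      rw [Set.mem_Icc]; omega
    have h3 : Disjoint (U q) (V q) := by
      rw [Finset.disjoint_left]
      intro x h4 h5
      simp only [U, V, Finset.mem_filter, Finset.mem_Icc] at h4 h5
      omega
    rw [h1, Finset.card_union_of_disjoint h3, Nat.card_Ioc] at h2
    have := hiN q hq
    rw [Set.mem_Icc] at this
    omega
  have hiff1 : ∀ q, ∀ x, 1 ≤ x → x ≤ d → (i q < τ x ↔ d < x + κ q) := by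
    intro q x hx1 hx2
    have := upper_set (m := 0) (N := d) (U q) (by
      intro y hy
      simp only [U, Finset.mem_filter, Finset.mem_Icc] at hy
      omega) (by
      intro y hy z hyz hz
      simp only [U, Finset.mem_filter, Finset.mem_Icc] at hy ⊢
      refine ⟨by omega, ?_⟩
      have := hmono1.monotoneOn (show y ∈ Set.Icc 1 d from hy.1)
        (show z ∈ Set.Icc 1 d from ⟨by omega, hz⟩) hyz
      omega) (x := x) (by omega) hx2
    rw [hUκ] at this
    rw [← this]
    simp only [U, Finset.mem_filter, Finset.mem_Icc]
    tauto
  have hiff2 : ∀ q, ∀ x, d + 1 ≤ x → x ≤ n → (i q < τ x ↔ n < x + (V q).card) := by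
    intro q x hx1 hx2
    have := upper_set (m := d) (N := n) (V q) (by
      intro y hy
      simp only [V, Finset.mem_filter, Finset.mem_Icc] at hy
      omega) (by
      intro y hy z hyz hz
      simp only [V, Finset.mem_filter, Finset.mem_Icc] at hy ⊢
      refine ⟨by omega, ?_⟩
      have := hmono2.monotoneOn (show y ∈ Set.Icc (d + 1) n from hy.1)
        (show z ∈ Set.Icc (d + 1) n from ⟨by omega, hz⟩) hyz
      omega) (x := x) (by omega) hx2
    rw [← this]
    simp only [V, Finset.mem_filter, Finset.mem_Icc]
    tauto
  have himono : ∀ j k, 1 ≤ j → j ≤ k → k ≤ d → i j ≤ i k := by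
    intro j k h1 h2 h3
    exact hi.monotoneOn ⟨h1, by omega⟩ ⟨by omega, h3⟩ h2
  have hUm : ∀ j k, 1 ≤ j → j ≤ k → k ≤ d → κ k ≤ κ j := by
    intro j k h1 h2 h3
    rw [← hUκ, ← hUκ]
    apply Finset.card_le_card
    intro x hx
    have := himono j k h1 h2 h3
    simp only [U, Finset.mem_filter] at hx ⊢
    exact ⟨hx.1, by omega⟩
  have hVm : ∀ j k, 1 ≤ j → j ≤ k → k ≤ d → (V k).card ≤ (V j).card := by
    intro j k h1 h2 h3
    apply Finset.card_le_card
    intro x hx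
    have := himono j k h1 h2 h3
    simp only [V, Finset.mem_filter] at hx ⊢
    exact ⟨hx.1, by omega⟩
  have hκq : ∀ q, 1 ≤ q → q ≤ d → q + κ q ≤ d := by
    intro q h1 h2
    have h3 := hle q ⟨h1, h2⟩
    have h4 := hiff1 q q h1 h2
    by_contra h
    have := h4.2 (by omega)
    omega
  have hVd : ∀ q, (V q).card ≤ n - d := by
    intro q
    have := Finset.card_filter_le (Finset.Icc (d + 1) n) (fun ℓ => i q < τ ℓ)
    rw [Nat.card_Icc] at this
    simp only [V]
    omega
  have hUV' : ∀ q, 1 ≤ q → q ≤ d → κ q + (V q).card + i q = n := by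
    intro q h1 h2
    rw [← hUκ]; exact hUV q ⟨h1, h2⟩
  have hD : Dat n d (fun q => d - κ q) (fun q => κ q + i q) := by
    refine ⟨?_, ?_, ?_, ?_, ?_⟩
    · intro j k h1 h2 h3
      have := hUm j k h1 h2 h3
      omega
    · intro j k h1 h2 h3
      have e1 := hVm j k h1 h2 h3
      have e2 := hUV' j h1 (by omega)
      have e3 := hUV' k (by omega) h3
      omega
    · intro j k h1 h2 h3
      have e1 := hκq j h1 (by omega)
      have e2 := hκq k (by omega) h3
      have e3 := hi (show j ∈ Set.Icc 1 d from ⟨h1, by omega⟩)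
        (show k ∈ Set.Icc 1 d from ⟨by omega, h3⟩) h2
      omega
    · intro j h1 h2
      have e1 := hκq j h1 h2
      omega
    · intro j h1 h2
      have e1 := hUV' j h1 h2
      have e2 := hVd j
      omega
  have hF1 : ∀ q, 1 ≤ q → q ≤ d → ∀ x, 1 ≤ x → x ≤ d → (i q < τ x ↔ d - κ q < x) := by
    intro q h1 h2 x hx1 hx2
    rw [hiff1 q x hx1 hx2]
    omega
  have hF2 : ∀ q, 1 ≤ q → q ≤ d → ∀ y, d + 1 ≤ y → y ≤ n → (i q < τ y ↔ κ q + i q < y) := by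
    intro q h1 h2 y hy1 hy2
    rw [hiff2 q y hy1 hy2]
    have := hUV' q h1 h2
    omega
  have hSC := S1_iff_CB n d hdn τ i hbij (fun q => d - κ q) (fun q => κ q + i q) hD hF1 hF2
  have hcomb := combin hD hSrefl
  have hleft : (S1Prop d τ i S.val ∧
      ∀ s : ℕ × ℕ, s ∉ S → (1 ≤ s.1 ∧ s.1 ≤ d ∧ d + 1 ≤ s.2 ∧ s.2 ≤ n) →
        ¬ S1Prop d τ i (insert s S).val) ↔ Fam d (fun q => d - κ q) (fun q => κ q + i q) S := by
    rw [← hcomb, hSC S hSrefl]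
    refine and_congr_right fun _ => ?_
    refine forall_congr' fun s => forall_congr' fun hs => forall_congr' fun hr => ?_
    rw [← hSC (insert s S) (by
      intro t ht
      rcases Finset.mem_insert.1 ht with rfl | h
      · exact hr
      · exact hSrefl t h)]
  rw [hleft]
  unfold Fam
  refine exists_congr fun P => exists_congr fun σ => and_congr_right fun hσ =>
    and_congr_left fun _ => ?_
  refine forall_congr' fun ℓ => forall_congr' fun hℓ => ?_
  have h6 := hσ.mapsTo hℓ
  have h7 := hκq _ h6.1 h6.2
  rw [hA, hE]
  have e1 : (((d - κ (σ ℓ) : ℕ) : ℤ)) = (d : ℤ) - κ (σ ℓ) := by omega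
  have e2 : (((κ (σ ℓ) + i (σ ℓ) : ℕ) : ℤ)) = (κ (σ ℓ) : ℤ) + i (σ ℓ) := by push_cast; rfl
  simp only [e1, e2]
end

section
/- Let w ≥ τ in S_n/(S_d × S_{n-d}). The number of sets S of reflections satisfying (S1) and maximal with respect to (S1) equals the number of families (P_1,…,P_d) of non-intersecting north-east lattice paths where P_ℓ runs from (d+1−ℓ, d) to (d−κ_{σ(ℓ)}, κ_{σ(ℓ)}+i_{σ(ℓ)}). -/
def stepN (p q : ℕ × ℕ) : Prop := q = (p.1 + 1, p.2) ∨ q = (p.1, p.2 + 1)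

def SErel (a b : ℕ × ℕ) : Prop := a.1 < b.1 ∧ b.2 < a.2

def segN (t u c : ℕ) : List (ℕ × ℕ) := (List.range' t (u - t + 1)).map (fun x => (x, c))

lemma mem_segN {t u c : ℕ} (h : t ≤ u) (p : ℕ × ℕ) :
    p ∈ segN t u c ↔ t ≤ p.1 ∧ p.1 ≤ u ∧ p.2 = c := by
  obtain ⟨a, b⟩ := p
  simp only [segN, List.mem_map, List.mem_range'_1, Prod.mk.injEq]
  constructor
  · rintro ⟨x, hx, rfl, rfl⟩
    exact ⟨hx.1, by omega, rfl⟩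
  · rintro ⟨h1, h2, rfl⟩
    exact ⟨a, ⟨h1, by omega⟩, rfl, rfl⟩

lemma segN_head {t u c : ℕ} : (segN t u c).head? = some (t, c) := by
  simp [segN, List.range'_succ]

lemma segN_last {t u c : ℕ} (h : t ≤ u) : (segN t u c).getLast? = some (u, c) := by
  simp only [segN, List.getLast?_map, List.getLast?_range']
  simp
  omega

lemma segN_chain {t u c : ℕ} : (segN t u c).IsChain stepN := by
  rw [segN, List.isChain_map]
  refine (List.isChain_range' t (u - t + 1) 1).imp ?_
  intro a b hab
  left
  simp [hab]

lemma ex_paths (d N : ℕ) : ∀ (c : ℕ) (T : Finset ℕ) (Ends S : Finset (ℕ × ℕ)),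
    (∀ e ∈ Ends, c ≤ e.2 ∧ e.2 < c + N) →
    (∀ s ∈ S, c ≤ s.2 ∧ s.1 ≤ d) →
    (∀ e ∈ Ends, e.1 ≤ d) →
    (∀ e ∈ Ends, ∀ e' ∈ Ends, e ≤ e' ∨ e' ≤ e) →
    (∀ t ∈ T, t ≤ d) →
    (∀ e ∈ Ends, ∀ r, e.1 < r → r ≤ d → r ∈ T) →
    T.card = Ends.card →
    (∀ F ⊆ Ends, ∀ r, (∀ f ∈ F, f.1 ≤ r) → ∀ L : List (ℕ × ℕ), L.Pairwise SErel →
      (∀ x ∈ L, x ∈ S ∧ x.1 ≤ r ∧ ∀ f ∈ F, ¬ x ≤ f) →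
      L.length + F.card ≤ (T.filter (· ≤ r)).card) →
    ∃ P : ℕ → List (ℕ × ℕ),
      (∀ t ∈ T, (P t).head? = some (t, c) ∧ (∃ e ∈ Ends, (P t).getLast? = some e) ∧
        (P t).IsChain stepN ∧ ∀ p ∈ P t, c ≤ p.2) ∧
      (∀ t ∈ T, ∀ t' ∈ T, t ≠ t' → ∀ p ∈ P t, p ∉ P t') ∧
      ∀ s ∈ S, ∃ t ∈ T, s ∈ P t := by
  induction N with
  | zero =>
    intro c T Ends S h1 h2 h3 h4 h5 h6 h7 h8
    have hE : Ends = ∅ := by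
      apply Finset.eq_empty_of_forall_notMem
      intro e he
      have := h1 e he
      omega
    have hT : T = ∅ := by
      rw [← Finset.card_eq_zero, h7, hE, Finset.card_empty]
    refine ⟨fun _ => [], by simp [hT], by simp [hT], ?_⟩
    intro s hs
    have := h8 ∅ (by simp) s.1 (by simp) [s] (by simp) (by simp [hs])
    simp [hT] at this
  | succ N ih =>
    intro c T Ends S h1 h2 h3 h4 h5 h6 h7 h8
    set X : Finset ℕ := ((S ∪ Ends).filter (fun p => p.2 = c)).image Prod.fst with hX
    have memX : ∀ x, x ∈ X ↔ (x, c) ∈ S ∨ (x, c) ∈ Ends := by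
      intro x
      simp only [hX, Finset.mem_image, Finset.mem_filter, Finset.mem_union]
      constructor
      · rintro ⟨⟨a, b⟩, ⟨h, rfl⟩, rfl⟩
        exact h
      · intro h
        exact ⟨(x, c), ⟨h, rfl⟩, rfl⟩
    have hXd : ∀ x ∈ X, x ≤ d := by
      intro x hx
      rcases (memX x).1 hx with h | h
      · exact (h2 _ h).2
      · exact h3 _ h
    set B : ℕ → Finset ℕ := fun t =>
      (insert t X).filter (fun y => t ≤ y ∧ ∀ t2 ∈ T, t < t2 → y < t2) with hB
    have hBmem : ∀ t, t ∈ B t := by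
      intro t
      simp [hB]
    set g : ℕ → ℕ := fun t => (B t).max' ⟨t, hBmem t⟩ with hg
    have hgB : ∀ t, g t ∈ B t := fun t => Finset.max'_mem _ _
    have g1 : ∀ t, t ≤ g t := by
      intro t
      have := hgB t
      simp only [hB, Finset.mem_filter] at this
      exact this.2.1
    have g2 : ∀ t, g t = t ∨ g t ∈ X := by
      intro t
      have := hgB t
      simp only [hB, Finset.mem_filter, Finset.mem_insert] at this
      exact this.1
    have g3 : ∀ t, ∀ t2 ∈ T, t < t2 → g t < t2 := by
      intro t
      have := hgB t
      simp only [hB, Finset.mem_filter] at this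
      exact this.2.2
    have g4 : ∀ t, ∀ x ∈ X, t ≤ x → (∀ t2 ∈ T, t < t2 → x < t2) → x ≤ g t := by
      intro t x hx h h'
      apply Finset.le_max'
      simp only [hB, Finset.mem_filter, Finset.mem_insert]
      exact ⟨Or.inr hx, h, h'⟩
    have g5 : ∀ x ∈ X, ∃ t ∈ T, t ≤ x ∧ x ≤ g t := by
      intro x hx
      have hne : (T.filter (· ≤ x)).Nonempty := by
        rw [← Finset.card_pos]
        rcases (memX x).1 hx with h | h
        · have := h8 ∅ (by simp) x (by simp) [(x, c)] (by simp) (by simp [h])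
          simp only [List.length_singleton, Finset.card_empty] at this
          omega
        · have := h8 {(x, c)} (by simpa using h) x (by simp) [] (by simp) (by simp)
          simp only [List.length_nil, Finset.card_singleton] at this
          omega
      refine ⟨(T.filter (· ≤ x)).max' hne, ?_⟩
      have hm := Finset.max'_mem _ hne
      simp only [Finset.mem_filter] at hm
      refine ⟨hm.1, hm.2, g4 _ x hx hm.2 ?_⟩
      intro t2 ht2 hlt
      by_contra hcon
      have : t2 ≤ (T.filter (· ≤ x)).max' hne :=
        Finset.le_max' _ _ (by simpa using ⟨ht2, not_lt.1 hcon⟩)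
      omega
    have gd : ∀ t ∈ T, g t ≤ d := by
      intro t ht
      rcases g2 t with h | h
      · rw [h]; exact h5 t ht
      · exact hXd _ h
    have gmono : ∀ t ∈ T, ∀ t' ∈ T, t < t' → g t < g t' := by
      intro t ht t' ht' h
      exact lt_of_lt_of_le (g3 t t' ht' h) (g1 t')
    have ginj : Set.InjOn g T := by
      intro t ht t' ht' h
      rcases lt_trichotomy t t' with h' | h' | h'
      · have := gmono t ht t' ht' h'; omega
      · exact h'
      · have := gmono t' ht' t ht h'; omega
    set T1 := T.image g with hT1
    set EK := Ends.filter (fun e => e.2 = c) with hEK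
    set K := EK.image Prod.fst with hK
    have memK : ∀ x, x ∈ K ↔ (x, c) ∈ Ends := by
      intro x
      simp only [hK, hEK, Finset.mem_image, Finset.mem_filter]
      constructor
      · rintro ⟨⟨a, b⟩, ⟨h, rfl⟩, rfl⟩
        exact h
      · intro h
        exact ⟨(x, c), ⟨h, rfl⟩, rfl⟩
    have hKT1 : K ⊆ T1 := by
      intro x hx
      have hxE := (memK x).1 hx
      obtain ⟨t, ht, htx, hxg⟩ := g5 x ((memX x).2 (Or.inr hxE))
      rcases eq_or_lt_of_le hxg with h | h
      · rw [h]; exact Finset.mem_image_of_mem g ht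
      · have hgT := h6 _ hxE (g t) h (gd t ht)
        have := g3 t (g t) hgT (lt_of_le_of_lt htx h)
        omega
    set T' := T1 \ K with hT'
    set Ends' := Ends.filter (fun e => c < e.2) with hEnds'
    set S' := S.filter (fun e => c < e.2) with hS'
    have cardK : K.card = EK.card := by
      apply Finset.card_image_of_injOn
      intro a ha b hb hab
      simp only [hEK, Finset.coe_filter, Set.mem_ofPred_eq] at ha hb
      exact Prod.ext hab (ha.2.trans hb.2.symm)
    have hsplit : EK.card + Ends'.card = Ends.card := by
      rw [hEK, hEnds', ← Finset.card_filter_add_card_filter_not (s := Ends) (fun e => e.2 = c)]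
      congr 2
      apply Finset.filter_congr
      intro e he
      have := h1 e he
      omega
    have cardT1 : T1.card = T.card := Finset.card_image_of_injOn ginj
    obtain ⟨P, hP1, hP2, hP3⟩ := ih (c + 1) T' Ends' S' (by
        intro e he
        simp only [hEnds', Finset.mem_filter] at he
        have := h1 e he.1
        omega) (by
        intro s hs
        simp only [hS', Finset.mem_filter] at hs
        have := h2 s hs.1
        omega) (by
        intro e he
        exact h3 e (Finset.mem_filter.1 he).1) (by
        intro e he e' he'
        exact h4 e (Finset.mem_filter.1 he).1 e' (Finset.mem_filter.1 he').1) (by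
        intro t ht
        simp only [hT', hT1, Finset.mem_sdiff, Finset.mem_image] at ht
        obtain ⟨⟨u, hu, rfl⟩, -⟩ := ht
        exact gd u hu) (by
        intro e he r her hrd
        simp only [hEnds', Finset.mem_filter] at he
        have hrT := h6 e he.1 r her hrd
        rw [hT', Finset.mem_sdiff]
        constructor
        · have : g r = r := by
            rcases eq_or_lt_of_le (g1 r) with h | h
            · exact h.symm
            · have hgT := h6 e he.1 (g r) (her.trans h) (gd r hrT)
              have := g3 r (g r) hgT h
              omega
          rw [hT1, Finset.mem_image]
          exact ⟨r, hrT, this⟩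
        · intro hrK
          rcases h4 _ he.1 _ ((memK r).1 hrK) with h | h
          · have := h.2
            simp only at this
            omega
          · have := h.1
            simp only at this
            omega) (by
        rw [hT', Finset.card_sdiff_of_subset hKT1]
        omega) (by
        intro F hF r hFr L hL hLx
        set Kr := EK.filter (fun e => e.1 ≤ r) with hKr
        have hdisj : Disjoint F Kr := by
          rw [Finset.disjoint_left]
          intro e he he'
          have h1 := hF he
          simp only [hEnds', hKr, hEK, Finset.mem_filter] at h1 he'
          omega
        have hsub : F ∪ Kr ⊆ Ends := by
          intro e he
          rcases Finset.mem_union.1 he with h | h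
          · exact (Finset.mem_filter.1 (hF h)).1
          · exact (Finset.mem_filter.1 (Finset.mem_filter.1 h).1).1
        have hcard : (F ∪ Kr).card = F.card + Kr.card := Finset.card_union_of_disjoint hdisj
        have hr1 : ∀ f ∈ F ∪ Kr, f.1 ≤ r := by
          intro f hf
          rcases Finset.mem_union.1 hf with h | h
          · exact hFr f h
          · exact (Finset.mem_filter.1 h).2
        have hLx' : ∀ x ∈ L, x ∈ S ∧ x.1 ≤ r ∧ ∀ f ∈ F ∪ Kr, ¬ x ≤ f := by
          intro x hx
          obtain ⟨a1, a2, a3⟩ := hLx x hx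
          have a1' := Finset.mem_filter.1 a1
          refine ⟨a1'.1, a2, ?_⟩
          intro f hf
          rcases Finset.mem_union.1 hf with h | h
          · exact a3 f h
          · intro hle
            have h1 := (Finset.mem_filter.1 (Finset.mem_filter.1 h).1).2
            have h2 := hle.2
            have := a1'.2
            omega
        have hKcard : (K.filter (· ≤ r)).card = Kr.card := by
          rw [hK, Finset.filter_image]
          apply Finset.card_image_of_injOn
          intro a ha b hb hab
          simp only [hEK, Finset.coe_filter, Finset.mem_filter, Set.mem_ofPred_eq] at ha hb
          exact Prod.ext hab (ha.1.2.trans hb.1.2.symm)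
        have hT'card : (T'.filter (· ≤ r)).card + Kr.card = (T1.filter (· ≤ r)).card := by
          rw [← hKcard, hT']
          rw [← Finset.card_union_of_disjoint]
          · congr 1
            ext x
            simp only [Finset.mem_union, Finset.mem_filter, Finset.mem_sdiff]
            constructor
            · rintro (h | h)
              · exact ⟨h.1.1, h.2⟩
              · exact ⟨hKT1 h.1, h.2⟩
            · rintro ⟨h, h'⟩
              by_cases hk : x ∈ K
              · exact Or.inr ⟨hk, h'⟩
              · exact Or.inl ⟨⟨h, hk⟩, h'⟩
          · rw [Finset.disjoint_left]
            intro x hx hx'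
            simp only [Finset.mem_filter, Finset.mem_sdiff] at hx hx'
            exact hx.1.2 hx'.1
        have hT1card : (T1.filter (· ≤ r)).card = (T.filter (fun t => g t ≤ r)).card := by
          rw [hT1, Finset.filter_image]
          apply Finset.card_image_of_injOn
          intro a ha b hb hab
          simp only [Finset.coe_filter, Set.mem_ofPred_eq] at ha hb
          exact ginj ha.1 hb.1 hab
        suffices hmain : L.length + (F ∪ Kr).card ≤ (T.filter (fun t => g t ≤ r)).card by
          omega
        by_cases hdrop : ∃ t ∈ T, t ≤ r ∧ r < g t
        · obtain ⟨t, ht, htr, hrg⟩ := hdrop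
          have hcnt : (T.filter (· ≤ g t)).card = (T.filter (fun t => g t ≤ r)).card + 1 := by
            have : T.filter (· ≤ g t) = insert t (T.filter (fun t => g t ≤ r)) := by
              ext u
              simp only [Finset.mem_filter, Finset.mem_insert]
              constructor
              · rintro ⟨hu, hug⟩
                rcases lt_trichotomy u t with h | h | h
                · right
                  have := g3 u t ht h
                  exact ⟨hu, by omega⟩
                · exact Or.inl h
                · have := g3 t u hu h
                  omega
              · rintro (h | ⟨hu, hug⟩)
                · rw [h]; exact ⟨ht, g1 t⟩
                · have := g1 u
                  exact ⟨hu, by omega⟩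
            rw [this, Finset.card_insert_of_notMem]
            simp only [Finset.mem_filter, not_and, not_le]
            intro _; exact hrg
          have hgX : g t ∈ X := by
            rcases g2 t with h | h
            · omega
            · exact h
          rcases (memX _).1 hgX with h | h
          · have := h8 (F ∪ Kr) hsub (g t) (fun f hf => (hr1 f hf).trans hrg.le)
              (L ++ [(g t, c)]) (by
                rw [List.pairwise_append]
                refine ⟨hL, by simp, ?_⟩
                intro a ha b hb
                rw [List.mem_singleton] at hb
                subst hb
                have h1 := hLx a ha
                have h2 := (Finset.mem_filter.1 h1.1).2
                exact ⟨by simp only; omega, h2⟩) (by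
                intro x hx
                rcases List.mem_append.1 hx with hx | hx
                · obtain ⟨a1, a2, a3⟩ := hLx' x hx
                  exact ⟨a1, a2.trans hrg.le, a3⟩
                · rw [List.mem_singleton] at hx
                  subst hx
                  refine ⟨h, le_refl _, ?_⟩
                  intro f hf hle
                  have h1 := hr1 f hf
                  have h2 := hle.1
                  simp only at h2
                  omega)
            rw [List.length_append, List.length_singleton] at this
            omega
          · have hnot : (g t, c) ∉ F ∪ Kr := by
              intro hmem
              have h1 := hr1 _ hmem
              simp only at h1
              omega
            have := h8 (insert (g t, c) (F ∪ Kr)) (by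
                intro f hf
                rcases Finset.mem_insert.1 hf with h' | h'
                · rw [h']; exact h
                · exact hsub h') (g t) (by
                intro f hf
                rcases Finset.mem_insert.1 hf with h' | h'
                · rw [h']
                · exact (hr1 f h').trans hrg.le) L hL (by
                intro x hx
                obtain ⟨a1, a2, a3⟩ := hLx' x hx
                refine ⟨a1, a2.trans hrg.le, ?_⟩
                intro f hf
                rcases Finset.mem_insert.1 hf with h' | h'
                · intro hle
                  rw [h'] at hle
                  have h1 := (Finset.mem_filter.1 (hLx x hx).1).2
                  have h2 := hle.2
                  simp only at h2
                  omega
                · exact a3 f h')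
            rw [Finset.card_insert_of_notMem hnot] at this
            omega
        · push Not at hdrop
          have := h8 (F ∪ Kr) hsub r hr1 L hL hLx'
          have heq : T.filter (· ≤ r) = T.filter (fun t => g t ≤ r) := by
            ext u
            simp only [Finset.mem_filter]
            constructor
            · rintro ⟨hu, h⟩
              exact ⟨hu, hdrop u hu h⟩
            · rintro ⟨hu, h⟩
              exact ⟨hu, (g1 u).trans h⟩
          rwa [heq] at this)
    have hT'mem : ∀ t ∈ T, g t ∉ K → g t ∈ T' := by
      intro t ht hk
      exact Finset.mem_sdiff.2 ⟨Finset.mem_image_of_mem g ht, hk⟩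
    refine ⟨fun t => if g t ∈ K then segN t (g t) c else segN t (g t) c ++ P (g t), ?_, ?_, ?_⟩
    · intro t ht
      by_cases hk : g t ∈ K
      · simp only [hk, if_true]
        refine ⟨segN_head, ⟨_, (memK _).1 hk, segN_last (g1 t)⟩, segN_chain, ?_⟩
        intro p hp
        exact ((mem_segN (g1 t) p).1 hp).2.2.ge
      · simp only [hk, if_false]
        obtain ⟨a1, ⟨e, he, a2⟩, a3, a4⟩ := hP1 _ (hT'mem t ht hk)
        refine ⟨by simp [List.head?_append, segN_head],
          ⟨e, (Finset.mem_filter.1 he).1, by simp [List.getLast?_append, a2]⟩, ?_, ?_⟩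
        · rw [List.isChain_append]
          refine ⟨segN_chain, a3, ?_⟩
          intro x hx y hy
          rw [segN_last (g1 t)] at hx
          rw [a1] at hy
          simp only [Option.mem_def, Option.some.injEq] at hx hy
          subst hx hy
          right; rfl
        · intro p hp
          rcases List.mem_append.1 hp with h | h
          · exact ((mem_segN (g1 t) p).1 h).2.2.ge
          · have := a4 p h
            omega
    · have key : ∀ t ∈ T, ∀ p, p ∈ (if g t ∈ K then segN t (g t) c else segN t (g t) c ++ P (g t)) →
          (t ≤ p.1 ∧ p.1 ≤ g t ∧ p.2 = c) ∨ (g t ∈ T' ∧ p ∈ P (g t) ∧ c < p.2) := by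
        intro t ht p hp
        by_cases hk : g t ∈ K
        · simp only [hk, if_true] at hp
          exact Or.inl ((mem_segN (g1 t) p).1 hp)
        · simp only [hk, if_false] at hp
          rcases List.mem_append.1 hp with h | h
          · exact Or.inl ((mem_segN (g1 t) p).1 h)
          · exact Or.inr ⟨hT'mem t ht hk, h, (hP1 _ (hT'mem t ht hk)).2.2.2 p h⟩
      intro t ht t' ht' hne p hp hp'
      rcases key t ht p hp with ⟨a1, a2, a3⟩ | ⟨a1, a2, a3⟩ <;>
      rcases key t' ht' p hp' with ⟨b1, b2, b3⟩ | ⟨b1, b2, b3⟩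
      · rcases lt_or_gt_of_ne hne with h | h
        · have := g3 t t' ht' h
          omega
        · have := g3 t' t ht h
          omega
      · omega
      · omega
      · exact hP2 _ a1 _ b1 (fun h => hne (ginj ht ht' h)) p a2 b2
    · intro s hs
      rcases eq_or_lt_of_le (h2 s hs).1 with h | h
      · obtain ⟨t, ht, hts, hsg⟩ := g5 s.1 ((memX _).2 (Or.inl (by rw [h]; exact hs)))
        refine ⟨t, ht, ?_⟩
        have hm : s ∈ segN t (g t) c := (mem_segN (g1 t) s).2 ⟨hts, hsg, h.symm⟩
        by_cases hk : g t ∈ K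
        · simp only [hk, if_true]; exact hm
        · simp only [hk, if_false]; exact List.mem_append_left _ hm
      · obtain ⟨u, hu, hsu⟩ := hP3 s (Finset.mem_filter.2 ⟨hs, h⟩)
        obtain ⟨hu1, hu2⟩ := Finset.mem_sdiff.1 hu
        obtain ⟨t, ht, rfl⟩ := Finset.mem_image.1 hu1
        refine ⟨t, ht, ?_⟩
        simp only [hu2, if_false]
        exact List.mem_append_right _ hsu

def IsFam {d : ℕ} (A E : Fin d → ℤ × ℤ) (P : Fin d → List (ℤ × ℤ)) : Prop :=
  ∃ σ : Equiv.Perm (Fin d), (∀ ℓ : Fin d, IsNEPathFrom (P ℓ) (A ℓ) (E (σ ℓ))) ∧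
    ∀ k l : Fin d, k ≠ l → ∀ p ∈ P k, p ∉ P l

lemma NEStep.lt {x y : ℤ × ℤ} (h : NEStep x y) : x < y := by
  rcases h with rfl | rfl
  · exact Prod.lt_iff.2 (Or.inl ⟨by simp, le_refl _⟩)
  · exact Prod.lt_iff.2 (Or.inr ⟨le_refl _, by simp⟩)

lemma path_pairwise {P : List (ℤ × ℤ)} {A E : ℤ × ℤ} (h : IsNEPathFrom P A E) :
    P.Pairwise (· < ·) :=
  List.isChain_iff_pairwise.1 (List.IsChain.imp (fun _ _ h => NEStep.lt h) h.2.2)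

lemma path_nodup {P : List (ℤ × ℤ)} {A E : ℤ × ℤ} (h : IsNEPathFrom P A E) : P.Nodup :=
  (path_pairwise h).imp (fun h => h.ne)

lemma path_ge {P : List (ℤ × ℤ)} {A E : ℤ × ℤ} (h : IsNEPathFrom P A E) {x : ℤ × ℤ}
    (hx : x ∈ P) : A ≤ x := by
  have hp := path_pairwise h
  obtain ⟨h1, -, -⟩ := h
  cases P with
  | nil => simp at h1
  | cons a l =>
    simp only [List.head?_cons, Option.some.injEq] at h1
    subst h1
    rcases List.mem_cons.1 hx with h | h
    · exact h.ge
    · exact ((List.pairwise_cons.1 hp).1 x h).le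

lemma path_le {P : List (ℤ × ℤ)} {A E : ℤ × ℤ} (h : IsNEPathFrom P A E) {x : ℤ × ℤ}
    (hx : x ∈ P) : x ≤ E := by
  have hp := path_pairwise h
  obtain ⟨-, h1, -⟩ := h
  rw [List.getLast?_eq_some_iff] at h1
  obtain ⟨l, rfl⟩ := h1
  rcases List.mem_append.1 hx with h | h
  · exact ((List.pairwise_append.1 hp).2.2 x h E (by simp)).le
  · rw [List.mem_singleton] at h; exact h.le

lemma path_start_mem {P : List (ℤ × ℤ)} {A E : ℤ × ℤ} (h : IsNEPathFrom P A E) : A ∈ P :=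
  List.mem_of_head? h.1

lemma path_end_mem {P : List (ℤ × ℤ)} {A E : ℤ × ℤ} (h : IsNEPathFrom P A E) : E ∈ P :=
  List.mem_of_getLast? h.2.1

lemma path_comparable {P : List (ℤ × ℤ)} {A E : ℤ × ℤ} (h : IsNEPathFrom P A E) {x y : ℤ × ℤ}
    (hx : x ∈ P) (hy : y ∈ P) : x ≤ y ∨ y ≤ x := by
  obtain ⟨j, hj, rfl⟩ := List.getElem_of_mem hx
  obtain ⟨k, hk, rfl⟩ := List.getElem_of_mem hy
  have hp := List.pairwise_iff_getElem.1 (path_pairwise h)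
  rcases lt_trichotomy j k with h | h | h
  · exact Or.inl (hp j k hj hk h).le
  · subst h; exact Or.inl le_rfl
  · exact Or.inr (hp k j hk hj h).le

lemma path_length {P : List (ℤ × ℤ)} : ∀ {A E : ℤ × ℤ}, IsNEPathFrom P A E →
    (P.length : ℤ) = E.1 + E.2 - (A.1 + A.2) + 1 := by
  induction P with
  | nil => intro A E h; simp [IsNEPathFrom] at h
  | cons a l ih =>
    intro A E h
    obtain ⟨h1, h2, h3⟩ := h
    simp only [List.head?_cons, Option.some.injEq] at h1
    subst h1
    cases l with
    | nil =>
      simp at h2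
      subst h2
      simp
    | cons b l =>
      have h3' := List.isChain_cons_cons.1 h3
      have := @ih b E ⟨rfl, by simpa using h2, h3'.2⟩
      rw [List.length_cons]
      push_cast at this ⊢
      rw [this]
      rcases h3'.1 with h | h <;> rw [h] <;> ring

def SuccP {d : ℕ} (P : Fin d → List (ℤ × ℤ)) (x y : ℤ × ℤ) : Prop :=
  ∃ (ℓ : Fin d) (k : ℕ), (P ℓ)[k]? = some x ∧ (P ℓ)[k+1]? = some y

section fam
variable {d : ℕ} {A E : Fin d → ℤ × ℤ} {P Q : Fin d → List (ℤ × ℤ)}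

lemma fam_index (hP : IsFam A E P) {ℓ ℓ' : Fin d} {k k' : ℕ} {x : ℤ × ℤ}
    (h : (P ℓ)[k]? = some x) (h' : (P ℓ')[k']? = some x) : ℓ = ℓ' ∧ k = k' := by
  obtain ⟨σ, h1, h2⟩ := hP
  have e : ℓ = ℓ' := by
    by_contra hne
    exact h2 ℓ ℓ' hne x (List.mem_of_getElem? h) (List.mem_of_getElem? h')
  subst e
  refine ⟨rfl, ?_⟩
  obtain ⟨hk, hk2⟩ := List.getElem?_eq_some_iff.1 h
  exact (List.getElem?_inj hk (path_nodup (h1 ℓ))).1 (h.trans h'.symm)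

lemma succ_step (hP : IsFam A E P) {x y : ℤ × ℤ} (h : SuccP P x y) : NEStep x y := by
  obtain ⟨σ, h1, h2⟩ := hP
  obtain ⟨ℓ, k, hx, hy⟩ := h
  obtain ⟨hk, rfl⟩ := List.getElem?_eq_some_iff.1 hx
  obtain ⟨hk', rfl⟩ := List.getElem?_eq_some_iff.1 hy
  exact List.isChain_iff_getElem.1 (h1 ℓ).2.2 k hk'

lemma succ_inj (hP : IsFam A E P) {x x' y : ℤ × ℤ} (h : SuccP P x y) (h' : SuccP P x' y) :
    x = x' := by
  obtain ⟨ℓ, k, hx, hy⟩ := h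
  obtain ⟨ℓ', k', hx', hy'⟩ := h'
  obtain ⟨rfl, hk⟩ := fam_index hP hy hy'
  have : k = k' := by omega
  subst this
  rw [hx] at hx'
  exact Option.some.inj hx'

lemma succ_not_end (hP : IsFam A E P) {x y : ℤ × ℤ} (h : SuccP P x y) (q : Fin d) : x ≠ E q := by
  rintro rfl
  obtain ⟨ℓ, k, hx, hy⟩ := h
  obtain ⟨σ, h1, h2⟩ := id hP
  have hl := (h1 (σ.symm q)).2.1
  rw [Equiv.apply_symm_apply, List.getLast?_eq_getElem?] at hl
  obtain ⟨rfl, hk⟩ := fam_index hP hx hl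
  obtain ⟨hk', -⟩ := List.getElem?_eq_some_iff.1 hy
  omega

lemma succ_not_start (hP : IsFam A E P) {x y : ℤ × ℤ} (h : SuccP P x y) (q : Fin d) :
    y ≠ A q := by
  rintro rfl
  obtain ⟨ℓ, k, hx, hy⟩ := h
  obtain ⟨σ, h1, h2⟩ := id hP
  have hl := (h1 q).1
  rw [List.head?_eq_getElem?] at hl
  obtain ⟨rfl, hk⟩ := fam_index hP hy hl
  omega

lemma exists_succ (hP : IsFam A E P) {ℓ : Fin d} {x : ℤ × ℤ} (hx : x ∈ P ℓ)
    (hE : ∀ q, x ≠ E q) : ∃ y, SuccP P x y := by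
  obtain ⟨k, hk, rfl⟩ := List.getElem_of_mem hx
  obtain ⟨σ, h1, h2⟩ := id hP
  by_cases h : k + 1 < (P ℓ).length
  · exact ⟨(P ℓ)[k+1], ℓ, k, List.getElem?_eq_getElem hk, List.getElem?_eq_getElem h⟩
  · exfalso
    have hl := (h1 ℓ).2.1
    rw [List.getLast?_eq_getElem?] at hl
    have : (P ℓ).length - 1 = k := by omega
    rw [this, List.getElem?_eq_getElem hk] at hl
    exact hE _ (Option.some.inj hl)

lemma exists_pred_s11 (hP : IsFam A E P) {ℓ : Fin d} {x : ℤ × ℤ} (hx : x ∈ P ℓ)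
    (hA : ∀ q, x ≠ A q) : ∃ y, SuccP P y x := by
  obtain ⟨k, hk, rfl⟩ := List.getElem_of_mem hx
  obtain ⟨σ, h1, h2⟩ := id hP
  cases k with
  | zero =>
    exfalso
    have hl := (h1 ℓ).1
    rw [List.head?_eq_getElem?, List.getElem?_eq_getElem hk] at hl
    exact hA _ (Option.some.inj hl)
  | succ k =>
    exact ⟨(P ℓ)[k], ℓ, k, List.getElem?_eq_getElem (by omega), List.getElem?_eq_getElem hk⟩

lemma succ_mem_left {x y : ℤ × ℤ} (h : SuccP P x y) : ∃ ℓ, x ∈ P ℓ := by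
  obtain ⟨ℓ, k, hx, hy⟩ := h
  exact ⟨ℓ, List.mem_of_getElem? hx⟩

lemma succ_mem_right {x y : ℤ × ℤ} (h : SuccP P x y) : ∃ ℓ, y ∈ P ℓ := by
  obtain ⟨ℓ, k, hx, hy⟩ := h
  exact ⟨ℓ, List.mem_of_getElem? hy⟩

lemma succ_east (hP : IsFam A E P) (hQ : IsFam A E Q)
    (hU : ∀ x, (∃ ℓ, x ∈ P ℓ) ↔ (∃ ℓ, x ∈ Q ℓ)) (hi : ℤ) (hhi : ∀ ℓ, ∀ x ∈ P ℓ, x.1 ≤ hi)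
    (m : ℕ) : ∀ (a b : ℤ), hi - a < m → SuccP P (a, b) (a + 1, b) →
      SuccP Q (a, b) (a + 1, b) := by
  induction m with
  | zero =>
    intro a b hab h
    obtain ⟨ℓ, hl⟩ := succ_mem_left h
    have := hhi ℓ _ hl
    simp only [Nat.cast_zero] at *
    omega
  | succ m ih =>
    intro a b hab h
    obtain ⟨ℓ, hl⟩ := (hU _).1 (succ_mem_right h)
    obtain ⟨x', hx'⟩ := exists_pred_s11 hQ hl (succ_not_start hP h)
    obtain ⟨a', b'⟩ := x'
    rcases succ_step hQ hx' with h1 | h1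
    · simp only [Prod.mk.injEq] at h1
      obtain ⟨h1, h2⟩ := h1
      have : a = a' := by omega
      subst this h2
      exact hx'
    · exfalso
      simp only [Prod.mk.injEq] at h1
      obtain ⟨rfl, rfl⟩ := h1
      obtain ⟨ℓ', hl'⟩ := (hU _).2 (succ_mem_left hx')
      obtain ⟨y, hy⟩ := exists_succ hP hl' (succ_not_end hQ hx')
      rcases succ_step hP hy with h2 | h2
      · subst h2
        have h3 := ih _ _ (by push_cast at hab; omega) hy
        obtain ⟨ℓ1, k1, u1, v1⟩ := h3
        obtain ⟨ℓ2, k2, u2, v2⟩ := hx'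
        obtain ⟨rfl, rfl⟩ := fam_index hQ u1 u2
        rw [v1] at v2
        simp at v2
      · subst h2
        have := succ_inj hP h hy
        simp at this

lemma succ_north (hP : IsFam A E P) (hQ : IsFam A E Q)
    (hU : ∀ x, (∃ ℓ, x ∈ P ℓ) ↔ (∃ ℓ, x ∈ Q ℓ)) (lo : ℤ) (hlo : ∀ ℓ, ∀ x ∈ P ℓ, lo ≤ x.1)
    (m : ℕ) : ∀ (a b : ℤ), a - lo < m → SuccP P (a, b) (a, b + 1) →
      SuccP Q (a, b) (a, b + 1) := by
  induction m with
  | zero =>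
    intro a b hab h
    obtain ⟨ℓ, hl⟩ := succ_mem_left h
    have := hlo ℓ _ hl
    simp only [Nat.cast_zero] at *
    omega
  | succ m ih =>
    intro a b hab h
    obtain ⟨ℓ, hl⟩ := (hU _).1 (succ_mem_right h)
    obtain ⟨x', hx'⟩ := exists_pred_s11 hQ hl (succ_not_start hP h)
    obtain ⟨a', b'⟩ := x'
    rcases succ_step hQ hx' with h1 | h1
    · exfalso
      simp only [Prod.mk.injEq] at h1
      obtain ⟨rfl, rfl⟩ := h1
      obtain ⟨ℓ', hl'⟩ := (hU _).2 (succ_mem_left hx')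
      obtain ⟨y, hy⟩ := exists_succ hP hl' (succ_not_end hQ hx')
      rcases succ_step hP hy with h2 | h2
      · subst h2
        have := succ_inj hP h hy
        simp at this
      · subst h2
        have h3 := ih _ _ (by push_cast at hab; omega) hy
        obtain ⟨ℓ1, k1, u1, v1⟩ := h3
        obtain ⟨ℓ2, k2, u2, v2⟩ := hx'
        obtain ⟨rfl, rfl⟩ := fam_index hQ u1 u2
        rw [v1] at v2
        simp at v2
    · simp only [Prod.mk.injEq] at h1
      obtain ⟨h1, h2⟩ := h1
      have : b = b' := by omega
      subst this h1
      exact hx'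

lemma succ_imp (hP : IsFam A E P) (hQ : IsFam A E Q)
    (hU : ∀ x, (∃ ℓ, x ∈ P ℓ) ↔ (∃ ℓ, x ∈ Q ℓ)) (lo hi : ℤ)
    (hb : ∀ ℓ, ∀ x ∈ P ℓ, lo ≤ x.1 ∧ x.1 ≤ hi) {x y : ℤ × ℤ} (h : SuccP P x y) :
    SuccP Q x y := by
  obtain ⟨a, b⟩ := x
  rcases succ_step hP h with h1 | h1
  · subst h1
    exact succ_east hP hQ hU hi (fun ℓ x hx => (hb ℓ x hx).2) ((hi - a).toNat + 1) a b
      (by push_cast; omega) h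
  · subst h1
    exact succ_north hP hQ hU lo (fun ℓ x hx => (hb ℓ x hx).1) ((a - lo).toNat + 1) a b
      (by push_cast; omega) h

lemma fam_unique (hP : IsFam A E P) (hQ : IsFam A E Q)
    (hU : ∀ x, (∃ ℓ, x ∈ P ℓ) ↔ (∃ ℓ, x ∈ Q ℓ)) (lo hi : ℤ)
    (hb : ∀ ℓ, ∀ x ∈ P ℓ, lo ≤ x.1 ∧ x.1 ≤ hi) : P = Q := by
  have hb' : ∀ ℓ, ∀ x ∈ Q ℓ, lo ≤ x.1 ∧ x.1 ≤ hi := by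
    intro ℓ x hx
    obtain ⟨ℓ', h⟩ := (hU x).2 ⟨ℓ, hx⟩
    exact hb ℓ' x h
  have hsucc : ∀ x y, SuccP P x y ↔ SuccP Q x y := fun x y =>
    ⟨succ_imp hP hQ hU lo hi hb, succ_imp hQ hP (fun x => (hU x).symm) lo hi hb'⟩
  funext ℓ
  apply List.ext_getElem?
  intro k
  induction k with
  | zero =>
    obtain ⟨σ, h1, -⟩ := hP
    obtain ⟨σ', h1', -⟩ := hQ
    rw [← List.head?_eq_getElem?, ← List.head?_eq_getElem?, (h1 ℓ).1, (h1' ℓ).1]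
  | succ k ih =>
    apply Option.ext
    intro y
    have aux : ∀ {P Q : Fin d → List (ℤ × ℤ)}, IsFam A E Q → (∀ x y, SuccP P x y → SuccP Q x y) →
        (P ℓ)[k]? = (Q ℓ)[k]? → (P ℓ)[k+1]? = some y → (Q ℓ)[k+1]? = some y := by
      intro P Q hQ hs hk hy
      obtain ⟨hlt, -⟩ := List.getElem?_eq_some_iff.1 hy
      have hx : (P ℓ)[k]? = some (P ℓ)[k] := List.getElem?_eq_getElem (by omega)
      obtain ⟨ℓ', k', u, v⟩ := hs _ _ ⟨ℓ, k, hx, hy⟩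
      obtain ⟨rfl, rfl⟩ := fam_index hQ (hk ▸ hx) u
      exact v
    exact ⟨aux hQ (fun x y => (hsucc x y).1) ih, aux hP (fun x y => (hsucc x y).2) ih.symm⟩

lemma fam_card_s11 (hP : IsFam A E P) :
    (((Finset.univ.biUnion fun ℓ => (P ℓ).toFinset).card : ℕ) : ℤ) =
      ∑ q, ((E q).1 + (E q).2) - ∑ ℓ, ((A ℓ).1 + (A ℓ).2) + d := by
  obtain ⟨σ, h1, h2⟩ := hP
  rw [Finset.card_biUnion]
  · push_cast
    have : ∀ ℓ : Fin d, (((P ℓ).toFinset.card : ℕ) : ℤ) =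
        ((E (σ ℓ)).1 + (E (σ ℓ)).2) - ((A ℓ).1 + (A ℓ).2) + 1 := by
      intro ℓ
      rw [List.toFinset_card_of_nodup (path_nodup (h1 ℓ)), path_length (h1 ℓ)]
    rw [Finset.sum_congr rfl (fun ℓ _ => this ℓ), Finset.sum_add_distrib, Finset.sum_sub_distrib,
      Equiv.sum_comp σ (fun q => (E q).1 + (E q).2)]
    simp
  · intro x _ y _ hxy
    rw [Function.onFun, Finset.disjoint_left]
    intro p hp hp'
    exact h2 x y hxy p (List.mem_toFinset.1 hp) (List.mem_toFinset.1 hp')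

lemma fam_unique_of_subset (hP : IsFam A E P) (hQ : IsFam A E Q)
    (hU : ∀ x, (∃ ℓ, x ∈ P ℓ) → (∃ ℓ, x ∈ Q ℓ)) (lo hi : ℤ)
    (hb : ∀ ℓ, ∀ x ∈ P ℓ, lo ≤ x.1 ∧ x.1 ≤ hi) : P = Q := by
  have hsub : (Finset.univ.biUnion fun ℓ => (P ℓ).toFinset) ⊆
      (Finset.univ.biUnion fun ℓ => (Q ℓ).toFinset) := by
    intro x hx
    simp only [Finset.mem_biUnion, Finset.mem_univ, true_and, List.mem_toFinset] at hx ⊢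
    exact hU x hx
  have heq := Finset.eq_of_subset_of_card_le hsub (by
    have h1 := fam_card_s11 hP
    have h2 := fam_card_s11 hQ
    omega)
  refine fam_unique hP hQ (fun x => ?_) lo hi hb
  have := Finset.ext_iff.1 heq x
  simpa using this

end fam

def ValidS (d : ℕ) (α β : ℕ → ℕ) (S : Finset (ℕ × ℕ)) : Prop :=
  ∀ q, 1 ≤ q → q ≤ d → ∀ L : List (ℕ × ℕ), L.Pairwise SErel →
    (∀ x ∈ L, x ∈ S ∧ x.1 ≤ α q ∧ β q < x.2) → L.length + q ≤ α q

structure GoodAB (n d : ℕ) (α β : ℕ → ℕ) : Prop where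
  le_a : ∀ q, 1 ≤ q → q ≤ d → q ≤ α q
  a_le : ∀ q, 1 ≤ q → q ≤ d → α q ≤ d
  le_b : ∀ q, 1 ≤ q → q ≤ d → d ≤ β q
  b_le : ∀ q, 1 ≤ q → q ≤ d → β q ≤ n
  a_mono : ∀ q q', 1 ≤ q → q ≤ q' → q' ≤ d → α q ≤ α q'
  b_mono : ∀ q q', 1 ≤ q → q ≤ q' → q' ≤ d → β q ≤ β q'
  strict : ∀ q q', 1 ≤ q → q < q' → q' ≤ d → α q + β q < α q' + β q'

def castP (s : ℕ × ℕ) : ℤ × ℤ := ((s.1 : ℤ), (s.2 : ℤ))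

lemma castP_inj : Function.Injective castP := by
  rintro ⟨a, b⟩ ⟨a', b'⟩ h
  simpa [castP] using h

lemma castP_le {x y : ℕ × ℕ} : castP x ≤ castP y ↔ x ≤ y := by
  simp [castP, Prod.le_def]

def startP (d : ℕ) (ℓ : Fin d) : ℤ × ℤ := castP (d - ℓ, d)

def endP (d : ℕ) (α β : ℕ → ℕ) (q : Fin d) : ℤ × ℤ := castP (α (q + 1), β (q + 1))

lemma rows_nodup {L : List (ℕ × ℕ)} (hL : L.Pairwise SErel) : (L.map Prod.fst).Nodup := by
  rw [List.Nodup, List.pairwise_map]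
  exact hL.imp (fun h => h.1.ne)

lemma len_le {L : List (ℕ × ℕ)} (hL : L.Pairwise SErel) (s : Finset ℕ) (h : ∀ x ∈ L, x.1 ∈ s) :
    L.length ≤ s.card := by
  rw [← List.length_map Prod.fst, ← List.toFinset_card_of_nodup (rows_nodup hL)]
  apply Finset.card_le_card
  intro a ha
  obtain ⟨x, hx, rfl⟩ := List.mem_map.1 (List.mem_toFinset.1 ha)
  exact h x hx

lemma exists_cover {n d : ℕ} {α β : ℕ → ℕ} (hg : GoodAB n d α β) (S : Finset (ℕ × ℕ))
    (hS : ∀ s ∈ S, 1 ≤ s.1 ∧ s.1 ≤ d ∧ d + 1 ≤ s.2 ∧ s.2 ≤ n) (hV : ValidS d α β S) :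
    ∃ P : Fin d → List (ℤ × ℤ), IsFam (startP d) (endP d α β) P ∧
      ∀ s ∈ S, ∃ ℓ, castP s ∈ P ℓ := by
  set Ends : Finset (ℕ × ℕ) := (Finset.Icc 1 d).image (fun q => (α q, β q)) with hEnds
  have memE : ∀ e, e ∈ Ends ↔ ∃ q, 1 ≤ q ∧ q ≤ d ∧ e = (α q, β q) := by
    intro e
    simp only [hEnds, Finset.mem_image, Finset.mem_Icc]
    constructor
    · rintro ⟨q, h, rfl⟩; exact ⟨q, h.1, h.2, rfl⟩
    · rintro ⟨q, h, h', rfl⟩; exact ⟨q, ⟨h, h'⟩, rfl⟩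
  obtain ⟨P, hP1, hP2, hP3⟩ := ex_paths d (n + 1) d (Finset.Icc 1 d) Ends S (by
      intro e he
      obtain ⟨q, h1, h2, rfl⟩ := (memE e).1 he
      have := hg.le_b q h1 h2
      have := hg.b_le q h1 h2
      simp only
      omega) (by
      intro s hs
      have := hS s hs
      omega) (by
      intro e he
      obtain ⟨q, h1, h2, rfl⟩ := (memE e).1 he
      exact hg.a_le q h1 h2) (by
      intro e he e' he'
      obtain ⟨q, h1, h2, rfl⟩ := (memE e).1 he
      obtain ⟨q', h1', h2', rfl⟩ := (memE e').1 he'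
      rcases le_total q q' with h | h
      · exact Or.inl ⟨hg.a_mono q q' h1 h h2', hg.b_mono q q' h1 h h2'⟩
      · exact Or.inr ⟨hg.a_mono q' q h1' h h2, hg.b_mono q' q h1' h h2⟩) (by
      intro t ht
      exact (Finset.mem_Icc.1 ht).2) (by
      intro e he r her hr
      rw [Finset.mem_Icc]
      omega) (by
      rw [hEnds, Finset.card_image_of_injOn]
      intro q hq q' hq' h
      simp only [Finset.coe_Icc, Set.mem_Icc] at hq hq'
      simp only [Prod.mk.injEq] at h
      rcases lt_trichotomy q q' with h' | h' | h'
      · have := hg.strict q q' hq.1 h' hq'.2; omega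
      · exact h'
      · have := hg.strict q' q hq'.1 h' hq.2; omega) (by
      intro F hF r hFr L hL hLx
      set R := (Finset.Icc 1 d).filter (· ≤ r) with hR
      have hrow : ∀ x ∈ L, x.1 ∈ R := by
        intro x hx
        have h1 := hLx x hx
        have h2 := hS x h1.1
        simp only [hR, Finset.mem_filter, Finset.mem_Icc]
        omega
      set Qs := (Finset.Icc 1 d).filter (fun q => (α q, β q) ∈ F) with hQs
      have hFQ : F.card ≤ Qs.card := by
        have : F ⊆ Qs.image (fun q => (α q, β q)) := by
          intro f hf
          obtain ⟨q, h1, h2, rfl⟩ := (memE f).1 (hF hf)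
          rw [Finset.mem_image]
          exact ⟨q, by simp [hQs, h1, h2, hf], rfl⟩
        exact (Finset.card_le_card this).trans Finset.card_image_le
      rcases Finset.eq_empty_or_nonempty Qs with hemp | hne
      · have := len_le hL R hrow
        rw [hemp, Finset.card_empty] at hFQ
        omega
      · set q := Qs.max' hne with hq
        have hqm : q ∈ Qs := Finset.max'_mem _ _
        have hqm' := hqm
        simp only [hQs, Finset.mem_filter, Finset.mem_Icc] at hqm'
        obtain ⟨⟨q1, q2⟩, q3⟩ := hqm'
        have hQq : Qs.card ≤ q := by
          have : Qs ⊆ Finset.Icc 1 q := by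
            intro x hx
            have h1 := Finset.le_max' Qs x hx
            simp only [hQs, Finset.mem_filter, Finset.mem_Icc] at hx
            rw [Finset.mem_Icc]
            exact ⟨hx.1.1, h1⟩
          have := Finset.card_le_card this
          simpa using this
        have hqr : α q ≤ r := hFr _ q3
        have e1 := hV q q1 q2 (L.filter (fun x => decide (x.1 ≤ α q))) (hL.filter _) (by
          intro x hx
          rw [List.mem_filter, decide_eq_true_iff] at hx
          have h1 := hLx x hx.1
          refine ⟨h1.1, hx.2, ?_⟩
          by_contra hcon
          exact h1.2.2 _ q3 ⟨hx.2, not_lt.1 hcon⟩)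
        have e2 := len_le (hL.filter (fun x => !decide (x.1 ≤ α q))) (R.filter (fun x => ¬ x ≤ α q)) (by
          intro x hx
          rw [List.mem_filter] at hx
          rw [Finset.mem_filter]
          exact ⟨hrow x hx.1, by simpa using hx.2⟩)
        have e3 : L.length = (L.filter (fun x => decide (x.1 ≤ α q))).length +
            (L.filter (fun x => !decide (x.1 ≤ α q))).length := by
          exact List.length_eq_length_filter_add _
        have e4 := Finset.card_filter_add_card_filter_not (s := R) (fun x => x ≤ α q)
        have e5 : R.filter (fun x => x ≤ α q) = Finset.Icc 1 (α q) := by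
          ext x
          have := hg.a_le q q1 q2
          simp only [hR, Finset.mem_filter, Finset.mem_Icc]
          omega
        rw [e5, Nat.card_Icc] at e4
        omega)
  have hmem : ∀ ℓ : Fin d, d - (ℓ : ℕ) ∈ Finset.Icc 1 d := by
    intro ℓ
    have := ℓ.2
    rw [Finset.mem_Icc]
    omega
  have hend : ∀ ℓ : Fin d, ∃ q : Fin d,
      (P (d - (ℓ : ℕ))).getLast? = some (α (q + 1), β (q + 1)) := by
    intro ℓ
    obtain ⟨-, ⟨e, he, h⟩, -⟩ := hP1 _ (hmem ℓ)
    obtain ⟨q, h1, h2, rfl⟩ := (memE e).1 he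
    refine ⟨⟨q - 1, by omega⟩, ?_⟩
    simp only
    rw [Nat.sub_add_cancel h1]
    exact h
  choose f hf using hend
  have hne : ∀ k l : Fin d, k ≠ l → d - (k : ℕ) ≠ d - (l : ℕ) := by
    intro k l h h'
    apply h
    apply Fin.ext
    have := k.2
    have := l.2
    omega
  have finj : Function.Injective f := by
    intro k l h
    by_contra hkl
    have h1 := hf k
    have h2 := hf l
    rw [← h] at h2
    exact hP2 _ (hmem k) _ (hmem l) (hne k l hkl) _ (List.mem_of_getLast? h1)
      (List.mem_of_getLast? h2)
  refine ⟨fun ℓ => (P (d - (ℓ : ℕ))).map castP,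
    ⟨Equiv.ofBijective f (Finite.injective_iff_bijective.1 finj), ?_, ?_⟩, ?_⟩
  · intro ℓ
    obtain ⟨a1, -, a3, -⟩ := hP1 _ (hmem ℓ)
    refine ⟨by rw [List.head?_map, a1]; rfl, by rw [List.getLast?_map, hf]; rfl, ?_⟩
    show List.IsChain NEStep _
    rw [List.isChain_map]
    refine a3.imp ?_
    rintro ⟨a, b⟩ y (rfl | rfl)
    · left; simp [castP]
    · right; simp [castP]
  · intro k l hkl p hp hp'
    obtain ⟨x, hx, rfl⟩ := List.mem_map.1 hp
    obtain ⟨y, hy, hxy⟩ := List.mem_map.1 hp'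
    have := castP_inj hxy
    subst this
    exact hP2 _ (hmem k) _ (hmem l) (hne k l hkl) _ hx hy
  · intro s hs
    obtain ⟨t, ht, hst⟩ := hP3 s hs
    rw [Finset.mem_Icc] at ht
    refine ⟨⟨d - t, by omega⟩, ?_⟩
    simp only
    have : d - (d - t) = t := by omega
    rw [this]
    exact List.mem_map_of_mem hst

open Classical in
noncomputable def PhiS (n d : ℕ) (P : Fin d → List (ℤ × ℤ)) : Finset (ℕ × ℕ) :=
  (Finset.Icc 1 d ×ˢ Finset.Icc (d + 1) n).filter (fun s => ∃ ℓ, castP s ∈ P ℓ)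

lemma mem_PhiS {n d : ℕ} {P : Fin d → List (ℤ × ℤ)} {s : ℕ × ℕ} : s ∈ PhiS n d P ↔
    (1 ≤ s.1 ∧ s.1 ≤ d ∧ d + 1 ≤ s.2 ∧ s.2 ≤ n) ∧ ∃ ℓ, castP s ∈ P ℓ := by
  simp only [PhiS, Finset.mem_filter, Finset.mem_product, Finset.mem_Icc]
  tauto

lemma PhiS_valid {n d : ℕ} {α β : ℕ → ℕ} (hg : GoodAB n d α β) {P : Fin d → List (ℤ × ℤ)}
    (hP : IsFam (startP d) (endP d α β) P) : ValidS d α β (PhiS n d P) := by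
  intro q q1 q2 L hL hLx
  obtain ⟨σ, h1, h2⟩ := hP
  have hex : ∀ x : ℕ × ℕ, ∃ ℓ : Fin d, x ∈ L → castP x ∈ P ℓ := by
    intro x
    by_cases hx : x ∈ L
    · obtain ⟨ℓ, h⟩ := (mem_PhiS.1 (hLx x hx).1).2
      exact ⟨ℓ, fun _ => h⟩
    · exact ⟨⟨0, by omega⟩, fun h => absurd h hx⟩
  choose f hf using hex
  have hnd : (L.map f).Nodup := by
    rw [List.Nodup, List.pairwise_map]
    refine hL.imp_of_mem ?_
    intro a b ha hb hab h
    have ha' := hf a ha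
    have hb' := hf b hb
    rw [← h] at hb'
    have := hab.1
    have := hab.2
    rcases path_comparable (h1 _) ha' hb' with hle | hle
    · have := (castP_le.1 hle).2; omega
    · have := (castP_le.1 hle).1; omega
  set M1 := (L.map f).toFinset with hM1
  have c1 : M1.card = L.length := by
    rw [hM1, List.toFinset_card_of_nodup hnd, List.length_map]
  set M2 := (Finset.univ.filter (fun x : Fin d => (x : ℕ) < q)).image σ.symm with hM2
  have c2 : M2.card = q := by
    rw [hM2, Finset.card_image_of_injective _ σ.symm.injective, Fin.card_filter_val_lt]
    omega
  have m2 : ∀ ℓ ∈ M2, endP d α β (σ ℓ) ≤ castP (α q, β q) := by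
    intro ℓ hl
    obtain ⟨x, hx, rfl⟩ := Finset.mem_image.1 hl
    rw [Finset.mem_filter] at hx
    rw [Equiv.apply_symm_apply, endP, castP_le]
    exact ⟨hg.a_mono _ _ (by omega) (by omega) q2, hg.b_mono _ _ (by omega) (by omega) q2⟩
  have hdisj : Disjoint M1 M2 := by
    rw [Finset.disjoint_left]
    intro ℓ hl hl'
    obtain ⟨x, hx, rfl⟩ := List.mem_map.1 (List.mem_toFinset.1 hl)
    have h3 := (path_le (h1 _) (hf x hx)).trans (m2 _ hl')
    have h4 := (castP_le.1 h3).2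
    have h5 := (hLx x hx).2.2
    simp only at h4
    omega
  have hM3 : ∀ ℓ ∈ M1 ∪ M2, d - (ℓ : ℕ) ≤ α q := by
    intro ℓ hl
    rcases Finset.mem_union.1 hl with h | h
    · obtain ⟨x, hx, rfl⟩ := List.mem_map.1 (List.mem_toFinset.1 h)
      have h3 := (castP_le.1 (path_ge (h1 _) (hf x hx))).1
      exact h3.trans (hLx x hx).2.1
    · have h3 := (path_ge (h1 ℓ) (path_end_mem (h1 ℓ))).trans (m2 _ h)
      exact (castP_le.1 h3).1
  have hle : (M1 ∪ M2).card ≤ (Finset.Icc 1 (α q)).card := by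
    apply Finset.card_le_card_of_injOn (fun ℓ : Fin d => d - (ℓ : ℕ))
    · intro ℓ hl
      have := hM3 ℓ hl
      have := ℓ.2
      simp only [Finset.coe_Icc, Set.mem_Icc]
      omega
    · intro k _ l _ h
      apply Fin.ext
      have := k.2
      have := l.2
      simp only at h
      omega
  rw [Finset.card_union_of_disjoint hdisj, Nat.card_Icc] at hle
  omega

lemma PhiS_inj {n d : ℕ} {α β : ℕ → ℕ} (hg : GoodAB n d α β) {P Q : Fin d → List (ℤ × ℤ)}
    (hP : IsFam (startP d) (endP d α β) P) (hQ : IsFam (startP d) (endP d α β) Q)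
    (hsub : PhiS n d P ⊆ PhiS n d Q) : P = Q := by
  have hb : ∀ ℓ, ∀ x ∈ P ℓ, (1 ≤ x.1 ∧ x.1 ≤ (d : ℤ)) ∧ (d : ℤ) ≤ x.2 ∧ x.2 ≤ (n : ℤ) := by
    intro ℓ x hx
    obtain ⟨σ, h1, h2⟩ := hP
    have e1 := path_ge (h1 ℓ) hx
    have e2 := path_le (h1 ℓ) hx
    have e3 := hg.a_le ((σ ℓ : ℕ) + 1) (by omega) (by omega)
    have e4 := hg.b_le ((σ ℓ : ℕ) + 1) (by omega) (by omega)
    obtain ⟨e11, e12⟩ := e1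
    obtain ⟨e21, e22⟩ := e2
    simp only [startP, endP, castP] at e11 e12 e21 e22
    have := ℓ.2
    omega
  refine fam_unique_of_subset hP hQ ?_ 1 d (fun ℓ x hx => (hb ℓ x hx).1)
  rintro x ⟨ℓ, hx⟩
  obtain ⟨⟨b1, b2⟩, b3, b4⟩ := hb ℓ x hx
  have hcast : castP (x.1.toNat, x.2.toNat) = x := by
    apply Prod.ext <;> simp only [castP] <;> omega
  rcases eq_or_lt_of_le b3 with h | h
  · obtain ⟨σ, h1, h2⟩ := hQ
    refine ⟨⟨d - x.1.toNat, by omega⟩, ?_⟩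
    have h3 := path_start_mem (h1 ⟨d - x.1.toNat, by omega⟩)
    convert h3 using 1
    apply Prod.ext <;> simp only [startP, castP] <;> omega
  · have h3 : (x.1.toNat, x.2.toNat) ∈ PhiS n d P := by
      rw [mem_PhiS, hcast]
      refine ⟨?_, ℓ, hx⟩
      simp only
      omega
    have h4 := (mem_PhiS.1 (hsub h3)).2
    rwa [hcast] at h4

lemma ValidS.mono {d : ℕ} {α β : ℕ → ℕ} {S S' : Finset (ℕ × ℕ)} (h : ValidS d α β S')
    (hs : S ⊆ S') : ValidS d α β S := by
  intro q q1 q2 L hL hLx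
  exact h q q1 q2 L hL (fun x hx => ⟨hs (hLx x hx).1, (hLx x hx).2⟩)

lemma core_count {n d : ℕ} {α β : ℕ → ℕ} (hg : GoodAB n d α β) :
    Set.ncard {S : Finset (ℕ × ℕ) |
        (∀ s ∈ S, 1 ≤ s.1 ∧ s.1 ≤ d ∧ d + 1 ≤ s.2 ∧ s.2 ≤ n) ∧
        ValidS d α β S ∧
        ∀ s : ℕ × ℕ, s ∉ S → (1 ≤ s.1 ∧ s.1 ≤ d ∧ d + 1 ≤ s.2 ∧ s.2 ≤ n) →
          ¬ ValidS d α β (insert s S)}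
    = Set.ncard {P : Fin d → List (ℤ × ℤ) | IsFam (startP d) (endP d α β) P} := by
  have hinj : Set.InjOn (PhiS n d) {P | IsFam (startP d) (endP d α β) P} := by
    intro P hP Q hQ h
    exact PhiS_inj hg hP hQ h.le
  rw [← Set.InjOn.ncard_image hinj]
  congr 1
  ext S
  simp only [Set.mem_ofPred_eq, Set.mem_image]
  constructor
  · rintro ⟨h1, h2, h3⟩
    obtain ⟨P, hP, hc⟩ := exists_cover hg S h1 h2
    refine ⟨P, hP, ?_⟩
    have hsub : S ⊆ PhiS n d P := fun s hs => mem_PhiS.2 ⟨h1 s hs, hc s hs⟩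
    apply Finset.Subset.antisymm _ hsub
    intro s hs
    by_contra hns
    refine h3 s hns (mem_PhiS.1 hs).1 ((PhiS_valid hg hP).mono ?_)
    exact Finset.insert_subset hs hsub
  · rintro ⟨P, hP, rfl⟩
    refine ⟨fun s hs => (mem_PhiS.1 hs).1, PhiS_valid hg hP, ?_⟩
    intro s hs hb hv
    obtain ⟨Q, hQ, hc⟩ := exists_cover hg (insert s (PhiS n d P)) (by
      intro x hx
      rcases Finset.mem_insert.1 hx with rfl | h
      · exact hb
      · exact (mem_PhiS.1 h).1) hv
    have hPQ : P = Q := PhiS_inj hg hP hQ (fun x hx =>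
      mem_PhiS.2 ⟨(mem_PhiS.1 hx).1, hc x (Finset.mem_insert_of_mem hx)⟩)
    apply hs
    rw [mem_PhiS, hPQ]
    exact ⟨hb, hc s (Finset.mem_insert_self _ _)⟩

lemma applySwaps_chain {d : ℕ} (L : List (ℕ × ℕ)) (hL : L.Pairwise SErel)
    (hb : ∀ s ∈ L, s.1 ≤ d ∧ d < s.2) :
    (∀ s ∈ L, applySwaps L s.1 = s.2) ∧
    (∀ x, x ≤ d → (∀ s ∈ L, s.1 ≠ x) → applySwaps L x = x) := by
  induction L with
  | nil => exact ⟨by simp, by intro x _ _; rfl⟩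
  | cons a l ih =>
    obtain ⟨hal, hl⟩ := List.pairwise_cons.1 hL
    obtain ⟨i1, i2⟩ := ih hl (fun s hs => hb s (List.mem_cons_of_mem _ hs))
    have ha := hb a List.mem_cons_self
    have hstep : ∀ x, applySwaps (a :: l) x =
        if applySwaps l x = a.1 then a.2 else if applySwaps l x = a.2 then a.1
        else applySwaps l x := fun x => rfl
    constructor
    · intro s hs
      rw [hstep]
      rcases List.mem_cons.1 hs with rfl | h
      · rw [i2 s.1 ha.1 (fun t ht => (hal t ht).1.ne')]
        simp
      · rw [i1 s h]
        have h1 := hb s hs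
        have h2 := (hal s h).2
        rw [if_neg (by omega), if_neg (by omega)]
    · intro x hx hne
      rw [hstep, i2 x hx (fun s hs => hne s (List.mem_cons_of_mem _ hs))]
      have := hne a List.mem_cons_self
      rw [if_neg (by omega), if_neg (by omega)]

lemma dominated_iff {d : ℕ} {f i : ℕ → ℕ} (hf : Set.InjOn f (Set.Icc 1 d))
    (hi : StrictMonoOn i (Set.Icc 1 d)) :
    DominatedByW d f i ↔ ∀ q, 1 ≤ q → q ≤ d →
      q ≤ ((Finset.Icc 1 d).filter (fun x => f x ≤ i q)).card := by
  set I := (Finset.Icc 1 d).image f with hI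
  set l := sortedFirstVals d f with hl
  have hcardI : I.card = d := by
    rw [hI, Finset.card_image_of_injOn (by simpa using hf)]
    simp
  have hlen : l.length = d := by
    rw [hl, sortedFirstVals, Finset.length_sort, hcardI]
  have hnd : l.Nodup := Finset.sort_nodup _ _
  have hsort : l.Pairwise (· ≤ ·) := Finset.pairwise_sort _ _
  have hmem : ∀ x, x ∈ l ↔ x ∈ I := fun x => Finset.mem_sort _
  have hcnt : ∀ m, ((Finset.Icc 1 d).filter (fun x => f x ≤ m)).card = (I.filter (· ≤ m)).card := by
    intro m
    rw [hI, Finset.filter_image, Finset.card_image_of_injOn]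
    intro x hx y hy h
    simp only [Finset.coe_filter, Set.mem_ofPred_eq, Finset.mem_Icc] at hx hy
    exact hf hx.1 hy.1 h
  have hgetD : ∀ k (hk : k < l.length), l.getD k 0 = l[k] := by
    intro k hk
    simp [List.getD, hk]
  constructor
  · intro h q q1 q2
    rw [hcnt]
    have hsub : (l.take q).toFinset ⊆ I.filter (· ≤ i q) := by
      intro x hx
      rw [List.mem_toFinset, List.mem_take_iff_getElem] at hx
      obtain ⟨j, hj, rfl⟩ := hx
      rw [Finset.mem_filter]
      refine ⟨(hmem _).1 (List.getElem_mem _), ?_⟩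
      have h1 := h j (by omega)
      rw [← hl, hgetD j (by omega)] at h1
      refine h1.trans (hi.monotoneOn ?_ ?_ ?_)
      · exact ⟨by omega, by omega⟩
      · exact ⟨by omega, by omega⟩
      · omega
    have := Finset.card_le_card hsub
    rw [List.toFinset_card_of_nodup (hnd.sublist (List.take_sublist _ _)), List.length_take] at this
    omega
  · intro h k hk
    rw [← hl, hgetD k (by omega)]
    by_contra hcon
    have h1 := h (k + 1) (by omega) (by omega)
    rw [hcnt] at h1
    have hsub : I.filter (· ≤ i (k + 1)) ⊆ (l.take k).toFinset := by
      intro x hx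
      rw [Finset.mem_filter, ← hmem] at hx
      obtain ⟨hx1, hx2⟩ := hx
      obtain ⟨j, hj, rfl⟩ := List.getElem_of_mem hx1
      rw [List.mem_toFinset, List.mem_take_iff_getElem]
      refine ⟨j, ?_, rfl⟩
      rcases lt_or_ge j k with h' | h'
      · omega
      · exfalso
        rcases eq_or_lt_of_le h' with h'' | h''
        · subst h''; omega
        · have := List.pairwise_iff_getElem.1 hsort k j (by omega) hj h''
          omega
    have h2 := Finset.card_le_card hsub
    have h3 := (l.take k).toFinset_card_le
    rw [List.length_take] at h3
    omega

lemma S1_iff {n d : ℕ} {τ i α β : ℕ → ℕ} (hdn : d ≤ n)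
    (hinj : Set.InjOn τ (Set.Icc 1 n)) (hi : StrictMonoOn i (Set.Icc 1 d))
    (hg : GoodAB n d α β)
    (ha : ∀ q, 1 ≤ q → q ≤ d → ∀ a, 1 ≤ a → a ≤ d → (τ a ≤ i q ↔ a ≤ α q))
    (hb : ∀ q, 1 ≤ q → q ≤ d → ∀ b, d + 1 ≤ b → b ≤ n → (τ b ≤ i q ↔ b ≤ β q))
    (S : Finset (ℕ × ℕ)) (hS : ∀ s ∈ S, 1 ≤ s.1 ∧ s.1 ≤ d ∧ d + 1 ≤ s.2 ∧ s.2 ≤ n) :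
    S1Prop d τ i S.val ↔ ValidS d α β S := by
  have hswap : ∀ L : List (ℕ × ℕ), L.Pairwise SErel → (∀ s ∈ L, s ∈ S) →
      (∀ s ∈ L, applySwaps L s.1 = s.2) ∧
      (∀ x, x ≤ d → (∀ s ∈ L, s.1 ≠ x) → applySwaps L x = x) := by
    intro L hL hLS
    apply applySwaps_chain L hL
    intro s hs
    have := hS s (hLS s hs)
    omega
  have hdom : ∀ L : List (ℕ × ℕ), L.Pairwise SErel → (∀ s ∈ L, s ∈ S) →
      (DominatedByW d (fun x => τ (applySwaps L x)) i ↔ ∀ q, 1 ≤ q → q ≤ d →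
      q ≤ ((Finset.Icc 1 d).filter (fun x => τ (applySwaps L x) ≤ i q)).card) := by
    intro L hL hLS
    obtain ⟨s1, s2⟩ := hswap L hL hLS
    apply dominated_iff _ hi
    have hcase : ∀ x, 1 ≤ x → x ≤ d → (∃ s ∈ L, s.1 = x ∧ applySwaps L x = s.2) ∨
        applySwaps L x = x := by
      intro x _ hx
      by_cases h : ∃ s ∈ L, s.1 = x
      · obtain ⟨s, hs, rfl⟩ := h
        exact Or.inl ⟨s, hs, rfl, s1 s hs⟩
      · push Not at h
        exact Or.inr (s2 x hx h)
    have hrange : ∀ x, 1 ≤ x → x ≤ d → applySwaps L x ∈ Set.Icc 1 n := by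
      intro x hx hx'
      rw [Set.mem_Icc]
      rcases hcase x hx hx' with ⟨s, hs, -, h⟩ | h
      · rw [h]
        have := hS s (hLS s hs)
        omega
      · omega
    intro x hx y hy hxy
    obtain ⟨hx1, hx2⟩ := hx
    obtain ⟨hy1, hy2⟩ := hy
    have h := hinj (hrange x hx1 hx2) (hrange y hy1 hy2) hxy
    rcases hcase x hx1 hx2 with ⟨s, hs, hsx, e⟩ | e <;>
      rcases hcase y hy1 hy2 with ⟨t, ht, hty, e'⟩ | e'
    · have hst : s.2 = t.2 := by rw [← e, ← e', h]
      by_contra hne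
      have hne' : s ≠ t := by
        rintro rfl
        exact hne (hsx.symm.trans hty)
      have hp : ∀ a ∈ L, ∀ b ∈ L, a ≠ b → a.2 ≠ b.2 := by
        intro a ha b hb hab
        have hall : L.Pairwise (fun a b => a.2 ≠ b.2) := hL.imp (fun h => h.2.ne')
        haveI : Std.Symm (fun a b : ℕ × ℕ => a.2 ≠ b.2) := ⟨fun _ _ h => Ne.symm h⟩
        exact hall.forall ha hb hab
      exact hp s hs t ht hne' hst
    · have := hS s (hLS s hs)
      omega
    · have := hS t (hLS t ht)
      omega
    · omega
  constructor
  · intro h q q1 q2 L hL hLx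
    have hLS : ∀ s ∈ L, s ∈ S := fun s hs => (hLx s hs).1
    have h1 := (hdom L hL hLS).1 (h L (fun s hs => hLS s hs) hL) q q1 q2
    obtain ⟨s1, s2⟩ := hswap L hL hLS
    set R := (L.map Prod.fst).toFinset with hR
    have hRc : R.card = L.length := by
      rw [hR, List.toFinset_card_of_nodup (rows_nodup hL), List.length_map]
    have hRs : R ⊆ Finset.Icc 1 (α q) := by
      intro x hx
      obtain ⟨s, hs, rfl⟩ := List.mem_map.1 (List.mem_toFinset.1 hx)
      have := hLx s hs
      have := hS s this.1
      rw [Finset.mem_Icc]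
      omega
    have hsub : (Finset.Icc 1 d).filter (fun x => τ (applySwaps L x) ≤ i q) ⊆
        Finset.Icc 1 (α q) \ R := by
      intro x hx
      rw [Finset.mem_filter, Finset.mem_Icc] at hx
      obtain ⟨⟨x1, x2⟩, x3⟩ := hx
      have hnot : ∀ s ∈ L, s.1 ≠ x := by
        rintro s hs rfl
        rw [s1 s hs] at x3
        have e1 := hLx s hs
        have e2 := hS s e1.1
        have := (hb q q1 q2 s.2 e2.2.2.1 e2.2.2.2).1 x3
        omega
      rw [s2 x x2 hnot] at x3
      rw [Finset.mem_sdiff, Finset.mem_Icc]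
      refine ⟨⟨x1, (ha q q1 q2 x x1 x2).1 x3⟩, ?_⟩
      intro hxR
      obtain ⟨s, hs, h⟩ := List.mem_map.1 (List.mem_toFinset.1 hxR)
      exact hnot s hs h
    have h2 := Finset.card_le_card hsub
    rw [Finset.card_sdiff_of_subset hRs, Nat.card_Icc] at h2
    have h3 := Finset.card_le_card hRs
    rw [Nat.card_Icc] at h3
    omega
  · intro h L hLS hL
    have hLS : ∀ s ∈ L, s ∈ S := fun s hs => hLS s hs
    refine (hdom L hL hLS).2 ?_
    intro q q1 q2
    obtain ⟨s1, s2⟩ := hswap L hL hLS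
    set L' := L.filter (fun s => decide (s.1 ≤ α q ∧ β q < s.2)) with hL'
    have hlen := h q q1 q2 L' (hL.filter _) (by
      intro x hx
      rw [hL', List.mem_filter, decide_eq_true_iff] at hx
      exact ⟨hLS x hx.1, hx.2⟩)
    set R := (L'.map Prod.fst).toFinset with hR
    have hRc : R.card ≤ L'.length := by
      have := (L'.map Prod.fst).toFinset_card_le
      rwa [List.length_map] at this
    have hsub : Finset.Icc 1 (α q) \ R ⊆
        (Finset.Icc 1 d).filter (fun x => τ (applySwaps L x) ≤ i q) := by
      intro x hx
      rw [Finset.mem_sdiff, Finset.mem_Icc] at hx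
      obtain ⟨⟨x1, x2⟩, x3⟩ := hx
      have x4 : x ≤ d := x2.trans (hg.a_le q q1 q2)
      rw [Finset.mem_filter, Finset.mem_Icc]
      refine ⟨⟨x1, x4⟩, ?_⟩
      by_cases hx : ∃ s ∈ L, s.1 = x
      · obtain ⟨s, hs, rfl⟩ := hx
        rw [s1 s hs]
        have e2 := hS s (hLS s hs)
        rw [hb q q1 q2 s.2 e2.2.2.1 e2.2.2.2]
        by_contra hcon
        apply x3
        rw [hR, List.mem_toFinset, List.mem_map]
        refine ⟨s, ?_, rfl⟩
        rw [hL', List.mem_filter, decide_eq_true_iff]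
        exact ⟨hs, x2, not_le.1 hcon⟩
      · push Not at hx
        rw [s2 x x4 hx]
        exact (ha q q1 q2 x x1 x4).2 x2
    have h2 := Finset.card_le_card hsub
    have h3 := Finset.le_card_sdiff R (Finset.Icc 1 (α q))
    rw [Nat.card_Icc] at h3
    omega

lemma count_le_iff {f : ℕ → ℕ} {lo hi : ℕ} (hf : StrictMonoOn f (Set.Icc (lo + 1) hi)) (m x : ℕ)
    (hx : lo + 1 ≤ x) (hx' : x ≤ hi) :
    f x ≤ m ↔ x ≤ lo + ((Finset.Icc (lo + 1) hi).filter (fun y => f y ≤ m)).card := by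
  constructor
  · intro h
    have hsub : Finset.Icc (lo + 1) x ⊆ (Finset.Icc (lo + 1) hi).filter (fun y => f y ≤ m) := by
      intro y hy
      rw [Finset.mem_Icc] at hy
      rw [Finset.mem_filter, Finset.mem_Icc]
      refine ⟨⟨hy.1, by omega⟩, le_trans ?_ h⟩
      exact hf.monotoneOn ⟨hy.1, by omega⟩ ⟨hx, hx'⟩ hy.2
    have := Finset.card_le_card hsub
    rw [Nat.card_Icc] at this
    omega
  · intro h
    by_contra hcon
    have hsub : (Finset.Icc (lo + 1) hi).filter (fun y => f y ≤ m) ⊆ Finset.Icc (lo + 1) (x - 1) := by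
      intro y hy
      rw [Finset.mem_filter, Finset.mem_Icc] at hy
      rw [Finset.mem_Icc]
      refine ⟨hy.1.1, ?_⟩
      by_contra hy'
      have := hf.monotoneOn (⟨hx, hx'⟩ : x ∈ Set.Icc (lo + 1) hi) ⟨hy.1.1, hy.1.2⟩ (by omega)
      omega
    have := Finset.card_le_card hsub
    rw [Nat.card_Icc] at this
    omega

/-- The number of maximal (S1)-sets of reflections equals the number of families of
non-intersecting NE lattice paths `P_ℓ` from `(d+1-ℓ, d)` to
`(d-κ_{σ(ℓ)}, κ_{σ(ℓ)}+i_{σ(ℓ)})` (here `ℓ = (ℓ' : Fin d) + 1`). -/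
theorem number_maximal_S1_eq_number_path_families (n d : ℕ) (hd : 1 ≤ d) (hdn : d ≤ n)
    (τ i : ℕ → ℕ)
    (hbij : Set.BijOn τ (Set.Icc 1 n) (Set.Icc 1 n))
    (hmono1 : StrictMonoOn τ (Set.Icc 1 d))
    (hmono2 : StrictMonoOn τ (Set.Icc (d + 1) n))
    (hi : StrictMonoOn i (Set.Icc 1 d))
    (hiN : ∀ ℓ ∈ Set.Icc 1 d, i ℓ ∈ Set.Icc 1 n)
    (hle : ∀ ℓ ∈ Set.Icc 1 d, τ ℓ ≤ i ℓ)
    (κ : ℕ → ℕ)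
    (hκ : ∀ q, κ q = ((Finset.Icc 1 d).filter (fun ℓ => i q < τ ℓ)).card)
    (A E : ℕ → ℤ × ℤ)
    (hA : ∀ ℓ, A ℓ = ((d : ℤ) + 1 - ℓ, (d : ℤ)))
    (hE : ∀ q, E q = ((d : ℤ) - κ q, (κ q : ℤ) + i q)) :
    Set.ncard {S : Finset (ℕ × ℕ) |
        (∀ s ∈ S, 1 ≤ s.1 ∧ s.1 ≤ d ∧ d + 1 ≤ s.2 ∧ s.2 ≤ n) ∧
        S1Prop d τ i S.val ∧
        ∀ s : ℕ × ℕ, s ∉ S → (1 ≤ s.1 ∧ s.1 ≤ d ∧ d + 1 ≤ s.2 ∧ s.2 ≤ n) →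
          ¬ S1Prop d τ i (insert s S).val}
    = Set.ncard {P : Fin d → List (ℤ × ℤ) |
        ∃ σ : Equiv.Perm (Fin d),
          (∀ ℓ : Fin d, IsNEPathFrom (P ℓ) (A ((ℓ : ℕ) + 1)) (E ((σ ℓ : ℕ) + 1))) ∧
          ∀ k l : Fin d, k ≠ l → ∀ p ∈ P k, p ∉ P l} := by
  set cA : ℕ → ℕ := fun q => ((Finset.Icc 1 d).filter (fun y => τ y ≤ i q)).card with hcA
  set cB : ℕ → ℕ := fun q => ((Finset.Icc (d + 1) n).filter (fun y => τ y ≤ i q)).card with hcB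
  have hmono1' : StrictMonoOn τ (Set.Icc (0 + 1) d) := by simpa using hmono1
  have hκA : ∀ q, κ q + cA q = d := by
    intro q
    have := Finset.card_filter_add_card_filter_not (s := Finset.Icc 1 d) (fun y => τ y ≤ i q)
    simp only [not_le, Nat.card_Icc] at this
    rw [hκ q]
    simp only [hcA]
    omega
  have hAB : ∀ q, 1 ≤ q → q ≤ d → cA q + cB q = i q := by
    intro q q1 q2
    have hiq := hiN q ⟨q1, q2⟩
    have hdisj : Disjoint ((Finset.Icc 1 d).filter (fun y => τ y ≤ i q))
        ((Finset.Icc (d + 1) n).filter (fun y => τ y ≤ i q)) := by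
      rw [Finset.disjoint_left]
      intro x hx hx'
      simp only [Finset.mem_filter, Finset.mem_Icc] at hx hx'
      omega
    simp only [hcA, hcB]
    rw [← Finset.card_union_of_disjoint hdisj]
    have himg : ((Finset.Icc 1 d).filter (fun y => τ y ≤ i q) ∪
        (Finset.Icc (d + 1) n).filter (fun y => τ y ≤ i q)).image τ = Finset.Icc 1 (i q) := by
      ext y
      simp only [Finset.mem_image, Finset.mem_union, Finset.mem_filter, Finset.mem_Icc]
      constructor
      · rintro ⟨x, hx, rfl⟩
        have hxn : x ∈ Set.Icc 1 n := by
          rw [Set.mem_Icc]; omega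
        have := hbij.mapsTo hxn
        rw [Set.mem_Icc] at this
        omega
      · rintro ⟨y1, y2⟩
        have hyn : y ∈ Set.Icc 1 n := ⟨y1, y2.trans hiq.2⟩
        obtain ⟨x, hx, rfl⟩ := hbij.surjOn hyn
        rw [Set.mem_Icc] at hx
        exact ⟨x, by omega, rfl⟩
    rw [← Finset.card_image_of_injOn (f := τ), himg, Nat.card_Icc]
    · omega
    · intro x hx y hy h
      simp only [Finset.coe_union, Finset.coe_filter, Set.mem_union, Set.mem_ofPred_eq,
        Finset.mem_Icc] at hx hy
      exact hbij.injOn (by rw [Set.mem_Icc]; omega) (by rw [Set.mem_Icc]; omega) h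
  have hmonoi : ∀ q q', 1 ≤ q → q ≤ q' → q' ≤ d → i q ≤ i q' := by
    intro q q' q1 h q2
    exact hi.monotoneOn ⟨q1, by omega⟩ ⟨by omega, q2⟩ h
  have hAm : ∀ q q', 1 ≤ q → q ≤ q' → q' ≤ d → cA q ≤ cA q' := by
    intro q q' q1 h q2
    have := hmonoi q q' q1 h q2
    apply Finset.card_le_card
    intro x hx
    rw [Finset.mem_filter] at hx ⊢
    exact ⟨hx.1, hx.2.trans this⟩
  have hBm : ∀ q q', 1 ≤ q → q ≤ q' → q' ≤ d → cB q ≤ cB q' := by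
    intro q q' q1 h q2
    have := hmonoi q q' q1 h q2
    apply Finset.card_le_card
    intro x hx
    rw [Finset.mem_filter] at hx ⊢
    exact ⟨hx.1, hx.2.trans this⟩
  have ha : ∀ q, 1 ≤ q → q ≤ d → ∀ a, 1 ≤ a → a ≤ d → (τ a ≤ i q ↔ a ≤ cA q) := by
    intro q _ _ a a1 a2
    have := count_le_iff hmono1' (i q) a (by omega) a2
    simpa using this
  have hb : ∀ q, 1 ≤ q → q ≤ d → ∀ b, d + 1 ≤ b → b ≤ n → (τ b ≤ i q ↔ b ≤ d + cB q) := by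
    intro q _ _ b b1 b2
    exact count_le_iff hmono2 (i q) b b1 b2
  have hcBn : ∀ q, d + cB q ≤ n := by
    intro q
    have := Finset.card_filter_le (Finset.Icc (d + 1) n) (fun y => τ y ≤ i q)
    rw [Nat.card_Icc] at this
    simp only [hcB]
    omega
  have hg : GoodAB n d cA (fun q => d + cB q) :=
    { le_a := fun q q1 q2 => (ha q q1 q2 q q1 q2).1 (hle q ⟨q1, q2⟩)
      a_le := fun q _ _ => by have := hκA q; omega
      le_b := fun q _ _ => by simp
      b_le := fun q _ _ => hcBn q
      a_mono := hAm
      b_mono := fun q q' q1 h q2 => Nat.add_le_add_left (hBm q q' q1 h q2) d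
      strict := by
        intro q q' q1 h q2
        have e1 := hAB q q1 (by omega)
        have e2 := hAB q' (by omega) q2
        have e3 := hi (⟨q1, by omega⟩ : q ∈ Set.Icc 1 d) (⟨by omega, q2⟩ : q' ∈ Set.Icc 1 d) h
        omega }
  have hcore := core_count hg
  convert hcore using 2
  · ext S
    simp only [Set.mem_ofPred_eq]
    refine and_congr_right fun hS => ?_
    rw [S1_iff hdn hbij.injOn hi hg ha hb S hS]
    refine and_congr_right fun _ => ?_
    refine forall_congr' fun s => forall_congr' fun _ => forall_congr' fun hs => ?_
    rw [S1_iff hdn hbij.injOn hi hg ha hb (insert s S) (by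
      intro x hx
      rcases Finset.mem_insert.1 hx with rfl | h
      · exact hs
      · exact hS x h)]
  · ext P
    have hA' : ∀ ℓ : Fin d, A ((ℓ : ℕ) + 1) = startP d ℓ := by
      intro ℓ
      have := ℓ.2
      rw [hA]
      apply Prod.ext <;> simp only [startP, castP] <;> push_cast <;> omega
    have hE' : ∀ q : Fin d, E ((q : ℕ) + 1) = endP d cA (fun q => d + cB q) q := by
      intro q
      have e1 := hκA ((q : ℕ) + 1)
      have e2 := hAB ((q : ℕ) + 1) (by omega) (by omega)
      rw [hE]
      apply Prod.ext <;> simp only [endP, castP] <;> push_cast <;> omega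
    simp only [Set.mem_ofPred_eq, IsFam, hA', hE']
end
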